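/- Assume Ω is a bounded C¹ domain with outward normal ν, b is Lipschitz with b(0)=0, the origin is globally asymptotically stable for Ẋ = b(X), b·ν < 0 on ∂Ω, b(x)·x ≤ −b₀|x|² on B_{r₀}, and a^ε ∈ C(Q̄;𝕊ⁿ(θ₀)). For each δ > 0 and C₀ > 0 there exist constants ε₀ ∈ (0,1) and C > 0 such that: if, for ε ∈ (0,ε₀], u^ε is a classical solution of (L) satisfying |u^ε| ≤ C₀ in Ω×[0,∞), then |u^ε(x,t) − u^ε(0,t)| ≤ δ for all (x,t) ∈ Ω_δ × [C|log ε|, ∞). -/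

import Mathlib

open Set Filter Metric Topology
open scoped ENNReal

noncomputable section

/-- `n`-dimensional Euclidean space. -/
abbrev Eu (n : ℕ) := EuclideanSpace ℝ (Fin n)

variable {n : ℕ}

/-- Euclidean dot product. -/
def dotp (x y : Eu n) : ℝ := ∑ i, x i * y i

/-- The quadratic form `A p · p` of a matrix `A`. -/
def mquad (A : Matrix (Fin n) (Fin n) ℝ) (p : Eu n) : ℝ := ∑ i, ∑ j, A i j * p i * p j

/-- `A ∈ 𝕊ⁿ(θ)`: symmetric with `θ I ≤ A ≤ θ⁻¹ I`. -/
def memS (θ : ℝ) (A : Matrix (Fin n) (Fin n) ℝ) : Prop :=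
  A.IsSymm ∧ ∀ p : Eu n, θ * ‖p‖ ^ 2 ≤ mquad A p ∧ mquad A p ≤ θ⁻¹ * ‖p‖ ^ 2

/-- order of symmetric matrices (via quadratic forms). -/
def mle (A B : Matrix (Fin n) (Fin n) ℝ) : Prop := ∀ p : Eu n, mquad A p ≤ mquad B p

/-- trace of the product `A·H`. -/
def trMul (A H : Matrix (Fin n) (Fin n) ℝ) : ℝ := ∑ i, ∑ j, A i j * H j i

/-- the Pucci maximal operator associated with `𝕊ⁿ(θ)`. -/
def pucci (θ : ℝ) (X : Matrix (Fin n) (Fin n) ℝ) : ℝ :=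
  sSup ((fun A => trMul A X) '' {A | memS θ A})

/-- time derivative of `u(x,t)`. -/
def tD (u : Eu n → ℝ → ℝ) (x : Eu n) (t : ℝ) : ℝ := deriv (u x) t

/-- spatial gradient of `u(x,t)`. -/
def sG (u : Eu n → ℝ → ℝ) (x : Eu n) (t : ℝ) : Eu n := gradient (fun y => u y t) x

/-- spatial Hessian matrix of `u(x,t)`. -/
def sH (u : Eu n → ℝ → ℝ) (x : Eu n) (t : ℝ) : Matrix (Fin n) (Fin n) ℝ :=
  fun i j => fderiv ℝ (fun y => sG u y t i) x (EuclideanSpace.single j 1)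

/-- Hessian matrix of a static function. -/
def hessS (v : Eu n → ℝ) (x : Eu n) : Matrix (Fin n) (Fin n) ℝ :=
  fun i j => fderiv ℝ (fun y => gradient v y i) x (EuclideanSpace.single j 1)

/-- closed parabolic cylinder `Q̄_T = closure Ω × [0,T]` (with `T ∈ (0,∞]`). -/
def cylC (Ω : Set (Eu n)) (T : ℝ≥0∞) : Set (Eu n × ℝ) :=
  {p | p.1 ∈ closure Ω ∧ 0 ≤ p.2 ∧ ENNReal.ofReal p.2 ≤ T}

/-- open parabolic cylinder `Q_T = Ω × (0,T)`. -/
def cylO (Ω : Set (Eu n)) (T : ℝ≥0∞) : Set (Eu n × ℝ) :=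
  {p | p.1 ∈ Ω ∧ 0 < p.2 ∧ ENNReal.ofReal p.2 < T}

/-- `u ∈ C^{2,1}(Q_T)`. -/
def C21 (u : Eu n → ℝ → ℝ) (Ω : Set (Eu n)) (T : ℝ≥0∞) : Prop :=
  (∀ x ∈ Ω, ∀ t : ℝ, 0 < t → ENNReal.ofReal t < T →
     ContDiffAt ℝ 2 (fun y => u y t) x ∧ DifferentiableAt ℝ (u x) t) ∧
  ContinuousOn (fun p : Eu n × ℝ => tD u p.1 p.2) (cylO Ω T) ∧
  ContinuousOn (fun p : Eu n × ℝ => sH u p.1 p.2) (cylO Ω T)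

/-- `u ∈ C(Q̄_T) ∩ C^{2,1}(Q_T)`. -/
def Classical21 (u : Eu n → ℝ → ℝ) (Ω : Set (Eu n)) (T : ℝ≥0∞) : Prop :=
  ContinuousOn (fun p : Eu n × ℝ => u p.1 p.2) (cylC Ω T) ∧ C21 u Ω T

/-- a coefficient field in `C(Q̄_T; 𝕊ⁿ(θ))`. -/
def MatC (θ : ℝ) (A : Eu n → ℝ → Matrix (Fin n) (Fin n) ℝ) (Ω : Set (Eu n))
    (T : ℝ≥0∞) : Prop :=
  ContinuousOn (fun p : Eu n × ℝ => A p.1 p.2) (cylC Ω T) ∧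
  ∀ p ∈ cylC Ω T, memS θ (A p.1 p.2)

/-- `u` is a classical solution of `u_t = ε tr[A D²u] + b·Du` in `Q_T`. -/
def SolveL (ε : ℝ) (A : Eu n → ℝ → Matrix (Fin n) (Fin n) ℝ) (b : Eu n → Eu n)
    (u : Eu n → ℝ → ℝ) (Ω : Set (Eu n)) (T : ℝ≥0∞) : Prop :=
  ∀ x ∈ Ω, ∀ t : ℝ, 0 < t → ENNReal.ofReal t < T →
    tD u x t = ε * trMul (A x t) (sH u x t) + dotp (b x) (sG u x t)

/-- `u` is a classical subsolution of `(L)` in `Q_T`. -/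
def SubsolL (ε : ℝ) (A : Eu n → ℝ → Matrix (Fin n) (Fin n) ℝ) (b : Eu n → Eu n)
    (u : Eu n → ℝ → ℝ) (Ω : Set (Eu n)) (T : ℝ≥0∞) : Prop :=
  ∀ x ∈ Ω, ∀ t : ℝ, 0 < t → ENNReal.ofReal t < T →
    tD u x t ≤ ε * trMul (A x t) (sH u x t) + dotp (b x) (sG u x t)

/-- `u` is a classical supersolution of `(L)` in `Q_T`. -/
def SupersolL (ε : ℝ) (A : Eu n → ℝ → Matrix (Fin n) (Fin n) ℝ) (b : Eu n → Eu n)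
    (u : Eu n → ℝ → ℝ) (Ω : Set (Eu n)) (T : ℝ≥0∞) : Prop :=
  ∀ x ∈ Ω, ∀ t : ℝ, 0 < t → ENNReal.ofReal t < T →
    ε * trMul (A x t) (sH u x t) + dotp (b x) (sG u x t) ≤ tD u x t

/-- viscosity subsolution of `H(x,Du) = 0` on `A`. -/
def ViscSub (H : Eu n → Eu n → ℝ) (A : Set (Eu n)) (u : Eu n → ℝ) : Prop :=
  ∀ φ : Eu n → ℝ, ContDiff ℝ 1 φ → ∀ x ∈ A,
    IsLocalMaxOn (fun y => u y - φ y) A x → H x (gradient φ x) ≤ 0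

/-- viscosity supersolution of `H(x,Du) = 0` on `A`. -/
def ViscSup (H : Eu n → Eu n → ℝ) (A : Set (Eu n)) (u : Eu n → ℝ) : Prop :=
  ∀ φ : Eu n → ℝ, ContDiff ℝ 1 φ → ∀ x ∈ A,
    IsLocalMinOn (fun y => u y - φ y) A x → 0 ≤ H x (gradient φ x)

/-- the Hamiltonian `H_α(x,p) = α(x) p·p + b(x)·p`. -/
def Ham (α : Eu n → Matrix (Fin n) (Fin n) ℝ) (b : Eu n → Eu n) (x p : Eu n) : ℝ :=
  mquad (α x) p + dotp (b x) p

/-- the quasi-potential `V_α`: the pointwise supremum (= maximal element) of all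
Lipschitz viscosity subsolutions of `H_α(x,Du)=0` in `Ω` vanishing at the origin. -/
def Vq (α : Eu n → Matrix (Fin n) (Fin n) ℝ) (b : Eu n → Eu n) (Ω : Set (Eu n))
    (x : Eu n) : ℝ :=
  sSup {r | ∃ u : Eu n → ℝ, (∃ K : NNReal, LipschitzOnWith K u (closure Ω)) ∧
    u 0 = 0 ∧ ViscSub (Ham α b) Ω u ∧ r = u x}

/-- `M_α = min_{∂Ω} V_α`. -/
def Mq (α : Eu n → Matrix (Fin n) (Fin n) ℝ) (b : Eu n → Eu n) (Ω : Set (Eu n)) : ℝ :=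
  sInf (Vq α b Ω '' frontier Ω)

/-- `argmin (V_α | ∂Ω)`. -/
def argminV (α : Eu n → Matrix (Fin n) (Fin n) ℝ) (b : Eu n → Eu n)
    (Ω : Set (Eu n)) : Set (Eu n) :=
  {x ∈ frontier Ω | ∀ y ∈ frontier Ω, Vq α b Ω x ≤ Vq α b Ω y}

/-- `Σ_α^m = {x ∈ Ω̄ : V_α(x) ≤ m}`. -/
def SigmaM (α : Eu n → Matrix (Fin n) (Fin n) ℝ) (b : Eu n → Eu n) (Ω : Set (Eu n))
    (m : ℝ) : Set (Eu n) :=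
  {x ∈ closure Ω | Vq α b Ω x ≤ m}

/-- `Ω` is a bounded `C¹` domain with outward unit normal `ν`. -/
def IsBdC1With (Ω : Set (Eu n)) (ν : Eu n → Eu n) : Prop :=
  IsOpen Ω ∧ Bornology.IsBounded Ω ∧
  ∃ ρ : Eu n → ℝ, ContDiff ℝ 1 ρ ∧ Ω = {x | ρ x < 0} ∧
    ∀ x ∈ frontier Ω, gradient ρ x ≠ 0 ∧ ν x = ‖gradient ρ x‖⁻¹ • gradient ρ x

/-- `X` is the flow of `b`, and the origin is globally asymptotically stable. -/
def GAS (b : Eu n → Eu n) (X : ℝ → Eu n → Eu n) : Prop :=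
  (∀ x, X 0 x = x) ∧ (∀ x t, HasDerivAt (fun s => X s x) (b (X t x)) t) ∧
  (∀ x, Tendsto (fun t => X t x) atTop (nhds 0)) ∧
  (∀ ε > (0:ℝ), ∃ δ > (0:ℝ), ∀ x : Eu n, ‖x‖ < δ → ∀ t ≥ (0:ℝ), ‖X t x‖ < ε)

/-- `Ω_δ = {x ∈ Ω : dist(x,∂Ω) > δ}`. -/
def Omd (Ω : Set (Eu n)) (δ : ℝ) : Set (Eu n) := {x ∈ Ω | δ < infDist x (frontier Ω)}

/-- `Ω^Π_δ = {x ∈ Ω̄ : dist(x, ∂Ω \ Π) > δ}`. -/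
def OmPid (Ω Pset : Set (Eu n)) (δ : ℝ) : Set (Eu n) :=
  {x ∈ closure Ω | δ < infDist x (frontier Ω \ Pset)}

/-- the standing assumptions (B). -/
structure SettingB (n : ℕ) where
  Ω : Set (Eu n)
  ν : Eu n → Eu n
  g : Eu n → ℝ
  θ₀ : ℝ
  a : Eu n → ℝ → Matrix (Fin n) (Fin n) ℝ
  b : Eu n → Eu n
  b₀ : ℝ
  r₀ : ℝ
  θ₀_mem : θ₀ ∈ Set.Ioc (0 : ℝ) 1
  domain : IsBdC1With Ω ν
  zero_mem : (0 : Eu n) ∈ Ω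
  g_cont : ContinuousOn g (closure Ω)
  a_cont : ContinuousOn (fun p : Eu n × ℝ => a p.1 p.2) (closure Ω ×ˢ Set.univ)
  a_mem : ∀ x ∈ closure Ω, ∀ c : ℝ, memS θ₀ (a x c)
  b_lip : ∃ K : NNReal, LipschitzWith K b
  b_zero : b 0 = 0
  b_gas : ∃ X : ℝ → Eu n → Eu n, GAS b X
  b_inward : ∀ x ∈ frontier Ω, dotp (b x) (ν x) < 0
  b₀_pos : 0 < b₀
  r₀_pos : 0 < r₀
  ball_sub : closedBall (0 : Eu n) r₀ ⊆ Ω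
  b_coerc : ∀ x ∈ ball (0 : Eu n) r₀, dotp (b x) x ≤ -b₀ * ‖x‖ ^ 2

namespace SettingB

variable (S : SettingB n)

/-- the quasi-potential `V^c` associated with `(a(·,c), b)`. -/
def Vc (c : ℝ) : Eu n → ℝ := Vq (fun x => S.a x c) S.b S.Ω

/-- `M(c) = min_{∂Ω} V^c`. -/
def M (c : ℝ) : ℝ := sInf (S.Vc c '' frontier S.Ω)

/-- `G(c) = {g(x) : x ∈ argmin(V^c|∂Ω)}`. -/
def Gset (c : ℝ) : Set ℝ := S.g '' argminV (fun x => S.a x c) S.b S.Ω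

/-- `G⁺(c) = max G(c)`. -/
def Gp (c : ℝ) : ℝ := sSup (S.Gset c)

/-- `G⁻(c) = min G(c)`. -/
def Gm (c : ℝ) : ℝ := sInf (S.Gset c)

/-- `c₀ = g(0)`. -/
def c0 : ℝ := S.g 0

/-- `g_min = min_{Ω̄} g`. -/
def gmin : ℝ := sInf (S.g '' closure S.Ω)

/-- `g_max = max_{Ω̄} g`. -/
def gmax : ℝ := sSup (S.g '' closure S.Ω)

/-- the crossing value `c₁`. -/
def c1 : ℝ :=
  if S.c0 ≤ S.Gp S.c0 then sInf {c | S.c0 ≤ c ∧ S.Gm c ≤ c}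
  else sSup {c | c ≤ S.c0 ∧ c ≤ S.Gp c}

/-- the function `c̄ : (0,∞) → I_g`. -/
def cbar (l : ℝ) : ℝ :=
  if l < S.M S.c0 ∨ S.c1 = S.c0 then S.c0
  else if S.c0 < S.c1 then min S.c1 (sInf {c | c ∈ Set.Icc S.c0 S.c1 ∧ S.M c = l})
  else max S.c1 (sSup {c | c ∈ Set.Icc S.c1 S.c0 ∧ S.M c = l})

/-- assumption (FK13): `G⁺(c₀) = G⁻(c₀)`. -/
def FK13 : Prop := S.Gp S.c0 = S.Gm S.c0

/-- assumption (FK12). -/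
def FK12 : Prop :=
  ∀ δ₀ > (0:ℝ), ∃ δ ∈ Set.Ioc (0:ℝ) δ₀,
    (S.c1 ≤ S.c0 ∧ S.gmin < S.c1 → S.c1 - δ < S.Gm (S.c1 - δ)) ∧
    (S.c0 ≤ S.c1 ∧ S.c1 < S.gmax → S.Gp (S.c1 + δ) < S.c1 + δ)

/-- `u` is a classical (`C(Q̄) ∩ C^{2,1}(Q)`) solution of the quasi-linear equation (QL). -/
def SolvesQL (ε : ℝ) (u : Eu n → ℝ → ℝ) : Prop :=
  Classical21 u S.Ω ⊤ ∧ SolveL ε (fun x t => S.a x (u x t)) S.b u S.Ω ⊤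

/-- the boundary condition (BC): `u = g` on the parabolic boundary of `Q`. -/
def BC (u : Eu n → ℝ → ℝ) : Prop :=
  (∀ x ∈ closure S.Ω, u x 0 = S.g x) ∧ ∀ x ∈ frontier S.Ω, ∀ t > (0:ℝ), u x t = S.g x

end SettingB


/-! ### Basic calculus -/

lemma ks_grad_apply (f : Eu n → ℝ) (y : Eu n) (i : Fin n) :
    gradient f y i = fderiv ℝ f y (EuclideanSpace.single i 1) := by
  have h := inner_gradient_left (𝕜 := ℝ) (f := f) (x := y) (y := EuclideanSpace.single i (1:ℝ))
  rw [← h, EuclideanSpace.inner_single_right]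
  simp

lemma ks_sH_eq (u : Eu n → ℝ → ℝ) (x : Eu n) (t : ℝ) :
    sH u x t = hessS (fun y => u y t) x := rfl

lemma ks_hess_eq {f : Eu n → ℝ} {x : Eu n} (hf : ContDiffAt ℝ 2 f x) (i j : Fin n) :
    hessS f x i j = fderiv ℝ (fderiv ℝ f) x (EuclideanSpace.single j 1)
      (EuclideanSpace.single i 1) := by
  unfold hessS
  have h1 : (fun y => gradient f y i) = fun y => fderiv ℝ f y (EuclideanSpace.single i 1) := by
    funext y; exact ks_grad_apply f y i
  rw [h1]
  have hd : DifferentiableAt ℝ (fderiv ℝ f) x :=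
    (hf.fderiv_right (m := 1) (by norm_num)).differentiableAt (by norm_num)
  rw [fderiv_clm_apply hd (differentiableAt_const _)]
  simp

lemma ks_sum_single (p : Eu n) : p = ∑ i, p i • EuclideanSpace.single i (1:ℝ) := by
  ext j
  simp [Finset.sum_apply, Pi.single_apply]

lemma ks_mquad_hess {f : Eu n → ℝ} {x : Eu n} (hf : ContDiffAt ℝ 2 f x) (p : Eu n) :
    mquad (hessS f x) p = fderiv ℝ (fderiv ℝ f) x p p := by
  unfold mquad
  conv_rhs => rw [ks_sum_single p]
  simp only [map_sum, map_smul, sum_apply, smul_apply,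
    smul_eq_mul, Finset.mul_sum]
  refine Finset.sum_congr rfl fun i _ => Finset.sum_congr rfl fun j _ => ?_
  rw [ks_hess_eq hf]; ring

lemma ks_hess_symm {f : Eu n → ℝ} {x : Eu n} (hf : ContDiffAt ℝ 2 f x) :
    (hessS f x).IsSymm := by
  have hs : IsSymmSndFDerivAt ℝ f x := hf.isSymmSndFDerivAt (by simp)
  ext i j
  rw [Matrix.transpose_apply, ks_hess_eq hf, ks_hess_eq hf]
  exact hs _ _

/-- second order necessary condition -/
lemma ks_second_order {f : Eu n → ℝ} {x : Eu n} (hf : ContDiffAt ℝ 2 f x)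
    (hm : IsLocalMin f x) (p : Eu n) : 0 ≤ fderiv ℝ (fderiv ℝ f) x p p := by
  by_contra hneg
  push Not at hneg
  set g : ℝ → ℝ := fun s => f (x + s • p) with hg
  have hline : ∀ s : ℝ, HasDerivAt (fun s : ℝ => x + s • p) p s := by
    intro s
    simpa using ((hasDerivAt_id s).smul_const p).const_add x
  have hcl : ContinuousAt (fun s : ℝ => x + s • p) 0 := (hline 0).continuousAt
  have hev : ∀ᶠ y in 𝓝 x, DifferentiableAt ℝ f y := by
    have := hf.eventually (by simp)
    filter_upwards [this] with y hy using hy.differentiableAt (by norm_num)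
  have hev' : ∀ᶠ s in 𝓝 (0:ℝ), DifferentiableAt ℝ f (x + s • p) := by
    have : Tendsto (fun s : ℝ => x + s • p) (𝓝 0) (𝓝 x) := by simpa using hcl.tendsto
    exact this.eventually hev
  have hder : deriv g =ᶠ[𝓝 0] fun s => fderiv ℝ f (x + s • p) p := by
    filter_upwards [hev'] with s hs
    exact (hs.hasFDerivAt.comp_hasDerivAt s (hline s)).deriv
  have hd : DifferentiableAt ℝ (fderiv ℝ f) x :=
    (hf.fderiv_right (m := 1) (by norm_num)).differentiableAt (by norm_num)
  have hd2 : HasDerivAt (fun s : ℝ => fderiv ℝ f (x + s • p) p)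
      (fderiv ℝ (fderiv ℝ f) x p p) 0 := by
    have h1 : HasFDerivAt (fderiv ℝ f) (fderiv ℝ (fderiv ℝ f) x) (x + (0:ℝ) • p) := by
      simpa using hd.hasFDerivAt
    have h2 := h1.comp_hasDerivAt (0:ℝ) (hline 0)
    have h3 := h2.clm_apply (hasDerivAt_const (0:ℝ) p)
    simpa using h3
  have hdd : deriv (deriv g) 0 = fderiv ℝ (fderiv ℝ f) x p p := by
    rw [hder.deriv_eq]; exact hd2.deriv
  have hlm : IsLocalMin g 0 := by
    have : Tendsto (fun s : ℝ => x + s • p) (𝓝 0) (𝓝 x) := by simpa using hcl.tendsto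
    have h := this.eventually hm
    filter_upwards [h] with s hs
    simpa [hg] using hs
  have hd0 : deriv g 0 = 0 := hlm.deriv_eq_zero
  have hcg : ContinuousAt g 0 := by
    have h1 : ContinuousAt f (x + (0:ℝ) • p) := by simpa using hf.continuousAt
    exact ContinuousAt.comp (f := fun s : ℝ => x + s • p) h1 hcl
  have hmax : IsLocalMax g 0 := isLocalMax_of_deriv_deriv_neg (by rw [hdd]; exact hneg) hd0 hcg
  have hconst : g =ᶠ[𝓝 0] fun _ => g 0 := by
    filter_upwards [hlm, hmax] with s h1 h2 using le_antisymm h2 h1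
  have h1 : deriv g =ᶠ[𝓝 0] fun _ => 0 := by
    have := hconst.deriv
    filter_upwards [this] with s hs
    rw [hs]; simp
  have : deriv (deriv g) 0 = 0 := by rw [h1.deriv_eq]; simp
  rw [hdd] at this
  linarith

/-! ### Linear algebra -/

lemma ks_trMul_eq (A H : Matrix (Fin n) (Fin n) ℝ) : trMul A H = (A * H).trace := by
  simp [trMul, Matrix.trace, Matrix.mul_apply]

lemma ks_norm_sq (p : Eu n) : ‖p‖ ^ 2 = ∑ i, p i ^ 2 := by
  rw [EuclideanSpace.norm_sq_eq]; simp

lemma ks_dotp_inner (x y : Eu n) : dotp x y = inner ℝ x y := by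
  unfold dotp
  rw [PiLp.inner_apply]
  refine Finset.sum_congr rfl fun i _ => ?_
  simp [mul_comm]

lemma ks_posSemidef {H : Matrix (Fin n) (Fin n) ℝ} (hs : H.IsSymm)
    (hq : ∀ p : Eu n, 0 ≤ mquad H p) : H.PosSemidef := by
  refine Matrix.PosSemidef.of_dotProduct_mulVec_nonneg ?_ ?_
  · rw [Matrix.IsHermitian, Matrix.conjTranspose_eq_transpose_of_trivial]; exact hs
  · intro x
    have := hq (WithLp.toLp 2 x)
    have h2 : star x ⬝ᵥ (H.mulVec x) = mquad H (WithLp.toLp 2 x) := by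
      unfold mquad
      simp only [star_trivial, dotProduct, Matrix.mulVec, Finset.mul_sum]
      refine Finset.sum_congr rfl fun i _ => Finset.sum_congr rfl fun j _ => ?_
      ring
    rw [h2]; exact this

open scoped MatrixOrder in
lemma ks_factor {H : Matrix (Fin n) (Fin n) ℝ} (hp : H.PosSemidef) :
    ∃ B : Matrix (Fin n) (Fin n) ℝ, H = B.transpose * B := by
  obtain ⟨B, hB⟩ := CStarAlgebra.nonneg_iff_eq_star_mul_self.mp hp.nonneg
  refine ⟨B, ?_⟩
  rw [hB, Matrix.star_eq_conjTranspose, Matrix.conjTranspose_eq_transpose_of_trivial]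

/-- `tr (A H) ≥ θ tr H` for `H ≥ 0` -/
lemma ks_trMul_ge {θ : ℝ} {A H : Matrix (Fin n) (Fin n) ℝ} (hA : memS θ A) (hs : H.IsSymm)
    (hq : ∀ p : Eu n, 0 ≤ mquad H p) : θ * H.trace ≤ trMul A H := by
  obtain ⟨B, hB⟩ := ks_factor (ks_posSemidef hs hq)
  have h1 : trMul A H = ∑ k, mquad A (WithLp.toLp 2 (B k)) := by
    have h3 : ∀ i j : Fin n, A i j * H j i = ∑ k, A i j * B k i * B k j := by
      intro i j
      rw [hB, Matrix.mul_apply, Finset.mul_sum]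
      refine Finset.sum_congr rfl fun k _ => ?_
      rw [Matrix.transpose_apply]; ring
    have h4 : ∀ k, mquad A (WithLp.toLp 2 (B k)) = ∑ i, ∑ j, A i j * B k i * B k j :=
      fun k => rfl
    unfold trMul
    calc ∑ i, ∑ j, A i j * H j i = ∑ i, ∑ j, ∑ k, A i j * B k i * B k j :=
          Finset.sum_congr rfl fun i _ => Finset.sum_congr rfl fun j _ => h3 i j
      _ = ∑ i, ∑ k, ∑ j, A i j * B k i * B k j :=
          Finset.sum_congr rfl fun i _ => Finset.sum_comm
      _ = ∑ k, ∑ i, ∑ j, A i j * B k i * B k j := Finset.sum_comm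
      _ = _ := Finset.sum_congr rfl fun k _ => (h4 k).symm
  have h2 : H.trace = ∑ k, ‖(WithLp.toLp 2 (B k) : Eu n)‖ ^ 2 := by
    simp only [Matrix.trace, Matrix.diag, hB, Matrix.mul_apply, Matrix.transpose_apply, ks_norm_sq]
    rw [Finset.sum_comm]
    refine Finset.sum_congr rfl fun i _ => Finset.sum_congr rfl fun j _ => ?_
    ring
  rw [h1, h2, Finset.mul_sum]
  exact Finset.sum_le_sum fun k _ => (hA.2 _).1

lemma ks_mquad_single (A : Matrix (Fin n) (Fin n) ℝ) (i : Fin n) :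
    mquad A (EuclideanSpace.single i 1) = A i i := by
  unfold mquad
  rw [Finset.sum_eq_single i]
  · rw [Finset.sum_eq_single i]
    · simp
    · intro j _ hj; simp [hj]
    · simp
  · intro j _ hj
    simp [hj]
  · simp

lemma ks_trace_le {θ : ℝ} {A : Matrix (Fin n) (Fin n) ℝ} (hA : memS θ A) :
    A.trace ≤ n * θ⁻¹ := by
  have : ∀ i, A i i ≤ θ⁻¹ := by
    intro i
    have := (hA.2 (EuclideanSpace.single i 1)).2
    rw [ks_mquad_single] at this
    simpa using this
  calc A.trace = ∑ i, A i i := rfl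
    _ ≤ ∑ i : Fin n, θ⁻¹ := Finset.sum_le_sum fun i _ => this i
    _ = n * θ⁻¹ := by simp

lemma ks_trace_nonneg {θ : ℝ} (hθ : 0 ≤ θ) {A : Matrix (Fin n) (Fin n) ℝ} (hA : memS θ A) :
    0 ≤ A.trace := by
  refine Finset.sum_nonneg fun i _ => ?_
  have := (hA.2 (EuclideanSpace.single i 1)).1
  rw [ks_mquad_single] at this
  simp at this
  simpa using hθ.trans this

lemma ks_entry_le {H : Matrix (Fin n) (Fin n) ℝ} (hs : H.IsSymm)
    (hq : ∀ p : Eu n, 0 ≤ mquad H p) (i j : Fin n) : |H i j| ≤ H.trace := by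
  obtain ⟨B, hB⟩ := ks_factor (ks_posSemidef hs hq)
  have h2 : H.trace = ∑ k, ∑ l, B k l ^ 2 := by
    simp only [Matrix.trace, Matrix.diag, hB, Matrix.mul_apply, Matrix.transpose_apply]
    rw [Finset.sum_comm]
    refine Finset.sum_congr rfl fun i _ => Finset.sum_congr rfl fun j _ => ?_
    ring
  have h3 : H i j = ∑ k, B k i * B k j := by
    simp [hB, Matrix.mul_apply, Matrix.transpose_apply]
  rw [h2, h3]
  refine (Finset.abs_sum_le_sum_abs _ _).trans (Finset.sum_le_sum fun k _ => ?_)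
  have hi : B k i ^ 2 ≤ ∑ l, B k l ^ 2 :=
    Finset.single_le_sum (f := fun l => B k l ^ 2) (fun l _ => sq_nonneg _) (Finset.mem_univ i)
  have hj : B k j ^ 2 ≤ ∑ l, B k l ^ 2 :=
    Finset.single_le_sum (f := fun l => B k l ^ 2) (fun l _ => sq_nonneg _) (Finset.mem_univ j)
  rw [abs_le]
  constructor <;> nlinarith [sq_nonneg (B k i + B k j), sq_nonneg (B k i - B k j)]

lemma ks_det_le {H : Matrix (Fin n) (Fin n) ℝ} {C : ℝ} (h : ∀ i j, |H i j| ≤ C) :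
    |H.det| ≤ (n.factorial : ℝ) * C ^ n := by
  have := Matrix.det_le (A := H) (abv := AbsoluteValue.abs) (x := C) h
  simpa using this

/-! ### Quadratic test functions -/

lemma ks_quad_hasGrad (α β γ : ℝ) (z y : Eu n) :
    HasGradientAt (fun y : Eu n => α + β * ‖y - z‖ ^ 2 + γ * (‖y - z‖ ^ 2) ^ 2)
      ((2 * (β + 2 * γ * ‖y - z‖ ^ 2)) • (y - z)) y := by
  rw [hasGradientAt_iff_hasFDerivAt]
  have h1 : HasFDerivAt (fun y : Eu n => ‖y - z‖ ^ 2) (2 • (innerSL ℝ (y - z))) y := by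
    have := ((hasFDerivAt_id y).sub_const z).norm_sq
    simpa using this
  have h2 := ((h1.const_mul β).const_add α).add ((h1.pow 2).const_mul γ)
  refine h2.congr_fderiv ?_
  ext v
  simp
  ring

lemma ks_quad_grad (α β γ : ℝ) (z y : Eu n) :
    gradient (fun y : Eu n => α + β * ‖y - z‖ ^ 2 + γ * (‖y - z‖ ^ 2) ^ 2) y =
      (2 * (β + 2 * γ * ‖y - z‖ ^ 2)) • (y - z) := (ks_quad_hasGrad α β γ z y).gradient

lemma ks_quad_contDiff (α β γ : ℝ) (z : Eu n) :
    ContDiff ℝ 2 (fun y : Eu n => α + β * ‖y - z‖ ^ 2 + γ * (‖y - z‖ ^ 2) ^ 2) := by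
  have : ContDiff ℝ 2 (fun y : Eu n => ‖y - z‖ ^ 2) := (contDiff_id.sub contDiff_const).norm_sq ℝ
  fun_prop

lemma ks_quad_hess (α β γ : ℝ) (z x : Eu n) (i j : Fin n) :
    hessS (fun y : Eu n => α + β * ‖y - z‖ ^ 2 + γ * (‖y - z‖ ^ 2) ^ 2) x i j =
      2 * (β + 2 * γ * ‖x - z‖ ^ 2) * (if i = j then 1 else 0)
        + 8 * γ * ((x - z) i * (x - z) j) := by
  unfold hessS
  have h0 : (fun y : Eu n => gradient (fun y : Eu n => α + β * ‖y - z‖ ^ 2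
      + γ * (‖y - z‖ ^ 2) ^ 2) y i)
      = fun y : Eu n => (2 * (β + 2 * γ * ‖y - z‖ ^ 2)) * (y i - z i) := by
    funext y; rw [ks_quad_grad]; simp
  rw [h0]
  have h1 : HasFDerivAt (fun y : Eu n => ‖y - z‖ ^ 2) (2 • (innerSL ℝ (x - z))) x := by
    have := ((hasFDerivAt_id x).sub_const z).norm_sq
    simpa using this
  have h2 : HasFDerivAt (fun y : Eu n => y i - z i) (EuclideanSpace.proj i : Eu n →L[ℝ] ℝ) x :=
    ((EuclideanSpace.proj i : Eu n →L[ℝ] ℝ).hasFDerivAt).sub_const (z i)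
  have h3 := (((h1.const_mul (2 * γ)).const_add β).const_mul 2).mul h2
  have h4 := h3.fderiv
  change fderiv ℝ (fun y : Eu n => (2 * (β + 2 * γ * ‖y - z‖ ^ 2)) * (y i - z i)) x = _ at h4
  rw [h4]
  simp [EuclideanSpace.inner_single_right]
  ring

lemma ks_trMul_quad (a : Matrix (Fin n) (Fin n) ℝ) (α β γ : ℝ) (z x : Eu n) :
    trMul a (hessS (fun y : Eu n => α + β * ‖y - z‖ ^ 2 + γ * (‖y - z‖ ^ 2) ^ 2) x) =
      2 * (β + 2 * γ * ‖x - z‖ ^ 2) * a.trace + 8 * γ * mquad a (x - z) := by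
  unfold trMul mquad
  simp only [ks_quad_hess, mul_add, Finset.sum_add_distrib]
  congr 1
  · rw [Matrix.trace, ← mul_add, Finset.mul_sum]
    refine Finset.sum_congr rfl fun i _ => ?_
    rw [Finset.sum_eq_single i]
    · simp [Matrix.diag]; ring
    · intro j _ hj; simp [hj]
    · simp
  · simp only [Finset.mul_sum]
    refine Finset.sum_congr rfl fun i _ => Finset.sum_congr rfl fun j _ => ?_
    ring

/-! ### Touching and the maximum principle -/

lemma ks_trMul_ge' {θ : ℝ} {A H : Matrix (Fin n) (Fin n) ℝ} (hA : memS θ A) (hs : H.IsSymm)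
    (hq : ∀ p : Eu n, 0 ≤ mquad H p) (hθ : 0 ≤ θ) : 0 ≤ trMul A H := by
  refine le_trans ?_ (ks_trMul_ge hA hs hq)
  refine mul_nonneg hθ (Finset.sum_nonneg fun i _ => ?_)
  have := hq (EuclideanSpace.single i 1)
  rw [ks_mquad_single] at this
  exact this

lemma ks_trMul_sub (A H K : Matrix (Fin n) (Fin n) ℝ) :
    trMul A (H - K) = trMul A H - trMul A K := by
  simp [trMul, mul_sub, Finset.sum_sub_distrib]

lemma ks_mquad_sub (H K : Matrix (Fin n) (Fin n) ℝ) (p : Eu n) :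
    mquad (H - K) p = mquad H p - mquad K p := by
  simp [mquad, sub_mul, Finset.sum_sub_distrib]

lemma ks_touch_space {f ψ : Eu n → ℝ} {x : Eu n} (hf : ContDiffAt ℝ 2 f x)
    (hψ : ContDiffAt ℝ 2 ψ x) (h : ∀ᶠ y in 𝓝 x, f x - ψ x ≤ f y - ψ y) :
    gradient f x = gradient ψ x ∧ (hessS f x - hessS ψ x).IsSymm ∧
      ∀ p, 0 ≤ mquad (hessS f x - hessS ψ x) p := by
  have hm : IsLocalMin (f - ψ) x := h
  have hd : ContDiffAt ℝ 2 (f - ψ) x := hf.sub hψ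
  have hdf : ∀ᶠ y in 𝓝 x, DifferentiableAt ℝ f y := by
    filter_upwards [hf.eventually (by simp)] with y hy using hy.differentiableAt (by norm_num)
  have hdψ : ∀ᶠ y in 𝓝 x, DifferentiableAt ℝ ψ y := by
    filter_upwards [hψ.eventually (by simp)] with y hy using hy.differentiableAt (by norm_num)
  have e1 : fderiv ℝ (f - ψ) =ᶠ[𝓝 x] fderiv ℝ f - fderiv ℝ ψ := by
    filter_upwards [hdf, hdψ] with y h1 h2
    rw [fderiv_sub h1 h2]; rfl
  have hd1 : DifferentiableAt ℝ (fderiv ℝ f) x :=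
    (hf.fderiv_right (m := 1) (by norm_num)).differentiableAt (by norm_num)
  have hd2 : DifferentiableAt ℝ (fderiv ℝ ψ) x :=
    (hψ.fderiv_right (m := 1) (by norm_num)).differentiableAt (by norm_num)
  refine ⟨?_, ?_, ?_⟩
  · have h0 : fderiv ℝ (f - ψ) x = 0 := hm.fderiv_eq_zero
    rw [e1.self_of_nhds, Pi.sub_apply, sub_eq_zero] at h0
    unfold gradient
    rw [h0]
  · exact (ks_hess_symm hf).sub (ks_hess_symm hψ)
  · intro p
    rw [ks_mquad_sub, ks_mquad_hess hf, ks_mquad_hess hψ]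
    have h2 := ks_second_order hd hm p
    rw [e1.fderiv_eq, fderiv_sub hd1 hd2] at h2
    simpa using h2

lemma ks_touch_time {f ψ : ℝ → ℝ} {t ψ' : ℝ} (hf : DifferentiableAt ℝ f t)
    (hψ : HasDerivAt ψ ψ' t) (h : ∀ᶠ s in 𝓝[<] t, f t - ψ t ≤ f s - ψ s) :
    deriv f t ≤ ψ' := by
  have h1 : HasDerivAt (fun s => f s - ψ s) (deriv f t - ψ') t := hf.hasDerivAt.sub hψ
  have h2 := (hasDerivAt_iff_tendsto_slope.mp h1).mono_left
    (nhdsWithin_mono (s := Iio t) t (fun s (hs : s < t) => ne_of_lt hs))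
  have : deriv f t - ψ' ≤ 0 := by
    refine le_of_tendsto h2 ?_
    filter_upwards [h, self_mem_nhdsWithin] with s hs (hst : s < t)
    rw [slope_def_field]
    exact div_nonpos_of_nonneg_of_nonpos (by linarith) (by linarith)
  linarith

/-- Maximum principle for barriers of the special quadratic/quartic form. -/
lemma ks_MP {θ ε : ℝ} (hθ : 0 ≤ θ) (hε : 0 ≤ ε) {K : Set (Eu n × ℝ)} (hK : IsCompact K)
    {v : Eu n → ℝ → ℝ} {A B G : ℝ → ℝ} {z : ℝ → Eu n}
    (hv : ContinuousOn (fun p : Eu n × ℝ => v p.1 p.2) K)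
    (hψ : ContinuousOn (fun p : Eu n × ℝ => A p.2 + B p.2 * ‖p.1 - z p.2‖ ^ 2
      + G p.2 * (‖p.1 - z p.2‖ ^ 2) ^ 2) K)
    (h : ∀ p ∈ K, A p.2 + B p.2 * ‖p.1 - z p.2‖ ^ 2
        + G p.2 * (‖p.1 - z p.2‖ ^ 2) ^ 2 ≤ v p.1 p.2 ∨
      ((∀ᶠ y in 𝓝 p.1, (y, p.2) ∈ K) ∧ (∀ᶠ s in 𝓝[<] p.2, (p.1, s) ∈ K) ∧
       ContDiffAt ℝ 2 (fun y => v y p.2) p.1 ∧ DifferentiableAt ℝ (v p.1) p.2 ∧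
       ∃ ψ' a β, HasDerivAt (fun s => A s + B s * ‖p.1 - z s‖ ^ 2
        + G s * (‖p.1 - z s‖ ^ 2) ^ 2) ψ' p.2 ∧ memS θ a ∧
        ε * trMul a (sH v p.1 p.2) + dotp β (sG v p.1 p.2) ≤ tD v p.1 p.2 ∧
        ψ' < ε * (2 * (B p.2 + 2 * G p.2 * ‖p.1 - z p.2‖ ^ 2) * a.trace
          + 8 * G p.2 * mquad a (p.1 - z p.2))
          + 2 * (B p.2 + 2 * G p.2 * ‖p.1 - z p.2‖ ^ 2) * inner ℝ β (p.1 - z p.2))) :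
    ∀ p ∈ K, A p.2 + B p.2 * ‖p.1 - z p.2‖ ^ 2
        + G p.2 * (‖p.1 - z p.2‖ ^ 2) ^ 2 ≤ v p.1 p.2 := by
  intro p0 hp0
  obtain ⟨p, hp, hmin⟩ := hK.exists_isMinOn ⟨p0, hp0⟩ (hv.sub hψ)
  have hmin' : ∀ q ∈ K, v p.1 p.2 - (A p.2 + B p.2 * ‖p.1 - z p.2‖ ^ 2
        + G p.2 * (‖p.1 - z p.2‖ ^ 2) ^ 2) ≤ v q.1 q.2 - (A q.2 + B q.2 * ‖q.1 - z q.2‖ ^ 2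
        + G q.2 * (‖q.1 - z q.2‖ ^ 2) ^ 2) := fun q hq => hmin hq
  rcases h p hp with h1 | ⟨h1, h2, hc, hd, ψ', a, β, hψ', ha, hsup, hstr⟩
  · have := hmin' p0 hp0
    linarith
  · exfalso
    have hsp := ks_touch_space hc (ks_quad_contDiff (A p.2) (B p.2) (G p.2) (z p.2)).contDiffAt
      (by filter_upwards [h1] with y hy using hmin' (y, p.2) hy)
    have hti := ks_touch_time hd hψ' (by filter_upwards [h2] with s hs using hmin' (p.1, s) hs)
    obtain ⟨hg, hsym, hq⟩ := hsp
    have h3 := ks_trMul_ge' ha hsym hq hθ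
    rw [ks_trMul_sub, ks_trMul_quad] at h3
    rw [ks_quad_grad] at hg
    change tD v p.1 p.2 ≤ ψ' at hti
    rw [ks_sH_eq, sG, hg, ks_dotp_inner, inner_smul_right] at hsup
    have := mul_le_mul_of_nonneg_left h3 hε
    nlinarith

/-! ### Change of variables -/

lemma ks_cov_tD {u : Eu n → ℝ → ℝ} {x0 : Eu n} {t0 c k l m : ℝ} {y : Eu n} {s : ℝ}
    (hd : DifferentiableAt ℝ (u (x0 + l • y)) (t0 + m * s)) :
    DifferentiableAt ℝ (fun s => c + k * u (x0 + l • y) (t0 + m * s)) s ∧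
    tD (fun y s => c + k * u (x0 + l • y) (t0 + m * s)) y s
      = k * m * tD u (x0 + l • y) (t0 + m * s) := by
  have h1 : HasDerivAt (fun s : ℝ => t0 + m * s) m s := by
    simpa using ((hasDerivAt_id s).const_mul m).const_add t0
  have h2 := ((hd.hasDerivAt.comp s h1).const_mul k).const_add c
  refine ⟨h2.differentiableAt, ?_⟩
  unfold tD
  rw [show deriv (fun s => c + k * u (x0 + l • y) (t0 + m * s)) s = _ from h2.deriv]
  ring

lemma ks_cov_space {f : Eu n → ℝ} {x0 : Eu n} {c k l : ℝ} {y : Eu n}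
    (hf : ContDiffAt ℝ 2 f (x0 + l • y)) :
    ContDiffAt ℝ 2 (fun y => c + k * f (x0 + l • y)) y ∧
    gradient (fun y => c + k * f (x0 + l • y)) y = (k * l) • gradient f (x0 + l • y) ∧
    hessS (fun y => c + k * f (x0 + l • y)) y = (k * l ^ 2) • hessS f (x0 + l • y) := by
  have ha : ∀ y, HasFDerivAt (fun y : Eu n => x0 + l • y) (l • ContinuousLinearMap.id ℝ (Eu n)) y :=
    fun y => ((hasFDerivAt_id y).const_smul l).const_add x0
  have hac : ContDiff ℝ 2 (fun y : Eu n => x0 + l • y) := by fun_prop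
  have hgr : ∀ y, DifferentiableAt ℝ f (x0 + l • y) →
      gradient (fun y => c + k * f (x0 + l • y)) y = (k * l) • gradient f (x0 + l • y) := by
    intro y hy
    have h1 := ((hy.hasFDerivAt.comp y (ha y)).const_mul k).const_add c
    refine HasGradientAt.gradient ?_
    rw [hasGradientAt_iff_hasFDerivAt]
    refine h1.congr_fderiv ?_
    ext w
    simp [mul_assoc]
  refine ⟨?_, ?_, ?_⟩
  · have := hf.comp y hac.contDiffAt
    exact (contDiffAt_const.add (contDiffAt_const.mul this))
  · exact hgr y (hf.differentiableAt (by norm_num))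
  · have hev : ∀ᶠ z in 𝓝 y, DifferentiableAt ℝ f (x0 + l • z) := by
      have h1 : ∀ᶠ w in 𝓝 (x0 + l • y), DifferentiableAt ℝ f w := by
        filter_upwards [hf.eventually (by simp)] with w hw using hw.differentiableAt (by norm_num)
      exact hac.continuous.continuousAt.eventually h1
    have hd : DifferentiableAt ℝ (fderiv ℝ f) (x0 + l • y) :=
      (hf.fderiv_right (m := 1) (by norm_num)).differentiableAt (by norm_num)
    ext i j
    have e : (fun z => gradient (fun y => c + k * f (x0 + l • y)) z i) =ᶠ[𝓝 y]
        fun z => (k * l) * (fun w => gradient f w i) (x0 + l • z) := by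
      filter_upwards [hev] with z hz
      rw [hgr z hz]; simp
    have hdi : DifferentiableAt ℝ (fun w => gradient f w i) (x0 + l • y) := by
      have h1 : (fun y => gradient f y i) = fun y => fderiv ℝ f y (EuclideanSpace.single i 1) := by
        funext y; exact ks_grad_apply f y i
      rw [h1]
      exact hd.clm_apply (differentiableAt_const _)
    have h3 := (hdi.hasFDerivAt.comp y (ha y)).const_mul (k * l)
    rw [Matrix.smul_apply]
    unfold hessS
    rw [e.fderiv_eq]
    rw [show fderiv ℝ (fun z => (k * l) * (fun w => gradient f w i) (x0 + l • z)) y = _ from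
      h3.fderiv]
    simp
    ring

lemma ks_trMul_smul (A H : Matrix (Fin n) (Fin n) ℝ) (c : ℝ) :
    trMul A (c • H) = c * trMul A H := by
  simp only [trMul, Finset.mul_sum, Matrix.smul_apply, smul_eq_mul]
  refine Finset.sum_congr rfl fun i _ => Finset.sum_congr rfl fun j _ => ?_
  ring

lemma ks_dotp_smul_right (x y : Eu n) (c : ℝ) : dotp x (c • y) = c * dotp x y := by
  rw [ks_dotp_inner, ks_dotp_inner, inner_smul_right]

lemma ks_dotp_smul_left (x y : Eu n) (c : ℝ) : dotp (c • x) y = c * dotp x y := by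
  rw [ks_dotp_inner, ks_dotp_inner, real_inner_smul_left]

lemma ks_cov_sG {u : Eu n → ℝ → ℝ} {x0 : Eu n} {t0 c k l m : ℝ} {y : Eu n} {s : ℝ}
    (hc : ContDiffAt ℝ 2 (fun y => u y (t0 + m * s)) (x0 + l • y)) :
    sG (fun y s => c + k * u (x0 + l • y) (t0 + m * s)) y s
      = (k * l) • sG u (x0 + l • y) (t0 + m * s) := (ks_cov_space hc).2.1

lemma ks_cov_sH {u : Eu n → ℝ → ℝ} {x0 : Eu n} {t0 c k l m : ℝ} {y : Eu n} {s : ℝ}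
    (hc : ContDiffAt ℝ 2 (fun y => u y (t0 + m * s)) (x0 + l • y)) :
    sH (fun y s => c + k * u (x0 + l • y) (t0 + m * s)) y s
      = (k * l ^ 2) • sH u (x0 + l • y) (t0 + m * s) := (ks_cov_space hc).2.2

/-- solutions of uniformly parabolic equations with bounded drift, pointwise coefficients -/
structure KSol (θ Λ : ℝ) (D : Set (Eu n × ℝ)) (v : Eu n → ℝ → ℝ) : Prop where
  isOpen : IsOpen D
  cont : ContinuousOn (fun p : Eu n × ℝ => v p.1 p.2) D
  contT : ContinuousOn (fun p : Eu n × ℝ => tD v p.1 p.2) D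
  c2 : ∀ x t, (x, t) ∈ D → ContDiffAt ℝ 2 (fun y => v y t) x
  dt : ∀ x t, (x, t) ∈ D → DifferentiableAt ℝ (v x) t
  eqn : ∀ x t, (x, t) ∈ D → ∃ a β, memS θ a ∧ ‖β‖ ≤ Λ ∧
    tD v x t = trMul a (sH v x t) + dotp β (sG v x t)

lemma ks_cov_cont (x0 : Eu n) (t0 l m : ℝ) :
    Continuous (fun p : Eu n × ℝ => ((x0 + l • p.1, t0 + m * p.2) : Eu n × ℝ)) := by
  fun_prop

lemma KSol.scale {θ Λ : ℝ} {D : Set (Eu n × ℝ)} {v : Eu n → ℝ → ℝ} (h : KSol θ Λ D v)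
    (x0 : Eu n) (t0 c k r : ℝ) (hr : 0 ≤ r) (hr1 : r ≤ 1) :
    KSol θ Λ ((fun p : Eu n × ℝ => ((x0 + r • p.1, t0 + r ^ 2 * p.2) : Eu n × ℝ)) ⁻¹' D)
      (fun y s => c + k * v (x0 + r • y) (t0 + r ^ 2 * s)) where
  isOpen := h.isOpen.preimage (ks_cov_cont _ _ _ _)
  cont := by
    have := h.cont.comp (ks_cov_cont x0 t0 r (r^2)).continuousOn (mapsTo_preimage _ _)
    exact continuousOn_const.add (continuousOn_const.mul this)
  contT := by
    have := h.contT.comp (ks_cov_cont x0 t0 r (r^2)).continuousOn (mapsTo_preimage _ _)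
    refine (continuousOn_const (c := k * r ^ 2)).mul this |>.congr ?_
    intro p hp
    exact (ks_cov_tD (h.dt _ _ hp)).2
  c2 := fun x t hp => (ks_cov_space (h.c2 _ _ hp)).1
  dt := fun x t hp => (ks_cov_tD (h.dt _ _ hp)).1
  eqn := by
    intro x t hp
    obtain ⟨a, β, ha, hβ, he⟩ := h.eqn _ _ hp
    refine ⟨a, r • β, ha, ?_, ?_⟩
    · rw [norm_smul, Real.norm_of_nonneg hr]
      nlinarith [norm_nonneg β]
    · rw [(ks_cov_tD (h.dt _ _ hp)).2, ks_cov_sH (h.c2 _ _ hp), ks_cov_sG (h.c2 _ _ hp), he,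
        ks_trMul_smul, ks_dotp_smul_right, ks_dotp_smul_left]
      ring

lemma KSol.affine {θ Λ : ℝ} {D : Set (Eu n × ℝ)} {v : Eu n → ℝ → ℝ} (h : KSol θ Λ D v)
    (c k : ℝ) : KSol θ Λ D (fun y s => c + k * v y s) := by
  have := h.scale 0 0 c k 1 zero_le_one le_rfl
  simpa using this

/-! ### Spreading of positivity -/

lemma ks_spread_alg {A B0 θ s q tr mq inn P' P N X Λ R nn : ℝ} (hApos : 0 < A)
    (hA1 : B0 ^ 2 < 32 * θ * s ^ 2 * A) (hθ : 0 < θ) (hqpos : 0 < q) (htr : tr ≤ nn)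
    (hin : inn ≤ Λ * R) (hP' : P' ≤ X) (hN : N = P - q) (hPt : s ^ 2 ≤ P)
    (hmq : θ * N ≤ mq) (hB0 : B0 = 2 * X + 4 * nn + 8 * θ + 4 * Λ * R) :
    0 < A * q ^ 2 - 2 * q * P' - 4 * q * tr + 8 * mq - 4 * q * inn := by
  have hquad : 0 < A * q ^ 2 - q * B0 + 8 * θ * s ^ 2 := by
    have h4 : 4 * A * (A * q ^ 2 - q * B0 + 8 * θ * s ^ 2)
      = (2 * A * q - B0) ^ 2 + (32 * θ * s ^ 2 * A - B0 ^ 2) := by ring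
    have h5 : 0 < 4 * A * (A * q ^ 2 - q * B0 + 8 * θ * s ^ 2) := by
      rw [h4]; nlinarith [sq_nonneg (2 * A * q - B0)]
    exact pos_of_mul_pos_right h5 (by positivity)
  have e1 : q * tr ≤ q * nn := by gcongr
  have e2 : q * inn ≤ q * (Λ * R) := by gcongr
  have e3 : q * P' ≤ q * X := by gcongr
  have e5 : θ * s ^ 2 ≤ θ * P := by gcongr
  have e6 : q * B0 = 2 * (q * X) + 4 * (q * nn) + 8 * (θ * q) + 4 * (q * (Λ * R)) := by
    rw [hB0]; ring
  have e7 : θ * N = θ * P - θ * q := by rw [hN]; ring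
  nlinarith

set_option maxHeartbeats 1000000 in
lemma ks_spread (n : ℕ) {θ Λ s R R' τ Tm : ℝ} (hθ : 0 < θ) (hΛ : 0 ≤ Λ) (hs : 0 < s) (hsR : s < R)
    (hR' : 0 ≤ R') (hR : R' < R) (hτ : 0 < τ) :
    ∃ c > 0, ∀ (D : Set (Eu n × ℝ)) (v : Eu n → ℝ → ℝ), KSol θ Λ D v → ∀ T, τ ≤ T → T ≤ Tm →
      (∀ x t, ‖x‖ ≤ R → 0 ≤ t → t ≤ T → (x, t) ∈ D ∧ 0 ≤ v x t) →
      (∀ x, ‖x‖ ≤ s → 1 ≤ v x 0) → ∀ x, ‖x‖ ≤ R' → c ≤ v x T := by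
  set B0 : ℝ := 2 * ((R ^ 2 - s ^ 2) / τ) + 4 * (n * θ⁻¹) + 8 * θ + 4 * Λ * R with hB0
  set A : ℝ := B0 ^ 2 / (32 * θ * s ^ 2) + 1 with hA
  have hRpos : 0 < R := hs.trans hsR
  have hdiff : 0 < R ^ 2 - s ^ 2 := by nlinarith
  have hA1 : B0 ^ 2 < 32 * θ * s ^ 2 * A := by
    rw [hA]
    have : 0 < 32 * θ * s ^ 2 := by positivity
    have h2 : 32 * θ * s ^ 2 * (B0 ^ 2 / (32 * θ * s ^ 2) + 1) = B0 ^ 2 + 32 * θ * s ^ 2 := by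
      field_simp
    linarith
  have hApos : 0 < A := by positivity
  have hd2 : 0 < R ^ 2 - R' ^ 2 := by nlinarith
  refine ⟨(1 / s ^ 4) * Real.exp (-A * Tm) * (R ^ 2 - R' ^ 2) ^ 2, by positivity, ?_⟩
  intro D v hv T hT1 hT2 hD h0 x hx
  have hT : 0 < T := hτ.trans_le hT1
  set P' : ℝ := (R ^ 2 - s ^ 2) / T with hP'
  have hP'0 : 0 < P' := by positivity
  have hP'1 : P' ≤ (R ^ 2 - s ^ 2) / τ := by
    rw [hP']; gcongr
  set P : ℝ → ℝ := fun t => s ^ 2 + P' * t with hP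
  have hPT : P T = R ^ 2 := by
    simp only [hP, hP']; field_simp; ring
  have hPle : ∀ t, t ≤ T → P t ≤ R ^ 2 := by
    intro t ht; rw [← hPT]; simp only [hP]; nlinarith
  have hPge : ∀ t, 0 ≤ t → s ^ 2 ≤ P t := by
    intro t ht; simp only [hP]; nlinarith
  set E : ℝ → ℝ := fun t => (1 / s ^ 4) * Real.exp (-A * t) with hE
  have hEpos : ∀ t, 0 < E t := fun t => by simp only [hE]; positivity
  have hPc : Continuous P := by simp only [hP]; fun_prop
  have hEc : Continuous E := by simp only [hE]; fun_prop
  set K : Set (Eu n × ℝ) := {p | 0 ≤ p.2 ∧ p.2 ≤ T ∧ ‖p.1‖ ^ 2 ≤ P p.2} with hK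
  have hKR : ∀ p ∈ K, ‖p.1‖ ≤ R := by
    intro p hp
    have h1 := hp.2.2.trans (hPle p.2 hp.2.1)
    exact abs_le_of_sq_le_sq' h1 hRpos.le |>.2
  have hKcl : IsClosed K := by
    refine (isClosed_le continuous_const continuous_snd).inter
      ((isClosed_le continuous_snd continuous_const).inter
      (isClosed_le (by fun_prop) (hPc.comp continuous_snd)))
  have hKc : IsCompact K := by
    refine IsCompact.of_isClosed_subset
      ((isCompact_closedBall (0 : Eu n) R).prod (isCompact_Icc (a := (0:ℝ)) (b := T))) hKcl ?_
    intro p hp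
    exact ⟨by simpa using hKR p hp, hp.1, hp.2.1⟩
  have hKD : K ⊆ D := fun p hp => (hD p.1 p.2 (hKR p hp) hp.1 hp.2.1).1
  have key := ks_MP (v := v) (θ := θ) (ε := 1) (K := K) hθ.le zero_le_one hKc
    (A := fun t => E t * P t ^ 2) (B := fun t => -2 * E t * P t) (G := E) (z := fun _ => 0)
    (hv.cont.mono hKD) (by
      apply Continuous.continuousOn
      have := hPc.comp (continuous_snd (X := Eu n))
      have := hEc.comp (continuous_snd (X := Eu n))
      fun_prop) (by
      rintro ⟨y, t⟩ hp
      have hyR := hKR _ hp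
      obtain ⟨ht0, htT, hyP⟩ := hp
      simp only at ht0 htT hyP hyR
      simp only [sub_zero]
      have hsq : E t * P t ^ 2 + -2 * E t * P t * ‖y‖ ^ 2 + E t * (‖y‖ ^ 2) ^ 2
        = E t * (P t - ‖y‖ ^ 2) ^ 2 := by ring
      rw [hsq]
      have hvD := hD y t hyR ht0 htT
      rcases eq_or_lt_of_le hyP with heq | hlt
      · left
        rw [heq]; simpa using hvD.2
      rcases eq_or_lt_of_le ht0 with heq | htpos
      · left
        subst heq
        have hP0 : P 0 = s ^ 2 := by simp [hP]
        rw [hP0] at hlt ⊢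
        have hys : ‖y‖ ≤ s := abs_le_of_sq_le_sq' hlt.le hs.le |>.2
        refine le_trans ?_ (h0 y hys)
        have : (s ^ 2 - ‖y‖ ^ 2) ^ 2 ≤ s ^ 4 := by
          nlinarith [sq_nonneg (‖y‖)]
        simp only [hE, mul_zero, Real.exp_zero, mul_one]
        rw [one_div, inv_mul_le_iff₀ (by positivity)]
        linarith
      · right
        obtain ⟨a, β, ha, hβ, he⟩ := hv.eqn y t hvD.1
        have hPder : HasDerivAt P P' t := by
          simp only [hP]
          simpa using ((hasDerivAt_id t).const_mul P').const_add (s ^ 2)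
        have hEder : HasDerivAt E (-A * E t) t := by
          simp only [hE]
          have h1 : HasDerivAt (fun t : ℝ => -A * t) (-A) t := by
            simpa using ((hasDerivAt_id t).const_mul (-A))
          exact (h1.exp.const_mul (1 / s ^ 4)).congr_deriv (by ring)
        refine ⟨?_, ?_, hv.c2 _ _ hvD.1, hv.dt _ _ hvD.1, -A * E t * (P t - ‖y‖ ^ 2) ^ 2
          + E t * (2 * (P t - ‖y‖ ^ 2) * P'), a, β, ?_, ha, ?_, ?_⟩
        · have h1 : ∀ᶠ w in 𝓝 y, ‖w‖ ^ 2 < P t :=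
            (isOpen_lt (by fun_prop : Continuous fun w : Eu n => ‖w‖ ^ 2)
              continuous_const).mem_nhds hlt
          filter_upwards [h1] with w hw using ⟨ht0, htT, hw.le⟩
        · have h1 : ∀ᶠ r in 𝓝[<] t, ‖y‖ ^ 2 < P r :=
            nhdsWithin_le_nhds ((isOpen_lt continuous_const hPc).mem_nhds hlt)
          have h2 : ∀ᶠ r in 𝓝[<] t, 0 < r := nhdsWithin_le_nhds (lt_mem_nhds htpos)
          filter_upwards [h1, h2, self_mem_nhdsWithin] with r hr hr2 hr3
          exact ⟨hr2.le, (le_of_lt hr3).trans htT, hr.le⟩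
        · have h1 := hEder.mul ((hPder.sub_const (‖y‖ ^ 2)).pow 2)
          have h2 : (fun r => E r * P r ^ 2 + -2 * E r * P r * ‖y‖ ^ 2 + E r * (‖y‖ ^ 2) ^ 2)
            = E * (fun r => P r - ‖y‖ ^ 2) ^ 2 := by
            funext r; simp; ring
          rw [h2]
          exact h1.congr_deriv (by simp)
        · rw [he]; simp
        · have htr := ks_trace_le ha
          have hmq := (ha.2 y).1
          have hin : inner ℝ β y ≤ Λ * R := by
            refine (real_inner_le_norm _ _).trans ?_
            exact mul_le_mul hβ hyR (norm_nonneg _) hΛ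
          set q : ℝ := P t - ‖y‖ ^ 2 with hq
          have hqpos : 0 < q := by linarith
          have hPt := hPge t ht0
          have hE' := hEpos t
          have hfin : 0 < A * q ^ 2 - 2 * q * P' - 4 * q * a.trace + 8 * mquad a y
              - 4 * q * inner ℝ β y := by
            exact ks_spread_alg hApos hA1 hθ hqpos htr hin hP'1 (by rw [hq]; ring) hPt hmq hB0
          have hy : ‖y‖ ^ 2 = P t - q := by rw [hq]; ring
          rw [hy]
          have := mul_pos hE' hfin
          nlinarith)
  have hfin := key (x, T) ⟨hT.le, le_rfl, by
    rw [hPT]; simp only; nlinarith [norm_nonneg x]⟩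
  simp only [sub_zero] at hfin
  refine le_trans ?_ hfin
  rw [hPT]
  have hsq : E T * (R ^ 2) ^ 2 + -2 * E T * R ^ 2 * ‖x‖ ^ 2 + E T * (‖x‖ ^ 2) ^ 2
        = E T * (R ^ 2 - ‖x‖ ^ 2) ^ 2 := by ring
  rw [hsq]
  have hx2 : ‖x‖ ^ 2 ≤ R' ^ 2 := by
    have := norm_nonneg x; nlinarith
  have h1 : (1 / s ^ 4) * Real.exp (-A * Tm) ≤ E T := by
    simp only [hE]
    exact mul_le_mul_of_nonneg_left (Real.exp_le_exp.mpr (by nlinarith)) (by positivity)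
  exact mul_le_mul h1 (by gcongr) (by positivity) (hEpos T).le

/-! ### One dimensional growth lemma -/

lemma ks_1d {G : ℝ → ℝ} {a b p q C : ℝ} {Z : Set ℝ} (hab : a ≤ b) (hpq : p < q) (hC : 0 < C)
    (hG : ContinuousOn G (Icc a b)) (ha : G a ≤ p) (hb : q ≤ G b)
    (H1 : ∀ t ∈ Ico a b, p ≤ G t → G t ≤ q → ∀ᶠ s in 𝓝[>] t, G s ≤ G t + C * (s - t))
    (H2 : ∀ t ∈ Ico a b, p ≤ G t → G t ≤ q → t ∉ Z → ∀ᶠ s in 𝓝[>] t, G s ≤ G t) :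
    ENNReal.ofReal ((q - p) / C) ≤ MeasureTheory.volume Z := by
  by_contra hlt
  push Not at hlt
  obtain ⟨U, hZU, hU, hUv⟩ := Set.exists_isOpen_lt_of_lt Z _ hlt
  set ι : ℝ → ℝ := U.indicator (fun _ => 1) with hι
  have hIntg : ∀ x y, IntervalIntegrable ι MeasureTheory.volume x y := by
    intro x y
    have : IntervalIntegrable (fun _ : ℝ => (1:ℝ)) MeasureTheory.volume x y :=
      intervalIntegrable_const
    rw [intervalIntegrable_iff] at this ⊢
    exact this.indicator hU.measurableSet
  set m : ℝ → ℝ := fun t => ∫ x in a..t, ι x with hm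
  have hmc : Continuous m := intervalIntegral.continuous_primitive hIntg a
  have hι0 : ∀ x, 0 ≤ ι x := fun x => by
    simp only [hι]; exact Set.indicator_nonneg (fun _ _ => zero_le_one) x
  have hmadd : ∀ s t, m t = m s + ∫ x in s..t, ι x := fun s t =>
    (intervalIntegral.integral_add_adjacent_intervals (hIntg a s) (hIntg s t)).symm
  have hmmono : ∀ s t, s ≤ t → m s ≤ m t := by
    intro s t hst
    rw [hmadd s t]
    have := intervalIntegral.integral_nonneg hst (fun x _ => hι0 x) (μ := MeasureTheory.volume)
    linarith
  set g : ℝ → ℝ := fun t => min (max (G t) p) q with hg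
  have hgc : ContinuousOn g (Icc a b) := (hG.sup continuousOn_const).inf continuousOn_const
  have hsub : Icc a b ⊆ {t | g t ≤ p + C * m t} := by
    refine IsClosed.Icc_subset_of_forall_exists_gt ?_ ?_ ?_
    · have : IsClosed {t ∈ Icc a b | g t ≤ p + C * m t} :=
        isClosed_Icc.isClosed_le hgc (by fun_prop)
      convert this using 1
      ext t; simp [and_comm]
    · simp [hg, hm, ha]
    · rintro t ⟨ht, htab⟩ y hy
      have ht' : g t ≤ p + C * m t := ht
      suffices h : ∀ᶠ s in 𝓝[>] t, g s ≤ p + C * m s by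
        have h2 : ∀ᶠ s in 𝓝[>] t, s ≤ y := nhdsWithin_le_nhds (eventually_le_nhds hy)
        obtain ⟨s, hs⟩ := (h.and (h2.and self_mem_nhdsWithin)).exists
        exact ⟨s, hs.1, hs.2.2, hs.2.1⟩
      have hcw : ContinuousWithinAt G (Ioi t) t :=
        (hG t ⟨htab.1, htab.2.le⟩).mono_of_mem_nhdsWithin
          (mem_of_superset (Ioc_mem_nhdsGT htab.2) (fun s hs => ⟨htab.1.trans hs.1.le, hs.2⟩))
      by_cases h1 : G t < p
      · filter_upwards [hcw.eventually (eventually_lt_nhds h1), self_mem_nhdsWithin] with s hs hst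
        have e1 : g s = p := by simp only [hg]; rw [max_eq_right hs.le, min_eq_left hpq.le]
        have e2 : g t = p := by simp only [hg]; rw [max_eq_right h1.le, min_eq_left hpq.le]
        have := mul_le_mul_of_nonneg_left (hmmono t s (le_of_lt hst)) hC.le
        linarith
      by_cases h2 : q < G t
      · filter_upwards [self_mem_nhdsWithin] with s hst
        have e1 : g s ≤ q := min_le_right _ _
        have e2 : g t = q := by
          simp only [hg]; rw [min_eq_right]; exact h2.le.trans (le_max_left _ _)
        have := mul_le_mul_of_nonneg_left (hmmono t s (le_of_lt hst)) hC.le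
        linarith
      push Not at h1 h2
      have e2 : g t = G t := by simp only [hg]; rw [max_eq_left h1, min_eq_left h2]
      by_cases hz : t ∈ Z
      · obtain ⟨e, he, hball⟩ := Metric.isOpen_iff.mp hU t (hZU hz)
        have h3 : ∀ᶠ s in 𝓝[>] t, s < t + e := nhdsWithin_le_nhds (eventually_lt_nhds (by linarith))
        filter_upwards [H1 t htab h1 h2, h3, self_mem_nhdsWithin] with s hs hse hst
        have hst' : t < s := hst
        have hm2 : m s = m t + (s - t) := by
          rw [hmadd t s]
          congr 1
          rw [intervalIntegral.integral_congr (g := fun _ => (1:ℝ))]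
          · simp
          · intro x hx
            rw [uIcc_of_le hst'.le] at hx
            have : x ∈ U := hball (by
              rw [Metric.mem_ball, Real.dist_eq, abs_lt]; constructor <;> linarith [hx.1, hx.2])
            simp [hι, this]
        have e1 : g s ≤ G t + C * (s - t) := by
          refine (min_le_left _ _).trans (max_le hs ?_)
          nlinarith
        rw [hm2]; nlinarith
      · filter_upwards [H2 t htab h1 h2 hz, self_mem_nhdsWithin] with s hs hst
        have e1 : g s ≤ G t := (min_le_left _ _).trans (max_le hs h1)
        have := mul_le_mul_of_nonneg_left (hmmono t s (le_of_lt hst)) hC.le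
        linarith
  have hbm : g b ≤ p + C * m b := hsub ⟨hab, le_rfl⟩
  have hgb : g b = q := by
    simp only [hg]; rw [min_eq_right]; exact hb.trans (le_max_left _ _)
  have hUfin : MeasureTheory.volume U ≠ ∞ := (hUv.trans ENNReal.ofReal_lt_top).ne
  have hmb : m b ≤ (MeasureTheory.volume U).toReal := by
    simp only [hm, hι]
    rw [intervalIntegral.integral_of_le hab, MeasureTheory.integral_indicator hU.measurableSet]
    simp only [MeasureTheory.integral_const, smul_eq_mul, mul_one, MeasureTheory.measureReal_def]
    rw [MeasureTheory.Measure.restrict_restrict hU.measurableSet,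
      MeasureTheory.Measure.restrict_apply_univ]
    exact ENNReal.toReal_mono hUfin (MeasureTheory.measure_mono inter_subset_left)
  have hlt2 : (MeasureTheory.volume U).toReal < (q - p) / C := by
    rw [← ENNReal.toReal_ofReal (show 0 ≤ (q - p) / C by apply div_nonneg <;> linarith)]
    exact (ENNReal.toReal_lt_toReal hUfin ENNReal.ofReal_ne_top).mpr hUv
  rw [lt_div_iff₀ hC] at hlt2
  nlinarith

lemma ks_slope_ev {φ : ℝ → ℝ} {d C s : ℝ} (h : HasDerivAt φ d s) (hd : d < C) :
    ∀ᶠ r in 𝓝[>] s, φ r ≤ φ s + C * (r - s) := by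
  have h2 := (hasDerivAt_iff_tendsto_slope.mp h).mono_left
    (nhdsWithin_mono (s := Ioi s) s (fun r (hr : s < r) => ne_of_gt hr))
  filter_upwards [h2.eventually (eventually_lt_nhds hd), self_mem_nhdsWithin] with r hr hrs
  have hrs' : 0 < r - s := sub_pos.mpr hrs
  rw [slope_def_field, div_lt_iff₀ hrs'] at hr
  linarith

lemma ks_tietze {X : Type*} [TopologicalSpace X] [NormalSpace X] {Q : Set X} (hQ : IsClosed Q)
    {f : X → ℝ} (hf : ContinuousOn f Q) : ∃ g : X → ℝ, Continuous g ∧ ∀ x ∈ Q, g x = f x := by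
  obtain ⟨g, hg⟩ := ContinuousMap.exists_restrict_eq hQ ⟨Q.domRestrict f, hf.domRestrict⟩
  refine ⟨g, g.continuous, fun x hx => ?_⟩
  have := congrArg (fun k : C(Q, ℝ) => k ⟨x, hx⟩) hg
  exact this

/-! ### The Jacobian of the contact map -/

lemma ks_grad_hasFDeriv {f : Eu n → ℝ} {x : Eu n} (hf : ContDiffAt ℝ 2 f x) :
    HasFDerivAt (gradient f) (Matrix.toEuclideanCLM (n := Fin n) (𝕜 := ℝ) (hessS f x)) x := by
  rw [← hasFDerivWithinAt_univ, hasFDerivWithinAt_euclidean]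
  intro i
  have hd : DifferentiableAt ℝ (fderiv ℝ f) x :=
    (hf.fderiv_right (m := 1) (by norm_num)).differentiableAt (by norm_num)
  have hdi : DifferentiableAt ℝ (fun w => gradient f w i) x := by
    have h1 : (fun y => gradient f y i) = fun y => fderiv ℝ f y (EuclideanSpace.single i 1) := by
      funext y; exact ks_grad_apply f y i
    rw [h1]
    exact hd.clm_apply (differentiableAt_const _)
  rw [hasFDerivWithinAt_univ]
  refine hdi.hasFDerivAt.congr_fderiv ?_
  ext w
  conv_lhs => rw [ks_sum_single w]
  simp only [map_sum, map_smul, smul_eq_mul]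
  change _ = (Matrix.toEuclideanCLM (n := Fin n) (𝕜 := ℝ) (hessS f x) w) i
  rw [Matrix.ofLp_toEuclideanCLM, Matrix.mulVec, dotProduct]
  refine Finset.sum_congr rfl fun j _ => ?_
  rw [mul_comm]; rfl

lemma ks_contact_map {f : Eu n → ℝ} {x : Eu n} (hf : ContDiffAt ℝ 2 f x) :
    HasFDerivAt (fun y => y + (1/8 : ℝ) • gradient f y)
      (Matrix.toEuclideanCLM (n := Fin n) (𝕜 := ℝ) (1 + (1/8 : ℝ) • hessS f x)) x := by
  refine ((hasFDerivAt_id x).add ((ks_grad_hasFDeriv hf).const_smul (1/8 : ℝ))).congr_fderiv ?_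
  rw [map_add, map_one, map_smul]; rfl

lemma ks_det_CLM (M : Matrix (Fin n) (Fin n) ℝ) :
    (Matrix.toEuclideanCLM (n := Fin n) (𝕜 := ℝ) M).det = M.det := by
  rw [ContinuousLinearMap.det]
  have : ((Matrix.toEuclideanCLM (n := Fin n) (𝕜 := ℝ) M : Eu n →L[ℝ] Eu n) : Eu n →ₗ[ℝ] Eu n)
      = Matrix.toLin (EuclideanSpace.basisFun (Fin n) ℝ).toBasis
        (EuclideanSpace.basisFun (Fin n) ℝ).toBasis M := by
    rw [← Matrix.toEuclideanLin_eq_toLin_orthonormal]; rfl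
  rw [this, LinearMap.det_toLin]

/-! ### The measure estimate (ABP) -/

/-- the constant in the contact estimates -/
def ksC1 (n : ℕ) (θ Λ : ℝ) : ℝ := 1/2 + 8 * (n * θ⁻¹) + 16 * Λ

lemma ks_contact {θ Λ : ℝ} (hθ : 0 < θ) (hΛ : 0 ≤ Λ) {D : Set (Eu n × ℝ)} {v : Eu n → ℝ → ℝ}
    (hv : KSol θ Λ D v) {x z : Eu n} {t : ℝ} (hD : (x, t) ∈ D) (hxz : ‖x - z‖ ≤ 2)
    (hmin : ∀ᶠ y in 𝓝 x, v x t + 4 * ‖x - z‖ ^ 2 ≤ v y t + 4 * ‖y - z‖ ^ 2) :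
    z = x + (1/8 : ℝ) • gradient (fun y => v y t) x ∧
    -ksC1 n θ Λ ≤ tD v x t - 1/2 ∧
    (tD v x t ≤ 1/2 → |(1 + (1/8 : ℝ) • hessS (fun y => v y t) x).det|
      ≤ (n.factorial : ℝ) * (ksC1 n θ Λ / (8 * θ)) ^ n) := by
  have hc := hv.c2 x t hD
  obtain ⟨hg, hsym, hq⟩ := ks_touch_space hc (ks_quad_contDiff 0 (-4) 0 z).contDiffAt (by
    filter_upwards [hmin] with y hy
    linarith)
  rw [ks_quad_grad] at hg
  have hg' : gradient (fun y => v y t) x = (-8 : ℝ) • (x - z) := by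
    rw [hg]; congr 1; norm_num
  obtain ⟨a, β, ha, hβ, he⟩ := hv.eqn x t hD
  set H := hessS (fun y => v y t) x with hH
  set H0 := hessS (fun y : Eu n => (0:ℝ) + -4 * ‖y - z‖ ^ 2 + 0 * (‖y - z‖ ^ 2) ^ 2) x with hH0
  have h0 : 0 ≤ (H - H0).trace := by
    refine Finset.sum_nonneg fun i _ => ?_
    have := hq (EuclideanSpace.single i 1)
    rw [ks_mquad_single] at this
    exact this
  have h1 := ks_trMul_ge ha hsym hq
  rw [ks_trMul_sub] at h1
  have h2 : trMul a H0 = -8 * a.trace := by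
    rw [hH0, ks_trMul_quad]; ring
  rw [h2] at h1
  have htr := ks_trace_le ha
  have hin : |dotp β (sG v x t)| ≤ 16 * Λ := by
    rw [sG, hg', ks_dotp_inner]
    refine (abs_real_inner_le_norm _ _).trans ?_
    rw [norm_smul]
    have : ‖(-8:ℝ)‖ * ‖x - z‖ ≤ 16 := by
      rw [Real.norm_eq_abs]; norm_num; linarith
    nlinarith [norm_nonneg β, norm_nonneg (x - z)]
  rw [abs_le] at hin
  rw [ks_sH_eq] at he
  have hprod : 0 ≤ θ * (H - H0).trace := by positivity
  have hge : θ * (H - H0).trace - ksC1 n θ Λ ≤ tD v x t - 1/2 := by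
    rw [he]; unfold ksC1; linarith
  refine ⟨?_, by linarith, ?_⟩
  · rw [hg', smul_smul]; norm_num
  · intro htd
    refine ks_det_le fun i j => ?_
    have e : (1 + (1/8 : ℝ) • H) i j = (1/8) * (H - H0) i j := by
      rw [Matrix.add_apply, Matrix.smul_apply, Matrix.sub_apply, hH0, ks_quad_hess,
        Matrix.one_apply]
      simp only [smul_eq_mul]
      ring
    rw [e, abs_mul, abs_of_pos (by norm_num : (0:ℝ) < 1/8)]
    have h3 := ks_entry_le hsym hq i j
    have h4 : (H - H0).trace ≤ ksC1 n θ Λ / θ := by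
      rw [le_div_iff₀ hθ]; linarith
    calc (1/8 : ℝ) * |(H - H0) i j| ≤ (1/8) * (ksC1 n θ Λ / θ) := by gcongr; exact h3.trans h4
      _ = ksC1 n θ Λ / (8 * θ) := by field_simp

/-- Per-time-slice area estimate. -/
lemma ks_slice_area {f : Eu n → ℝ} {s W : Set (Eu n)} {C : ℝ} (hs : MeasurableSet s)
    (hc : ∀ x ∈ s, ContDiffAt ℝ 2 f x)
    (hdet : ∀ x ∈ s, |(1 + (1/8 : ℝ) • hessS f x).det| ≤ C)
    (hW : ∀ z ∈ W, ∃ x ∈ s, z = x + (1/8 : ℝ) • gradient f x) :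
    MeasureTheory.volume W ≤ ENNReal.ofReal C * MeasureTheory.volume s := by
  have h1 := MeasureTheory.addHaar_image_le_lintegral_abs_det_fderiv
    (MeasureTheory.volume : MeasureTheory.Measure (Eu n)) hs
    (f := fun y => y + (1/8 : ℝ) • gradient f y)
    (f' := fun x => Matrix.toEuclideanCLM (n := Fin n) (𝕜 := ℝ) (1 + (1/8 : ℝ) • hessS f x))
    (fun x hx => (ks_contact_map (hc x hx)).hasFDerivWithinAt)
  refine (MeasureTheory.measure_mono ?_).trans (h1.trans ?_)
  · intro z hz
    obtain ⟨x, hx, h⟩ := hW z hz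
    exact ⟨x, hx, h.symm⟩
  · refine (MeasureTheory.setLIntegral_mono' (g := fun _ => ENNReal.ofReal C) hs ?_).trans ?_
    · intro x hx
      rw [ks_det_CLM]
      exact ENNReal.ofReal_le_ofReal (hdet x hx)
    · rw [MeasureTheory.setLIntegral_const]

/-- Fubini comparison of slices. -/
lemma ks_fubini {Z E : Set (Eu n × ℝ)} (hZ : MeasurableSet Z) (hE : MeasurableSet E)
    {B : Set (Eu n)} {c C : ℝ≥0∞} (hB : MeasurableSet B)
    (h1 : ∀ z ∈ B, c ≤ MeasureTheory.volume {t : ℝ | (z, t) ∈ Z})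
    (h2 : ∀ t : ℝ, MeasureTheory.volume {z : Eu n | (z, t) ∈ Z}
      ≤ C * MeasureTheory.volume {z : Eu n | (z, t) ∈ E}) :
    c * MeasureTheory.volume B ≤ C * MeasureTheory.volume E := by
  have e1 : c * MeasureTheory.volume B ≤ MeasureTheory.volume Z := by
    rw [MeasureTheory.Measure.volume_eq_prod, MeasureTheory.Measure.prod_apply hZ]
    calc c * MeasureTheory.volume B = ∫⁻ z in B, c := by
          rw [MeasureTheory.setLIntegral_const]
      _ ≤ ∫⁻ z in B, MeasureTheory.volume (Prod.mk z ⁻¹' Z) :=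
          MeasureTheory.setLIntegral_mono' hB h1
      _ ≤ _ := MeasureTheory.setLIntegral_le_lintegral _ _
  refine e1.trans ?_
  rw [MeasureTheory.Measure.volume_eq_prod, MeasureTheory.Measure.prod_apply_symm hZ,
    MeasureTheory.Measure.prod_apply_symm hE, ← MeasureTheory.lintegral_const_mul]
  · exact MeasureTheory.lintegral_mono h2
  · exact measurable_measure_prodMk_right hE

lemma ks_closed_and {X : Type*} [TopologicalSpace X] {p q : X → Prop} (h1 : IsClosed {x | p x})
    (h2 : IsClosed {x | q x}) : IsClosed {x | p x ∧ q x} := h1.inter h2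

lemma ks_open_and {X : Type*} [TopologicalSpace X] {p q : X → Prop} (h1 : IsOpen {x | p x})
    (h2 : IsOpen {x | q x}) : IsOpen {x | p x ∧ q x} := h1.inter h2

/-- minimum over a compact set, depending continuously on a parameter -/
lemma ks_min_param {X : Type*} [TopologicalSpace X] {K : Set X} (hK : IsCompact K)
    (hne : K.Nonempty) {g : ℝ → X → ℝ} (hg : Continuous (fun p : ℝ × X => g p.1 p.2)) :
    ∃ m : ℝ → ℝ, Continuous m ∧ (∀ t, ∀ x ∈ K, m t ≤ g t x) ∧ ∀ t, ∃ x ∈ K, m t = g t x := by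
  refine ⟨fun t => sInf (g t '' K), IsCompact.continuous_sInf hK hg, ?_, ?_⟩
  · intro t x hx
    have hc : Continuous (g t) := hg.comp (Continuous.prodMk_right t)
    exact csInf_le (hK.image hc).bddBelow ⟨x, hx, rfl⟩
  · intro t
    have hc : Continuous (g t) := hg.comp (Continuous.prodMk_right t)
    obtain ⟨x, hx, h⟩ := hK.exists_sInf_image_eq hne hc.continuousOn
    exact ⟨x, hx, h⟩

set_option maxHeartbeats 1000000 in
lemma ks_ABP (n : ℕ) {θ Λ : ℝ} (hθ : 0 < θ) (hΛ : 0 ≤ Λ) :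
    ∃ κ > 0, ∀ (D : Set (Eu n × ℝ)) (v : Eu n → ℝ → ℝ), KSol θ Λ D v →
      (∀ x t, ‖x‖ ≤ 1 → -1 ≤ t → t ≤ 1 → (x, t) ∈ D ∧ 0 ≤ v x t) →
      MeasureTheory.volume {p : Eu n × ℝ | ‖p.1‖ < 1 ∧ -1 < p.2 ∧ p.2 < 1 ∧ v p.1 p.2 < 1}
        < ENNReal.ofReal κ →
      ∀ x, ‖x‖ ≤ 1/2 → 1/2 ≤ v x 1 := by
  set C1 := ksC1 n θ Λ with hC1
  have hC1pos : 0 < C1 := by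
    rw [hC1]; unfold ksC1; positivity
  set C : ℝ := C1 + 1 with hC
  have hCpos : 0 < C := by positivity
  set C2 : ℝ := (n.factorial : ℝ) * (C1 / (8 * θ)) ^ n with hC2
  have hC2pos : 0 < C2 := by positivity
  set b : ℝ := (MeasureTheory.volume (closedBall (0 : Eu n) (1/16))).toReal with hb
  have hbpos : 0 < b := ENNReal.toReal_pos
    (Metric.measure_closedBall_pos _ _ (by norm_num)).ne' (isCompact_closedBall _ _).measure_ne_top
  set p : ℝ := -30/64 with hp
  set q : ℝ := -16/64 with hq
  refine ⟨((q - p) / C * b) / C2, by rw [hp, hq]; positivity, ?_⟩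
  intro D v hv hD hE x0 hx0
  by_contra hneg
  push Not at hneg
  set E : Set (Eu n × ℝ) := {p : Eu n × ℝ | ‖p.1‖ < 1 ∧ -1 < p.2 ∧ p.2 < 1 ∧ v p.1 p.2 < 1} with hEd
  set Q : Set (Eu n × ℝ) := closedBall 0 1 ×ˢ Icc (-1) 1 with hQ
  have hQD : Q ⊆ D := fun r hr => (hD r.1 r.2 (by simpa using hr.1) hr.2.1 hr.2.2).1
  have hQcl : IsClosed Q := isClosed_closedBall.prod isClosed_Icc
  obtain ⟨V, hVc, hV⟩ := ks_tietze hQcl (hv.cont.mono hQD)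
  obtain ⟨W, hWc, hW⟩ := ks_tietze hQcl (hv.contT.mono hQD)
  have hV' : ∀ x t, ‖x‖ ≤ 1 → -1 ≤ t → t ≤ 1 → V (x, t) = v x t := fun x t h1 h2 h3 =>
    hV (x, t) ⟨by simpa using h1, h2, h3⟩
  have hW' : ∀ x t, ‖x‖ ≤ 1 → -1 ≤ t → t ≤ 1 → W (x, t) = tD v x t := fun x t h1 h2 h3 =>
    hW (x, t) ⟨by simpa using h1, h2, h3⟩
  -- the contact set
  set Z3 : Set ((Eu n × ℝ) × Eu n) := {r | ‖r.2‖ ≤ 1 ∧ -1 ≤ r.1.2 ∧ r.1.2 ≤ 1 ∧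
    ‖r.1.1 - x0‖ ≤ 1/16 ∧ (∀ y, ‖y‖ ≤ 1 → V (r.2, r.1.2) + 4 * ‖r.2 - r.1.1‖ ^ 2
      ≤ V (y, r.1.2) + 4 * ‖y - r.1.1‖ ^ 2) ∧
    p ≤ V (r.2, r.1.2) + 4 * ‖r.2 - r.1.1‖ ^ 2 - (r.1.2 + 1) / 2 ∧
    V (r.2, r.1.2) + 4 * ‖r.2 - r.1.1‖ ^ 2 - (r.1.2 + 1) / 2 ≤ q ∧ W (r.2, r.1.2) ≤ 1/2} with hZ3
  have hZ3cl : IsClosed Z3 := by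
    refine ks_closed_and (isClosed_le (by fun_prop) (by fun_prop)) ?_
    refine ks_closed_and (isClosed_le (by fun_prop) (by fun_prop)) ?_
    refine ks_closed_and (isClosed_le (by fun_prop) (by fun_prop)) ?_
    refine ks_closed_and (isClosed_le (by fun_prop) (by fun_prop)) ?_
    refine ks_closed_and ?_ ?_
    · have hset : {r : (Eu n × ℝ) × Eu n | ∀ y, ‖y‖ ≤ 1 → V (r.2, r.1.2) + 4 * ‖r.2 - r.1.1‖ ^ 2
          ≤ V (y, r.1.2) + 4 * ‖y - r.1.1‖ ^ 2} = ⋂ y : Eu n, ⋂ (_ : ‖y‖ ≤ 1),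
          {r : (Eu n × ℝ) × Eu n | V (r.2, r.1.2) + 4 * ‖r.2 - r.1.1‖ ^ 2
          ≤ V (y, r.1.2) + 4 * ‖y - r.1.1‖ ^ 2} := by
        ext r; simp
      have hset2 : IsClosed {r : (Eu n × ℝ) × Eu n | ∀ y, ‖y‖ ≤ 1 →
          V (r.2, r.1.2) + 4 * ‖r.2 - r.1.1‖ ^ 2 ≤ V (y, r.1.2) + 4 * ‖y - r.1.1‖ ^ 2} := by
        rw [hset]
        exact isClosed_iInter fun y => isClosed_iInter fun _ =>
          isClosed_le (by fun_prop) (by fun_prop)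
      exact hset2
    refine ks_closed_and (isClosed_le (by fun_prop) (by fun_prop)) ?_
    exact ks_closed_and (isClosed_le (by fun_prop) (by fun_prop))
      (isClosed_le (by fun_prop) (by fun_prop))
  have hZ3c : IsCompact Z3 := by
    refine IsCompact.of_isClosed_subset (((isCompact_closedBall x0 (1/16)).prod
      (isCompact_Icc (a := (-1:ℝ)) (b := 1))).prod (isCompact_closedBall (0 : Eu n) 1)) hZ3cl ?_
    rintro ⟨⟨z, t⟩, x⟩ h
    refine ⟨⟨?_, h.2.1, h.2.2.1⟩, ?_⟩
    · simpa [dist_eq_norm] using h.2.2.2.1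
    · simpa using h.1
  -- window consequences
  have hwin : ∀ z t x, ((z, t), x) ∈ Z3 ∨ (‖x‖ ≤ 1 ∧ -1 ≤ t ∧ t ≤ 1 ∧ ‖z - x0‖ ≤ 1/16 ∧
      V (x, t) + 4 * ‖x - z‖ ^ 2 - (t + 1) / 2 ≤ q) → ‖x‖ < 1 ∧ v x t < 1 ∧ ‖x - z‖ ≤ 2 := by
    intro z t x h
    have h' : ‖x‖ ≤ 1 ∧ -1 ≤ t ∧ t ≤ 1 ∧ ‖z - x0‖ ≤ 1/16 ∧
      V (x, t) + 4 * ‖x - z‖ ^ 2 - (t + 1) / 2 ≤ q := by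
      rcases h with h | h
      · exact ⟨h.1, h.2.1, h.2.2.1, h.2.2.2.1, h.2.2.2.2.2.2.1⟩
      · exact h
    obtain ⟨h1, h2, h3, h4, h5⟩ := h'
    rw [hV' x t h1 h2 h3] at h5
    have hv0 := (hD x t h1 h2 h3).2
    have htri : ‖x‖ ≤ ‖x - z‖ + ‖z - x0‖ + ‖x0‖ := by
      calc ‖x‖ = ‖(x - z) + (z - x0) + x0‖ := by congr 1; abel
        _ ≤ _ := norm_add₃_le
    have htri2 : ‖x - z‖ ≤ ‖x‖ + ‖z - x0‖ + ‖x0‖ := by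
      calc ‖x - z‖ = ‖x - (z - x0) - x0‖ := by congr 1; abel
        _ ≤ ‖x - (z - x0)‖ + ‖x0‖ := norm_sub_le _ _
        _ ≤ _ := by gcongr; exact norm_sub_le _ _
    have hsq := norm_nonneg (x - z)
    rw [hq] at h5
    refine ⟨?_, by nlinarith, by linarith⟩
    by_contra hcon
    push Not at hcon
    have : 7/16 ≤ ‖x - z‖ := by linarith
    nlinarith
  have hcontact : ∀ z t x, ((z, t), x) ∈ Z3 ∨ (‖x‖ ≤ 1 ∧ -1 ≤ t ∧ t ≤ 1 ∧ ‖z - x0‖ ≤ 1/16 ∧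
      V (x, t) + 4 * ‖x - z‖ ^ 2 - (t + 1) / 2 ≤ q) →
      (∀ y, ‖y‖ ≤ 1 → V (x, t) + 4 * ‖x - z‖ ^ 2 ≤ V (y, t) + 4 * ‖y - z‖ ^ 2) →
      -1 ≤ t → t ≤ 1 →
      z = x + (1/8 : ℝ) • gradient (fun y => v y t) x ∧
      -ksC1 n θ Λ ≤ tD v x t - 1/2 ∧
      (tD v x t ≤ 1/2 → |(1 + (1/8 : ℝ) • hessS (fun y => v y t) x).det|
        ≤ (n.factorial : ℝ) * (ksC1 n θ Λ / (8 * θ)) ^ n) := by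
    intro z t x h hm ht1 ht2
    obtain ⟨h1, h2, h3⟩ := hwin z t x h
    refine ks_contact hθ hΛ hv (hD x t h1.le ht1 ht2).1 h3 ?_
    have : ∀ᶠ y in 𝓝 x, ‖y‖ < 1 := (isOpen_lt continuous_norm continuous_const).mem_nhds h1
    filter_upwards [this] with y hy
    have := hm y hy.le
    rwa [hV' x t h1.le ht1 ht2, hV' y t hy.le ht1 ht2] at this
  have hEo : IsOpen E := by
    have h1 : IsOpen (D ∩ (fun r : Eu n × ℝ => v r.1 r.2) ⁻¹' Iio 1) :=
      hv.cont.isOpen_inter_preimage hv.isOpen isOpen_Iio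
    have h2 : IsOpen {r : Eu n × ℝ | ‖r.1‖ < 1 ∧ -1 < r.2 ∧ r.2 < 1} := by
      refine ks_open_and (isOpen_lt (by fun_prop) (by fun_prop)) ?_
      refine ks_open_and (isOpen_lt (by fun_prop) (by fun_prop)) ?_
      exact (isOpen_lt (by fun_prop) (by fun_prop))
    have : E = {r : Eu n × ℝ | ‖r.1‖ < 1 ∧ -1 < r.2 ∧ r.2 < 1} ∩
        (D ∩ (fun r : Eu n × ℝ => v r.1 r.2) ⁻¹' Iio 1) := by
      ext ⟨x, t⟩
      constructor
      · rintro ⟨a1, a2, a3, a4⟩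
        exact ⟨⟨a1, a2, a3⟩, (hD x t a1.le a2.le a3.le).1, a4⟩
      · rintro ⟨⟨a1, a2, a3⟩, _, a4⟩
        exact ⟨a1, a2, a3, a4⟩
    rw [this]; exact h2.inter h1
  set Z : Set (Eu n × ℝ) := Prod.fst '' Z3 with hZ
  have hZm : MeasurableSet Z := (hZ3c.image continuous_fst).measurableSet
  -- top and bottom times are excluded
  have htop : ∀ z t x, ‖z - x0‖ ≤ 1/16 → ‖x‖ ≤ 1 → -1 ≤ t → t ≤ 1 →
      (∀ y, ‖y‖ ≤ 1 → V (x, t) + 4 * ‖x - z‖ ^ 2 ≤ V (y, t) + 4 * ‖y - z‖ ^ 2) →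
      p ≤ V (x, t) + 4 * ‖x - z‖ ^ 2 - (t + 1) / 2 →
      V (x, t) + 4 * ‖x - z‖ ^ 2 - (t + 1) / 2 ≤ q → -1 < t ∧ t < 1 := by
    intro z t x hz hx ht1 ht2 hm hw1 hw2
    constructor
    · refine lt_of_le_of_ne ht1 fun h => ?_
      subst h
      rw [hV' x _ hx le_rfl (by norm_num)] at hw2
      have := (hD x _ hx le_rfl (by norm_num : (-1:ℝ) ≤ 1)).2
      have := sq_nonneg ‖x - z‖
      rw [hq] at hw2
      linarith
    · refine lt_of_le_of_ne ht2 fun h => ?_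
      subst h
      have h1 := hm x0 (by linarith)
      rw [hV' x0 1 (by linarith) ht1 le_rfl] at h1
      have h2 : ‖x0 - z‖ ≤ 1/16 := by rwa [norm_sub_rev]
      have h3 := norm_nonneg (x0 - z)
      rw [hp] at hw1
      nlinarith
  have hmain := ks_fubini (Z := Z) (E := E) hZm hEo.measurableSet
    (B := closedBall x0 (1/16)) (c := ENNReal.ofReal ((q - p) / C)) (C := ENNReal.ofReal C2)
    measurableSet_closedBall (by
      intro z hz
      have hz' : ‖z - x0‖ ≤ 1/16 := by simpa [dist_eq_norm] using hz
      obtain ⟨m, hmc, hm1, hm2⟩ := ks_min_param (isCompact_closedBall (0 : Eu n) 1)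
        ⟨0, by simp⟩ (g := fun s x => V (x, -s) + 4 * ‖x - z‖ ^ 2) (by fun_prop)
      have hneg : MeasureTheory.volume {t : ℝ | (z, t) ∈ Z}
          = MeasureTheory.volume (Neg.neg ⁻¹' {t : ℝ | (z, t) ∈ Z}) :=
        (MeasureTheory.Measure.measure_preimage_neg _ _).symm
      rw [hneg]
      set G : ℝ → ℝ := fun s => m s - (-s + 1) / 2 with hG
      have hslope : ∀ s ∈ Ico (-1:ℝ) 1, p ≤ G s → G s ≤ q → ∀ x, ‖x‖ ≤ 1 →
          m s = V (x, -s) + 4 * ‖x - z‖ ^ 2 → ∀ c', -(tD v x (-s) - 1/2) < c' →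
          ∀ᶠ r in 𝓝[>] s, G r ≤ G s + c' * (r - s) := by
        intro s hs hp1 hq1 x hx hmx c' hc'
        have ht1 : -1 ≤ -s := by linarith [hs.2]
        have ht2 : -s ≤ 1 := by linarith [hs.1]
        have hder : HasDerivAt (fun r => v x (-r) + 4 * ‖x - z‖ ^ 2 - (-r + 1) / 2)
            (-(tD v x (-s) - 1/2)) s := by
          have h1 : HasDerivAt (fun r : ℝ => -r) (-1) s := by
            simpa using (hasDerivAt_neg s)
          have h2 := (hv.dt x (-s) (hD x (-s) hx ht1 ht2).1).hasDerivAt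
          have h3 := (h2.comp s h1).add_const (4 * ‖x - z‖ ^ 2)
          have h4 := h3.sub ((h1.add_const 1).div_const 2)
          refine h4.congr_deriv ?_
          unfold tD
          ring
        have hev : ∀ᶠ r in 𝓝[>] s, r < 1 := nhdsWithin_le_nhds (eventually_lt_nhds hs.2)
        filter_upwards [ks_slope_ev hder hc', hev, self_mem_nhdsWithin] with r hr hr1 hr2
        have hr2' : s < r := hr2
        have e1 := hm1 r x (by simpa using hx)
        rw [hV' x (-r) hx (by linarith) (by linarith [hs.1])] at e1
        rw [hV' x (-s) hx ht1 ht2] at hmx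
        simp only [hG]
        rw [hmx]
        linarith
      refine ks_1d (G := G) (a := -1) (b := 1) (by norm_num) (by rw [hp, hq]; norm_num) hCpos
        (by simp only [hG]; fun_prop) ?_ ?_ ?_ ?_
      · have e1 := hm1 (-1) x0 (by simp; linarith)
        simp only [neg_neg] at e1
        rw [hV' x0 1 (by linarith) (by norm_num) le_rfl] at e1
        have h2 : ‖x0 - z‖ ≤ 1/16 := by rwa [norm_sub_rev]
        have h3 := norm_nonneg (x0 - z)
        simp only [hG, hp]
        nlinarith
      · obtain ⟨x, hx, hmx⟩ := hm2 1
        have hx' : ‖x‖ ≤ 1 := by simpa using hx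
        rw [hV' x (-1) hx' le_rfl (by norm_num)] at hmx
        have := (hD x (-1) hx' le_rfl (by norm_num)).2
        have := sq_nonneg ‖x - z‖
        simp only [hG, hq, hmx]
        linarith
      · intro s hs hp1 hq1
        obtain ⟨x, hx, hmx⟩ := hm2 s
        have hx' : ‖x‖ ≤ 1 := by simpa using hx
        have ht1 : -1 ≤ -s := by linarith [hs.2]
        have ht2 : -s ≤ 1 := by linarith [hs.1]
        have hcon := hcontact z (-s) x (Or.inr ⟨hx', ht1, ht2, hz', by
          rw [← hmx]; exact hq1⟩) (by
          intro y hy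
          rw [← hmx]; exact hm1 s y (by simpa using hy)) ht1 ht2
        exact hslope s hs hp1 hq1 x hx' hmx C (by linarith [hcon.2.1])
      · intro s hs hp1 hq1 hsZ
        obtain ⟨x, hx, hmx⟩ := hm2 s
        have hx' : ‖x‖ ≤ 1 := by simpa using hx
        have ht1 : -1 ≤ -s := by linarith [hs.2]
        have ht2 : -s ≤ 1 := by linarith [hs.1]
        have htd : 1/2 < tD v x (-s) := by
          by_contra hcon
          push Not at hcon
          refine hsZ ⟨((z, -s), x), ⟨hx', ht1, ht2, hz', ?_, ?_, ?_, ?_⟩, rfl⟩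
          · intro y hy
            change V (x, -s) + 4 * ‖x - z‖ ^ 2 ≤ _
            rw [← hmx]; exact hm1 s y (by simpa using hy)
          · change p ≤ V (x, -s) + 4 * ‖x - z‖ ^ 2 - (-s + 1) / 2
            rw [← hmx]; exact hp1
          · change V (x, -s) + 4 * ‖x - z‖ ^ 2 - (-s + 1) / 2 ≤ q
            rw [← hmx]; exact hq1
          · change W (x, -s) ≤ 1/2
            rw [hW' x (-s) hx' ht1 ht2]; exact hcon
        have := hslope s hs hp1 hq1 x hx' hmx 0 (by linarith)
        simpa using this) (by
      intro t
      set st : Set (Eu n) := Prod.snd '' (Z3 ∩ {r | r.1.2 = t}) with hst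
      have hstc : IsCompact st :=
        (hZ3c.inter_right (isClosed_eq (by fun_prop) (by fun_prop))).image continuous_snd
      have hmem : ∀ x ∈ st, ∃ z, ((z, t), x) ∈ Z3 := by
        rintro x ⟨⟨⟨z, t'⟩, x'⟩, ⟨h1, h2⟩, h3⟩
        change t' = t at h2; change x' = x at h3
        subst h2 h3
        exact ⟨z, h1⟩
      have hstE : st ⊆ {z | (z, t) ∈ E} := by
        intro x hx
        obtain ⟨z, h⟩ := hmem x hx
        have h1 := hwin z t x (Or.inl h)
        have h2 := htop z t x h.2.2.2.1 h.1 h.2.1 h.2.2.1 h.2.2.2.2.1 h.2.2.2.2.2.1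
          h.2.2.2.2.2.2.1
        exact ⟨h1.1, h2.1, h2.2, h1.2.1⟩
      refine (ks_slice_area (f := fun y => v y t) (s := st) (C := C2) hstc.measurableSet
        ?_ ?_ ?_).trans ?_
      · intro x hx
        obtain ⟨z, h⟩ := hmem x hx
        exact hv.c2 x t (hD x t h.1 h.2.1 h.2.2.1).1
      · intro x hx
        obtain ⟨z, h⟩ := hmem x hx
        refine (hcontact z t x (Or.inl h) h.2.2.2.2.1 h.2.1 h.2.2.1).2.2 ?_
        have h8 := h.2.2.2.2.2.2.2
        simp only at h8
        rwa [hW' x t h.1 h.2.1 h.2.2.1] at h8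
      · rintro z ⟨⟨⟨z', t'⟩, x⟩, h1, h2⟩
        simp only [Prod.mk.injEq] at h2
        obtain ⟨h2, h3⟩ := h2
        subst h2 h3
        exact ⟨x, ⟨_, ⟨h1, rfl⟩, rfl⟩,
          (hcontact _ _ x (Or.inl h1) h1.2.2.2.2.1 h1.2.1 h1.2.2.1).1⟩
      · gcongr)
  have hbv : MeasureTheory.volume (closedBall x0 (1/16)) = ENNReal.ofReal b := by
    rw [hb, ENNReal.ofReal_toReal (isCompact_closedBall _ _).measure_ne_top]
    exact MeasureTheory.Measure.addHaar_closedBall_center _ _ _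
  rw [hbv] at hmain
  have hpq : 0 ≤ (q - p) / C := by rw [hp, hq]; positivity
  rw [← ENNReal.ofReal_mul hpq] at hmain
  have h9 : ENNReal.ofReal C2 * MeasureTheory.volume E
      < ENNReal.ofReal C2 * ENNReal.ofReal ((q - p) / C * b / C2) := by
    refine (ENNReal.mul_lt_mul_iff_right ?_ ENNReal.ofReal_ne_top).mpr hE
    simpa using hC2pos
  rw [← ENNReal.ofReal_mul hC2pos.le, mul_div_cancel₀ _ hC2pos.ne'] at h9
  exact absurd hmain (not_le.mpr h9)

/-! ### Growth of super-level sets -/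

/-- parabolic cylinder -/
def ksCyl (z : Eu n × ℝ) (r : ℝ) : Set (Eu n × ℝ) :=
  ball z.1 r ×ˢ Ioo (z.2 - r ^ 2) (z.2 + r ^ 2)

lemma ksCyl_open (z : Eu n × ℝ) (r : ℝ) : IsOpen (ksCyl z r) := isOpen_ball.prod isOpen_Ioo

lemma ks_vol_pre (x0 : Eu n) (t0 : ℝ) {r : ℝ} (hr : 0 < r) {S : Set (Eu n × ℝ)}
    (hS : MeasurableSet S) :
    MeasureTheory.volume ((fun p : Eu n × ℝ => ((x0 + r • p.1, t0 + r ^ 2 * p.2) : Eu n × ℝ)) ⁻¹' S)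
      = ENNReal.ofReal ((r ^ (n + 2))⁻¹) * MeasureTheory.volume S := by
  have hf : Measurable (fun y : Eu n => x0 + r • y) := by fun_prop
  have hg : Measurable (fun s : ℝ => t0 + r ^ 2 * s) := by fun_prop
  have h1 : MeasureTheory.Measure.map (fun y : Eu n => x0 + r • y) MeasureTheory.volume
      = ENNReal.ofReal ((r ^ n)⁻¹) • MeasureTheory.volume := by
    have : (fun y : Eu n => x0 + r • y) = (fun y => x0 + y) ∘ (fun y => r • y) := rfl
    rw [this, ← MeasureTheory.Measure.map_map (by fun_prop) (by fun_prop),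
      MeasureTheory.Measure.map_addHaar_smul _ hr.ne', MeasureTheory.Measure.map_smul,
      MeasureTheory.map_add_left_eq_self]
    have : 0 ≤ (r ^ n)⁻¹ := by positivity
    simp [abs_of_pos hr]
  have h2 : MeasureTheory.Measure.map (fun s : ℝ => t0 + r ^ 2 * s) MeasureTheory.volume
      = ENNReal.ofReal ((r ^ 2)⁻¹) • MeasureTheory.volume := by
    have : (fun s : ℝ => t0 + r ^ 2 * s) = (fun y => t0 + y) ∘ (fun y => r ^ 2 • y) := rfl
    rw [this, ← MeasureTheory.Measure.map_map (by fun_prop) (by fun_prop),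
      MeasureTheory.Measure.map_addHaar_smul _ (by positivity), MeasureTheory.Measure.map_smul,
      MeasureTheory.map_add_left_eq_self]
    simp
  have h3 := MeasureTheory.Measure.map_prod_map (MeasureTheory.volume : MeasureTheory.Measure (Eu n))
    (MeasureTheory.volume : MeasureTheory.Measure ℝ) hf hg
  rw [h1, h2] at h3
  have h4 : MeasureTheory.volume ((fun p : Eu n × ℝ =>
      ((x0 + r • p.1, t0 + r ^ 2 * p.2) : Eu n × ℝ)) ⁻¹' S)
      = MeasureTheory.Measure.map (Prod.map (fun y : Eu n => x0 + r • y) (fun s : ℝ => t0 + r ^ 2 * s))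
        (MeasureTheory.volume.prod MeasureTheory.volume) S := by
    rw [MeasureTheory.Measure.map_apply (hf.prodMap hg) hS]; rfl
  rw [h4, ← h3, MeasureTheory.Measure.prod_smul_left, MeasureTheory.Measure.prod_smul_right,
    ← MeasureTheory.Measure.volume_eq_prod]
  simp only [MeasureTheory.Measure.smul_apply, smul_eq_mul]
  rw [← mul_assoc, ← ENNReal.ofReal_mul (by positivity), pow_add, mul_inv]

lemma ks_vol_cyl (z : Eu n × ℝ) {r : ℝ} (hr : 0 < r) :
    MeasureTheory.volume (ksCyl z r)
      = ENNReal.ofReal (r ^ (n + 2)) * (2 * MeasureTheory.volume (ball (0 : Eu n) 1)) := by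
  unfold ksCyl
  rw [MeasureTheory.Measure.volume_eq_prod, MeasureTheory.Measure.prod_prod,
    MeasureTheory.Measure.addHaar_ball_of_pos _ _ hr, Real.volume_Ioo]
  have : z.2 + r ^ 2 - (z.2 - r ^ 2) = r ^ 2 * 2 := by ring
  rw [this, pow_add, ENNReal.ofReal_mul (by positivity), ENNReal.ofReal_mul (by positivity)]
  simp only [finrank_euclideanSpace, Fintype.card_fin]
  have h2 : ENNReal.ofReal 2 = 2 := by simp
  rw [h2]; ring

lemma ks_growth (n : ℕ) {θ Λ : ℝ} (hθ : 0 < θ) (hΛ : 0 ≤ Λ) :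
    ∃ κ > 0, ∀ M : ℝ, ∃ c > 0, ∀ (D : Set (Eu n × ℝ)) (v : Eu n → ℝ → ℝ),
      KSol θ Λ D v → ∀ (z : Eu n × ℝ) (r l : ℝ), 0 < r → r ≤ 1 → 0 < l →
      (∀ x t, ‖x - z.1‖ ≤ 3 * r → z.2 - r ^ 2 ≤ t → t ≤ z.2 + M * r ^ 2 → (x, t) ∈ D ∧ 0 ≤ v x t) →
      1 ≤ M →
      MeasureTheory.volume (ksCyl z r ∩ {p | v p.1 p.2 < l})
        < ENNReal.ofReal (κ * r ^ (n + 2)) →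
      ∀ x t, ‖x - z.1‖ ≤ 2 * r → z.2 + 2 * r ^ 2 ≤ t → t ≤ z.2 + M * r ^ 2 → c * l ≤ v x t := by
  obtain ⟨κ, hκ, hA⟩ := ks_ABP n hθ hΛ
  refine ⟨κ, hκ, fun M => ?_⟩
  obtain ⟨c, hc, hS⟩ := ks_spread n (s := 1/2) (R := 3) (R' := 2) (τ := 1) (Tm := M - 1) hθ hΛ
    (by norm_num) (by norm_num) (by norm_num) (by norm_num) (by norm_num)
  refine ⟨c / 2, by positivity, ?_⟩
  rintro D v hv ⟨x0, t0⟩ r l hr hr1 hl hD hM hvol x t hx ht1 ht2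
  simp only at hD hx ht1 ht2
  have hr2 : 0 < r ^ 2 := by positivity
  have hnorm : ∀ y : Eu n, ‖x0 + r • y - x0‖ = r * ‖y‖ := fun y => by
    rw [add_sub_cancel_left, norm_smul, Real.norm_of_nonneg hr.le]
  have hSm : IsOpen (ksCyl (x0, t0) r ∩ (D ∩ (fun p : Eu n × ℝ => v p.1 p.2) ⁻¹' Iio l)) :=
    (ksCyl_open _ _).inter (hv.cont.isOpen_inter_preimage hv.isOpen isOpen_Iio)
  have h1 := hA _ _ (hv.scale x0 t0 0 l⁻¹ r hr.le hr1) (by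
    intro y s hy hs1 hs2
    have := hD (x0 + r • y) (t0 + r ^ 2 * s) (by rw [hnorm]; nlinarith) (by nlinarith)
      (by nlinarith)
    exact ⟨this.1, by have := this.2; positivity⟩) (by
    have hsub : {p : Eu n × ℝ | ‖p.1‖ < 1 ∧ -1 < p.2 ∧ p.2 < 1 ∧
        0 + l⁻¹ * v (x0 + r • p.1) (t0 + r ^ 2 * p.2) < 1} ⊆
        (fun p : Eu n × ℝ => ((x0 + r • p.1, t0 + r ^ 2 * p.2) : Eu n × ℝ)) ⁻¹'
        (ksCyl (x0, t0) r ∩ (D ∩ (fun p : Eu n × ℝ => v p.1 p.2) ⁻¹' Iio l)) := by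
      rintro ⟨y, s⟩ ⟨hy, hs1, hs2, hw⟩
      simp only at hy hs1 hs2 hw
      refine ⟨⟨?_, ?_, ?_⟩, ?_, ?_⟩
      · simp only [mem_ball, dist_eq_norm, hnorm]; nlinarith
      · simp only; nlinarith
      · simp only; nlinarith
      · exact (hD (x0 + r • y) (t0 + r ^ 2 * s) (by rw [hnorm]; nlinarith) (by nlinarith)
          (by nlinarith)).1
      · change v (x0 + r • y) (t0 + r ^ 2 * s) < l
        rw [zero_add, inv_mul_lt_iff₀ hl] at hw
        linarith
    refine (MeasureTheory.measure_mono hsub).trans_lt ?_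
    rw [ks_vol_pre x0 t0 hr hSm.measurableSet]
    have h3 : MeasureTheory.volume (ksCyl (x0, t0) r ∩ (D ∩ (fun p : Eu n × ℝ => v p.1 p.2) ⁻¹' Iio l))
        < ENNReal.ofReal (κ * r ^ (n + 2)) := by
      refine (MeasureTheory.measure_mono ?_).trans_lt hvol
      rintro p ⟨hp1, hp2, hp3⟩
      exact ⟨hp1, hp3⟩
    have h4 : ENNReal.ofReal κ = ENNReal.ofReal ((r ^ (n + 2))⁻¹) * ENNReal.ofReal (κ * r ^ (n + 2)) := by
      rw [← ENNReal.ofReal_mul (by positivity)]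
      congr 1
      field_simp
    rw [h4]
    refine (ENNReal.mul_lt_mul_iff_right ?_ ENNReal.ofReal_ne_top).mpr h3
    have : 0 < (r ^ (n + 2))⁻¹ := by positivity
    simpa using this)
  have ht0 : ∃ T, t = t0 + r ^ 2 + r ^ 2 * T := ⟨(t - t0 - r ^ 2) / r ^ 2, by field_simp; ring⟩
  obtain ⟨T, rfl⟩ := ht0
  obtain ⟨y, rfl⟩ : ∃ y, x = x0 + r • y := ⟨r⁻¹ • (x - x0), by
    rw [smul_smul, mul_inv_cancel₀ hr.ne', one_smul]; abel⟩
  rw [hnorm] at hx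
  have hT1 : 1 ≤ T := by by_contra hcon; push Not at hcon; nlinarith
  have hT2 : T ≤ M - 1 := by by_contra hcon; push Not at hcon; nlinarith
  have h2 := hS _ _ (hv.scale x0 (t0 + r ^ 2) 0 (2 * l⁻¹) r hr.le hr1) T hT1 hT2 (by
    intro y s hy hs1 hs2
    have := hD (x0 + r • y) (t0 + r ^ 2 + r ^ 2 * s) (by rw [hnorm]; nlinarith) (by nlinarith)
      (by nlinarith)
    exact ⟨this.1, by have := this.2; positivity⟩) (by
    intro y hy
    have := h1 y hy
    simp only [mul_zero, mul_one, add_zero, zero_add] at this ⊢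
    linarith) y (by by_contra hcon; push Not at hcon; nlinarith)
  simp only [zero_add] at h2
  have h5 : c * l ≤ 2 * v (x0 + r • y) (t0 + r ^ 2 + r ^ 2 * T) := by
    calc c * l ≤ (2 * l⁻¹ * v (x0 + r • y) (t0 + r ^ 2 + r ^ 2 * T)) * l := by gcongr
      _ = _ := by field_simp
  linarith

/-! ### Covering arguments -/

lemma ks_cover (n : ℕ) {κ : ℝ} (hκ : 0 < κ) :
    ∃ σ > 0, ∀ (Γ : Set (Eu n × ℝ)) (r : Eu n × ℝ → ℝ) (Rb : ℝ),
      (∀ z ∈ Γ, 0 < r z ∧ r z ≤ Rb) →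
      (∀ z ∈ Γ, ENNReal.ofReal (κ * r z ^ (n + 2)) ≤ MeasureTheory.volume (ksCyl z (r z) \ Γ)) →
      MeasurableSet Γ →
      ENNReal.ofReal (1 + σ) * MeasureTheory.volume Γ
        ≤ MeasureTheory.volume (⋃ z ∈ Γ, ksCyl z (r z)) := by
  set ω : ℝ≥0∞ := 2 * MeasureTheory.volume (ball (0 : Eu n) 1) with hω
  have hω0 : ω ≠ 0 := by
    have : MeasureTheory.volume (ball (0 : Eu n) 1) ≠ 0 :=
      (Metric.measure_ball_pos _ _ one_pos).ne'
    simp [hω, this]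
  have hωt : ω ≠ ⊤ := ENNReal.mul_ne_top (by simp) MeasureTheory.measure_ball_lt_top.ne
  set w := ω.toReal with hw
  have hwpos : 0 < w := ENNReal.toReal_pos hω0 hωt
  have hωw : ω = ENNReal.ofReal w := (ENNReal.ofReal_toReal hωt).symm
  refine ⟨κ / (w * 3 ^ (n + 2)), by positivity, ?_⟩
  intro Γ r Rb hr hκr hΓ
  obtain ⟨u, hut, hud, hu⟩ := Vitali.exists_disjoint_subfamily_covering_enlargement
    (fun z => ksCyl z (r z)) Γ r 2 (by norm_num) (fun z hz => (hr z hz).1.le) Rb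
    (fun z hz => (hr z hz).2) (fun z hz => ⟨z, by
      have := (hr z hz).1
      refine ⟨mem_ball_self this, ?_, ?_⟩
      · nlinarith
      · nlinarith⟩)
  have hmem : ∀ z ∈ Γ, z ∈ ksCyl z (r z) := fun z hz => by
      have := (hr z hz).1
      refine ⟨mem_ball_self this, ?_, ?_⟩
      · nlinarith
      · nlinarith
  have huc : u.Countable := hud.countable_of_isOpen (fun z _ => ksCyl_open _ _)
    (fun z hz => ⟨z, hmem z (hut hz)⟩)
  set U1 := ⋃ z ∈ Γ, ksCyl z (r z) with hU1
  have hU1o : IsOpen U1 := isOpen_biUnion fun z _ => ksCyl_open _ _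
  have hΓU : Γ ⊆ U1 := fun z hz => mem_biUnion hz (hmem z hz)
  have hcov : Γ ⊆ ⋃ z ∈ u, ksCyl z (3 * r z) := by
    intro z hz
    obtain ⟨b, hb, ⟨y, hy1, hy2⟩, hle⟩ := hu z hz
    refine mem_biUnion hb ?_
    have hrz := (hr z hz).1
    have hrb := (hr b (hut hb)).1
    obtain ⟨a1, a2, a3⟩ := hy1
    obtain ⟨b1, b2, b3⟩ := hy2
    refine ⟨?_, ?_, ?_⟩
    · rw [mem_ball] at *
      have := dist_triangle z.1 y.1 b.1
      rw [dist_comm z.1 y.1] at this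
      linarith
    · nlinarith
    · nlinarith
  have e1 : MeasureTheory.volume Γ ≤ ∑' z : u, ENNReal.ofReal (w * 3 ^ (n+2)) *
      ENNReal.ofReal (r z ^ (n + 2)) := by
    refine (MeasureTheory.measure_mono hcov).trans
      ((MeasureTheory.measure_biUnion_le _ huc _).trans ?_)
    refine ENNReal.tsum_le_tsum fun z => ?_
    have hrz := (hr z (hut z.2)).1
    rw [ks_vol_cyl _ (by positivity), ← hω, hωw, ← ENNReal.ofReal_mul (by positivity),
      ← ENNReal.ofReal_mul (by positivity)]
    refine le_of_eq ?_
    congr 1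
    rw [mul_pow]; ring
  have e2 : ∑' z : u, ENNReal.ofReal κ * ENNReal.ofReal (r z ^ (n + 2))
      ≤ MeasureTheory.volume (U1 \ Γ) := by
    have h1 : (⋃ z ∈ u, (ksCyl z (r z) \ Γ)) ⊆ U1 \ Γ := by
      refine iUnion₂_subset fun z hz => ?_
      exact sdiff_subset_sdiff_left (subset_biUnion_of_mem (u := fun z => ksCyl z (r z)) (hut hz))
    refine le_trans ?_ (MeasureTheory.measure_mono h1)
    rw [MeasureTheory.measure_biUnion huc (hud.mono fun z => sdiff_subset)
      (fun z _ => (ksCyl_open _ _).measurableSet.diff hΓ)]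
    refine ENNReal.tsum_le_tsum fun z => ?_
    rw [← ENNReal.ofReal_mul hκ.le]
    exact hκr z (hut z.2)
  rw [ENNReal.tsum_mul_left] at e1 e2
  have e3 : ENNReal.ofReal (κ / (w * 3 ^ (n + 2))) * MeasureTheory.volume Γ
      ≤ MeasureTheory.volume (U1 \ Γ) := by
    refine le_trans ?_ e2
    refine (mul_le_mul_right e1 _).trans ?_
    rw [← mul_assoc, ← ENNReal.ofReal_mul (by positivity)]
    refine le_of_eq ?_
    congr 2
    field_simp
  have e4 : MeasureTheory.volume U1 = MeasureTheory.volume Γ + MeasureTheory.volume (U1 \ Γ) := by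
    rw [← MeasureTheory.measure_inter_add_sdiff U1 hΓ, inter_eq_self_of_subset_right hΓU]
  rw [e4, ENNReal.ofReal_add (by norm_num) (by positivity), add_mul, ENNReal.ofReal_one, one_mul]
  gcongr

/-- one dimensional stacking, finite families -/
lemma ks_stack1 {ι : Type*} (s : Finset ι) (a h : ι → ℝ) {m : ℝ} (hm : 0 < m)
    (hh : ∀ j ∈ s, 0 < h j) :
    ENNReal.ofReal (m / (m + 1)) * MeasureTheory.volume (⋃ j ∈ s, Ioo (a j) (a j + (m + 1) * h j))
      ≤ MeasureTheory.volume (⋃ j ∈ s, Ioo (a j + h j) (a j + (m + 1) * h j)) := by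
  classical
  set α : ℝ := m / (m + 1) with hα
  have hα0 : 0 < α := by positivity
  have hα1 : α ≤ 1 := by rw [hα, div_le_one (by positivity)]; linarith
  have hαm : α * (m + 1) = m := by rw [hα]; field_simp
  set e : ι → ℝ := fun j => a j + (m + 1) * h j with he
  set E := ⋃ j ∈ s, Ioo (a j) (e j) with hE
  set U := ⋃ j ∈ s, Ioo (a j + h j) (e j) with hU
  have hea : ∀ j ∈ s, a j < e j := fun j hj => by
    have := hh j hj
    simp only [he]; nlinarith
  have key : ∀ N : ℕ, ∀ t : ℝ, (s.filter (fun j => t < e j)).card ≤ N →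
      ENNReal.ofReal α * MeasureTheory.volume (E ∩ Ioi t) ≤ MeasureTheory.volume (U ∩ Ioi t) := by
    intro N
    induction N with
    | zero =>
      intro t ht
      have h0 : E ∩ Ioi t = ∅ := by
        ext y
        simp only [mem_inter_iff, mem_empty_iff_false, iff_false, hE, mem_iUnion, not_and]
        rintro ⟨j, hj, hy⟩ hty
        have hf : s.filter (fun j => t < e j) = ∅ := by
          simpa using ht
        have : j ∈ s.filter (fun j => t < e j) := by
          simp only [Finset.mem_filter]; exact ⟨hj, lt_trans hty hy.2⟩
        rw [hf] at this
        simp at this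
      rw [h0]; simp
    | succ N ih =>
      intro t ht
      -- a general step
      have step : ∀ t' ≥ t, ∀ j ∈ s, a j ≤ t' → t' < e j → ENNReal.ofReal α *
          MeasureTheory.volume (E ∩ Ioi t') ≤ MeasureTheory.volume (U ∩ Ioi t') := by
        intro t' htt j hj h1 h2
        have hhj := hh j hj
        have hcard : (s.filter (fun i => e j < e i)).card ≤ N := by
          have : (s.filter (fun i => e j < e i)) ⊂ (s.filter (fun i => t < e i)) := by
            rw [Finset.ssubset_iff_of_subset]
            · exact ⟨j, by simp only [Finset.mem_filter]; exact ⟨hj, by linarith⟩, by simp⟩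
            · intro i hi
              simp only [Finset.mem_filter] at hi ⊢
              exact ⟨hi.1, by linarith [hi.2]⟩
          have := Finset.card_lt_card this
          omega
        have hrec := ih (e j) hcard
        have hEsub : E ∩ Ioi t' ⊆ Ioc t' (e j) ∪ (E ∩ Ioi (e j)) := by
          rintro y ⟨hy1, hy2⟩
          rcases le_or_gt y (e j) with hle | hgt
          · exact Or.inl ⟨hy2, hle⟩
          · exact Or.inr ⟨hy1, hgt⟩
        have hUsub : Ioo (max t' (a j + h j)) (e j) ∪ (U ∩ Ioi (e j)) ⊆ U ∩ Ioi t' := by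
          rintro y (hy | ⟨hy1, hy2⟩)
          · refine ⟨mem_biUnion hj ⟨lt_of_le_of_lt (le_max_right _ _) hy.1, hy.2⟩,
              lt_of_le_of_lt (le_max_left _ _) hy.1⟩
          · exact ⟨hy1, lt_trans h2 hy2⟩
        have hdisj : Disjoint (Ioo (max t' (a j + h j)) (e j)) (U ∩ Ioi (e j)) := by
          rw [Set.disjoint_left]
          rintro y hy ⟨_, hy2⟩
          exact absurd hy.2 (not_lt.mpr (le_of_lt hy2))
        calc ENNReal.ofReal α * MeasureTheory.volume (E ∩ Ioi t')
            ≤ ENNReal.ofReal α * (MeasureTheory.volume (Ioc t' (e j)) +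
                MeasureTheory.volume (E ∩ Ioi (e j))) := by
              gcongr
              exact (MeasureTheory.measure_mono hEsub).trans (MeasureTheory.measure_union_le _ _)
          _ = ENNReal.ofReal (α * (e j - t')) + ENNReal.ofReal α *
                MeasureTheory.volume (E ∩ Ioi (e j)) := by
              rw [mul_add, Real.volume_Ioc, ENNReal.ofReal_mul hα0.le]
          _ ≤ ENNReal.ofReal (e j - max t' (a j + h j)) + MeasureTheory.volume (U ∩ Ioi (e j)) := by
              refine add_le_add (ENNReal.ofReal_le_ofReal ?_) hrec
              rcases le_total t' (a j + h j) with hl | hl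
              · rw [max_eq_right hl]
                have : e j - t' ≤ (m + 1) * h j := by simp only [he]; linarith
                calc α * (e j - t') ≤ α * ((m + 1) * h j) := by gcongr
                  _ = m * h j := by rw [← mul_assoc, hαm]
                  _ = _ := by simp only [he]; ring
              · rw [max_eq_left hl]
                nlinarith
          _ = MeasureTheory.volume (Ioo (max t' (a j + h j)) (e j)) +
                MeasureTheory.volume (U ∩ Ioi (e j)) := by rw [Real.volume_Ioo]
          _ = MeasureTheory.volume (Ioo (max t' (a j + h j)) (e j) ∪ (U ∩ Ioi (e j))) :=
              (MeasureTheory.measure_union' hdisj measurableSet_Ioo).symm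
          _ ≤ _ := MeasureTheory.measure_mono hUsub
      by_cases hex : ∃ j ∈ s, a j ≤ t ∧ t < e j
      · obtain ⟨j, hj, h1, h2⟩ := hex
        exact step t le_rfl j hj h1 h2
      · push Not at hex
        set F := s.filter (fun j => t < a j) with hF
        rcases F.eq_empty_or_nonempty with hFe | hFn
        · have h0 : E ∩ Ioi t = ∅ := by
            ext y
            simp only [mem_inter_iff, mem_empty_iff_false, iff_false, hE, mem_iUnion, not_and]
            rintro ⟨j, hj, hy⟩ hty
            have hja : a j ≤ t := by
              by_contra hcon
              have : j ∈ F := by simp only [hF, Finset.mem_filter]; exact ⟨hj, not_le.mp hcon⟩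
              rw [hFe] at this; simp at this
            have h3 := hex j hj hja
            exact absurd (lt_trans hty hy.2) (not_lt.mpr h3)
          rw [h0]; simp
        · obtain ⟨j, hjF, hjmin⟩ := F.exists_min_image a hFn
          simp only [hF, Finset.mem_filter] at hjF
          have hs := step (a j) hjF.2.le j hjF.1 le_rfl (hea j hjF.1)
          have hEeq : E ∩ Ioi t ⊆ E ∩ Ioi (a j) := by
            rintro y ⟨hy1, hy2⟩
            refine ⟨hy1, ?_⟩
            simp only [hE, mem_iUnion] at hy1
            obtain ⟨i, hi, hy⟩ := hy1
            by_cases hia : a i ≤ t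
            · exact absurd (lt_trans hy2 hy.2) (not_lt.mpr (hex i hi hia))
            · have := hjmin i (by simp only [hF, Finset.mem_filter]; exact ⟨hi, not_le.mp hia⟩)
              exact lt_of_le_of_lt this hy.1
          calc _ ≤ ENNReal.ofReal α * MeasureTheory.volume (E ∩ Ioi (a j)) := by
                gcongr
            _ ≤ _ := hs
            _ ≤ _ := by
                refine MeasureTheory.measure_mono ?_
                rintro y ⟨hy1, hy2⟩
                exact ⟨hy1, lt_trans hjF.2 hy2⟩
  -- choose t below everything
  obtain ⟨t, ht⟩ : ∃ t : ℝ, ∀ j ∈ s, t < a j := by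
    obtain ⟨t, ht⟩ := (s.image a).bddBelow
    refine ⟨t - 1, fun j hj => ?_⟩
    have := ht (by simpa using ⟨j, hj, rfl⟩ : a j ∈ (↑(s.image a) : Set ℝ))
    linarith
  have hEt : E ∩ Ioi t = E := by
    refine inter_eq_left.mpr ?_
    refine iUnion₂_subset fun j hj y hy => lt_trans (ht j hj) hy.1
  have := key _ t le_rfl
  rw [hEt] at this
  exact this.trans (MeasureTheory.measure_mono inter_subset_left)

/-- stacking, space-time, arbitrary families -/
lemma ks_stack (Γ : Set (Eu n × ℝ)) (r : Eu n × ℝ → ℝ) {m : ℝ} (hm : 0 < m)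
    (hr : ∀ z ∈ Γ, 0 < r z) :
    ENNReal.ofReal (m / (m + 1)) * MeasureTheory.volume
      (⋃ z ∈ Γ, ball z.1 (r z) ×ˢ Ioo (z.2 - r z ^ 2) (z.2 - r z ^ 2 + (m + 1) * (2 * r z ^ 2)))
      ≤ MeasureTheory.volume
      (⋃ z ∈ Γ, ball z.1 (r z) ×ˢ Ioo (z.2 - r z ^ 2 + 2 * r z ^ 2)
        (z.2 - r z ^ 2 + (m + 1) * (2 * r z ^ 2))) := by
  classical
  set FE : Eu n × ℝ → Set (Eu n × ℝ) := fun z =>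
    ball z.1 (r z) ×ˢ Ioo (z.2 - r z ^ 2) (z.2 - r z ^ 2 + (m + 1) * (2 * r z ^ 2)) with hFE
  set FU : Eu n × ℝ → Set (Eu n × ℝ) := fun z =>
    ball z.1 (r z) ×ˢ Ioo (z.2 - r z ^ 2 + 2 * r z ^ 2)
      (z.2 - r z ^ 2 + (m + 1) * (2 * r z ^ 2)) with hFU
  have hfin : ∀ s : Finset (Eu n × ℝ), (∀ z ∈ s, z ∈ Γ) →
      ENNReal.ofReal (m / (m + 1)) * MeasureTheory.volume (⋃ z ∈ s, FE z)
        ≤ MeasureTheory.volume (⋃ z ∈ s, FU z) := by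
    intro s hs
    have m1 : MeasurableSet (⋃ z ∈ s, FE z) :=
      (isOpen_biUnion fun z _ => isOpen_ball.prod isOpen_Ioo).measurableSet
    have m2 : MeasurableSet (⋃ z ∈ s, FU z) :=
      (isOpen_biUnion fun z _ => isOpen_ball.prod isOpen_Ioo).measurableSet
    rw [MeasureTheory.Measure.volume_eq_prod, MeasureTheory.Measure.prod_apply m1,
      MeasureTheory.Measure.prod_apply m2,
      ← MeasureTheory.lintegral_const_mul _ (measurable_measure_prodMk_left m1)]
    refine MeasureTheory.lintegral_mono fun x => ?_
    have h1 := ks_stack1 (s.filter (fun z => x ∈ ball z.1 (r z))) (fun z => z.2 - r z ^ 2)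
      (fun z => 2 * r z ^ 2) hm (fun z hz => by
        have := hr z (hs z (Finset.mem_filter.mp hz).1)
        positivity)
    have e1 : Prod.mk x ⁻¹' (⋃ z ∈ s, FE z) = ⋃ z ∈ s.filter (fun z => x ∈ ball z.1 (r z)),
        Ioo (z.2 - r z ^ 2) (z.2 - r z ^ 2 + (m + 1) * (2 * r z ^ 2)) := by
      ext t
      simp only [hFE, mem_preimage, mem_iUnion, mem_prod, Finset.mem_filter, exists_prop, and_assoc]
    have e2 : Prod.mk x ⁻¹' (⋃ z ∈ s, FU z) = ⋃ z ∈ s.filter (fun z => x ∈ ball z.1 (r z)),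
        Ioo (z.2 - r z ^ 2 + 2 * r z ^ 2) (z.2 - r z ^ 2 + (m + 1) * (2 * r z ^ 2)) := by
      ext t
      simp only [hFU, mem_preimage, mem_iUnion, mem_prod, Finset.mem_filter, exists_prop, and_assoc]
    simp only [e1, e2]
    exact h1
  have hEo : IsOpen (⋃ z ∈ Γ, FE z) := isOpen_biUnion fun z _ => isOpen_ball.prod isOpen_Ioo
  rw [hEo.measure_eq_iSup_isCompact, ENNReal.mul_iSup]
  refine iSup_le fun K => ?_
  rw [ENNReal.mul_iSup]
  refine iSup_le fun hKE => ?_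
  rw [ENNReal.mul_iSup]
  refine iSup_le fun hK => ?_
  obtain ⟨s, hs, hsf, hcov⟩ := hK.elim_finite_subcover_image (b := Γ) (c := FE)
    (fun z _ => isOpen_ball.prod isOpen_Ioo) hKE
  have := hfin hsf.toFinset (fun z hz => hs (by simpa using hz))
  simp only [Set.Finite.mem_toFinset] at this
  refine le_trans ?_ (this.trans (MeasureTheory.measure_mono ?_))
  · gcongr
  · exact biUnion_subset_biUnion_left hs

/-! ### Crawling of super-level sets -/

def ksG (v : Eu n → ℝ → ℝ) (ρ a b l : ℝ) : Set (Eu n × ℝ) :=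
  {p | ‖p.1‖ < ρ ∧ a < p.2 ∧ p.2 < b ∧ l < v p.1 p.2}

lemma ksG_open {θ Λ : ℝ} {D : Set (Eu n × ℝ)} {v : Eu n → ℝ → ℝ} (hv : KSol θ Λ D v)
    {ρ a b l : ℝ} (hD : ∀ x t, ‖x‖ < ρ → a < t → t < b → (x, t) ∈ D) : IsOpen (ksG v ρ a b l) := by
  have h1 : IsOpen (D ∩ (fun r : Eu n × ℝ => v r.1 r.2) ⁻¹' Ioi l) :=
    hv.cont.isOpen_inter_preimage hv.isOpen isOpen_Ioi
  have h2 : IsOpen {r : Eu n × ℝ | ‖r.1‖ < ρ ∧ a < r.2 ∧ r.2 < b} := by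
    refine ks_open_and (isOpen_lt (by fun_prop) (by fun_prop)) ?_
    refine ks_open_and (isOpen_lt (by fun_prop) (by fun_prop)) ?_
    exact (isOpen_lt (by fun_prop) (by fun_prop))
  have : ksG v ρ a b l = {r : Eu n × ℝ | ‖r.1‖ < ρ ∧ a < r.2 ∧ r.2 < b} ∩
      (D ∩ (fun r : Eu n × ℝ => v r.1 r.2) ⁻¹' Ioi l) := by
    ext ⟨x, t⟩
    constructor
    · rintro ⟨a1, a2, a3, a4⟩
      exact ⟨⟨a1, a2, a3⟩, hD x t a1 a2 a3, a4⟩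
    · rintro ⟨⟨a1, a2, a3⟩, _, a4⟩
      exact ⟨a1, a2, a3, a4⟩
  rw [this]; exact h2.inter h1

lemma ks_step (n : ℕ) {θ Λ : ℝ} (hθ : 0 < θ) (hΛ : 0 ≤ Λ) :
    ∃ σ > 0, ∃ m > 0, ∃ c > 0, c ≤ 1 ∧ ∀ (D : Set (Eu n × ℝ)) (v : Eu n → ℝ → ℝ), KSol θ Λ D v →
      ∀ ρ a b d rb l : ℝ, 0 < rb → rb ≤ 1 → 3 * rb ≤ d → (4 + 8 * m) * rb ^ 2 ≤ d → 0 < l →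
      (∀ x t, ‖x‖ ≤ ρ + d → a - d ≤ t → t ≤ b + d → (x, t) ∈ D ∧ 0 ≤ v x t) →
      (∃ z ∈ ksG v ρ a b l, ∀ x, ‖x - z.1‖ ≤ 2 * rb → c * l ≤ v x (z.2 + 2 * rb ^ 2)) ∨
      ENNReal.ofReal (1 + σ) * MeasureTheory.volume (ksG v ρ a b l)
        ≤ MeasureTheory.volume (ksG v (ρ + d) a (b + d) (c * l)) := by
  obtain ⟨κ, hκ, hgr⟩ := ks_growth n hθ hΛ
  obtain ⟨σ, hσ, hcov⟩ := ks_cover n hκ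
  set m : ℝ := 2 / σ + 1 with hm
  have hmpos : 0 < m := by positivity
  obtain ⟨c, hc, hgr⟩ := hgr (4 + 8 * m)
  have hmin : min c 1 / 2 ≤ c / 2 := by gcongr; exact min_le_left _ _
  have hminpos : 0 < min c 1 / 2 := by positivity
  refine ⟨σ / 2, by positivity, m, hmpos, min c 1 / 2, hminpos, ?_, ?_⟩
  · have := min_le_right c 1
    linarith
  intro D v hv ρ a b d rb l hrb hrb1 hrbd hrbd2 hl hD
  have hdpos : 0 < d := by linarith
  set Γ := ksG v ρ a b l with hΓ
  have hΓo : IsOpen Γ := ksG_open hv fun x t h1 h2 h3 =>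
    (hD x t (by linarith) (by linarith) (by linarith)).1
  have hgood : ∀ z ∈ Γ, ∀ r, 0 < r → r ≤ rb →
      MeasureTheory.volume (ksCyl z r \ Γ) < ENNReal.ofReal (κ * r ^ (n + 2)) →
      ∀ x t, ‖x - z.1‖ ≤ 2 * r → z.2 + 2 * r ^ 2 ≤ t → t ≤ z.2 + (4 + 8 * m) * r ^ 2 → c * l ≤ v x t := by
    intro z hz r hr hrr hvol
    have hr2 : r ^ 2 ≤ rb ^ 2 := by gcongr
    refine hgr D v hv z r l hr (hrr.trans hrb1) hl ?_ (by linarith) ?_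
    · intro x t hx h1 h2
      refine hD x t ?_ ?_ ?_
      · have : ‖x‖ ≤ ‖x - z.1‖ + ‖z.1‖ := by
          simpa using norm_add_le (x - z.1) z.1
        linarith [hz.1]
      · have := hz.2.1
        nlinarith
      · have := hz.2.2.1
        nlinarith
    · refine (MeasureTheory.measure_mono ?_).trans_lt hvol
      rintro p ⟨hp1, hp2⟩
      refine ⟨hp1, fun hp3 => ?_⟩
      have h1 : v p.1 p.2 < l := hp2
      exact absurd h1 (not_lt.mpr hp3.2.2.2.le)
  by_cases hex : ∃ z ∈ Γ, MeasureTheory.volume (ksCyl z rb \ Γ) < ENNReal.ofReal (κ * rb ^ (n + 2))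
  · left
    obtain ⟨z, hz, hvol⟩ := hex
    refine ⟨z, hz, fun x hx => ?_⟩
    have h1 := hgood z hz rb hrb le_rfl hvol x (z.2 + 2 * rb ^ 2) hx le_rfl (by nlinarith)
    have h2 : min c 1 / 2 ≤ c := by linarith
    calc min c 1 / 2 * l ≤ c * l := by gcongr
      _ ≤ _ := h1
  · right
    push Not at hex
    have hr : ∀ z : Eu n × ℝ, ∃ r, z ∈ Γ → (0 < r ∧ 2 * r ≤ rb ∧
        MeasureTheory.volume (ksCyl z r \ Γ) < ENNReal.ofReal (κ * r ^ (n + 2)) ∧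
        ENNReal.ofReal (κ * (2 * r) ^ (n + 2)) ≤ MeasureTheory.volume (ksCyl z (2 * r) \ Γ)) := by
      intro z
      by_cases hz : z ∈ Γ
      swap
      · exact ⟨0, fun h => absurd h hz⟩
      have hj : ∃ j : ℕ, MeasureTheory.volume (ksCyl z (rb * (1/2) ^ j) \ Γ)
          < ENNReal.ofReal (κ * (rb * (1/2) ^ j) ^ (n + 2)) := by
        obtain ⟨e, he, hsub⟩ := Metric.isOpen_iff.mp hΓo z hz
        obtain ⟨j, hj⟩ := exists_pow_lt_of_lt_one (y := (1/2 : ℝ)) he (by norm_num)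
        refine ⟨j, ?_⟩
        have hp : (0:ℝ) < (1/2) ^ j := by positivity
        have hle : rb * (1/2) ^ j ≤ (1/2) ^ j := by nlinarith
        have hp2 : 0 < rb * (1/2) ^ j := by positivity
        have h1 : (1/2 : ℝ) ^ j ≤ 1 := pow_le_one₀ (by norm_num) (by norm_num)
        have : ksCyl z (rb * (1/2) ^ j) \ Γ = ∅ := by
          rw [sdiff_eq_empty]
          rintro p ⟨hp1, hp3⟩
          apply hsub
          rw [mem_ball] at hp1 ⊢
          rw [Prod.dist_eq, max_lt_iff]
          refine ⟨by linarith, ?_⟩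
          rw [Real.dist_eq, abs_lt]
          have : (rb * (1/2) ^ j) ^ 2 ≤ (1/2) ^ j := by nlinarith
          constructor <;> linarith [hp3.1, hp3.2]
        rw [this]
        simp only [MeasureTheory.measure_empty, ENNReal.ofReal_pos]
        positivity
      classical
      set j := Nat.find hj with hjd
      have hj0 : j ≠ 0 := by
        intro h0
        have := Nat.find_spec hj
        rw [← hjd, h0] at this
        simp only [pow_zero, mul_one] at this
        exact absurd this (not_lt.mpr (hex z hz))
      obtain ⟨i, hi⟩ := Nat.exists_eq_succ_of_ne_zero hj0
      refine ⟨rb * (1/2) ^ j, fun _ => ⟨by positivity, ?_, Nat.find_spec hj, ?_⟩⟩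
      · rw [hi, pow_succ]
        have : (1/2 : ℝ) ^ i ≤ 1 := pow_le_one₀ (by norm_num) (by norm_num)
        nlinarith
      · have h1 := Nat.find_min hj (m := i) (by omega)
        have h2 : 2 * (rb * (1/2) ^ j) = rb * (1/2) ^ i := by rw [hi, pow_succ]; ring
        rw [h2]
        exact not_lt.mp h1
    choose r hr using hr
    have e1 := hcov Γ (fun z => 2 * r z) rb (fun z hz => ⟨by linarith [(hr z hz).1], (hr z hz).2.1⟩)
      (fun z hz => (hr z hz).2.2.2) hΓo.measurableSet
    have e2 := ks_stack Γ (fun z => 2 * r z) hmpos (fun z hz => by linarith [(hr z hz).1])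
    have hsub1 : (⋃ z ∈ Γ, ksCyl z (2 * r z)) ⊆ (⋃ z ∈ Γ, ball z.1 (2 * r z) ×ˢ
        Ioo (z.2 - (2 * r z) ^ 2) (z.2 - (2 * r z) ^ 2 + (m + 1) * (2 * (2 * r z) ^ 2))) := by
      refine iUnion₂_mono fun z hz => ?_
      refine prod_mono le_rfl (Ioo_subset_Ioo le_rfl ?_)
      have := sq_nonneg (2 * r z)
      nlinarith
    have hsub2 : (⋃ z ∈ Γ, ball z.1 (2 * r z) ×ˢ Ioo (z.2 - (2 * r z) ^ 2 + 2 * (2 * r z) ^ 2)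
        (z.2 - (2 * r z) ^ 2 + (m + 1) * (2 * (2 * r z) ^ 2))) ⊆
        ksG v (ρ + d) a (b + d) (min c 1 / 2 * l) := by
      refine iUnion₂_subset fun z hz => ?_
      rintro ⟨x, t⟩ ⟨hx, ht1, ht2⟩
      obtain ⟨hr0, hr1, hr2, _⟩ := hr z hz
      simp only [mem_ball, dist_eq_norm] at hx
      simp only at ht1 ht2
      have hr3 : r z ^ 2 ≤ rb ^ 2 := by gcongr; linarith
      have hr4 : 0 < r z ^ 2 := by positivity
      have hle : t ≤ z.2 + (4 + 8 * m) * r z ^ 2 := by nlinarith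
      have h1 := hgood z hz (r z) hr0 (by linarith) hr2 x t hx.le (by nlinarith) hle
      obtain ⟨z1, z2, z3, z4⟩ := hz
      refine ⟨?_, ?_, ?_, ?_⟩
      · simp only
        have : ‖x‖ ≤ ‖x - z.1‖ + ‖z.1‖ := by
          simpa using norm_add_le (x - z.1) z.1
        linarith
      · simp only; nlinarith
      · simp only; nlinarith
      · simp only
        nlinarith
    have hfac : 1 + σ / 2 ≤ m / (m + 1) * (1 + σ) := by
      rw [div_mul_eq_mul_div, le_div_iff₀ (by positivity)]
      have : m * σ = 2 + σ := by rw [hm]; field_simp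
      nlinarith
    calc ENNReal.ofReal (1 + σ / 2) * MeasureTheory.volume Γ
        ≤ ENNReal.ofReal (m / (m + 1) * (1 + σ)) * MeasureTheory.volume Γ := by gcongr
      _ = ENNReal.ofReal (m / (m + 1)) * (ENNReal.ofReal (1 + σ) * MeasureTheory.volume Γ) := by
          rw [ENNReal.ofReal_mul (by positivity), mul_assoc]
      _ ≤ _ := by
          refine le_trans ?_ (e2.trans (MeasureTheory.measure_mono hsub2))
          gcongr
          exact e1.trans (MeasureTheory.measure_mono hsub1)

lemma ks_onesided (n : ℕ) {θ Λ K : ℝ} (hθ : 0 < θ) (hΛ : 0 ≤ Λ) (hK : 0 ≤ K) {w0 : ℝ}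
    (hw0 : 0 < w0) :
    ∃ η > 0, ∀ (D : Set (Eu n × ℝ)) (v : Eu n → ℝ → ℝ), KSol θ Λ D v →
      (∀ x t, ‖x‖ ≤ K + 6 → 0 ≤ t → t ≤ 5 → (x, t) ∈ D ∧ 0 ≤ v x t) →
      ENNReal.ofReal w0 ≤ MeasureTheory.volume (ksG v 1 1 2 (1/3)) →
      ∀ x, ‖x‖ ≤ K → η ≤ v x 5 := by
  obtain ⟨σ, hσ, m, hm, c, hc, hc1, hstep⟩ := ks_step n hθ hΛ
  set W : ℝ := (MeasureTheory.volume (ball (0 : Eu n) 2 ×ˢ Ioo (1:ℝ) 3)).toReal with hW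
  have hWt : MeasureTheory.volume (ball (0 : Eu n) 2 ×ˢ Ioo (1:ℝ) 3) ≠ ⊤ := by
    rw [MeasureTheory.Measure.volume_eq_prod, MeasureTheory.Measure.prod_prod]
    exact ENNReal.mul_ne_top MeasureTheory.measure_ball_lt_top.ne (by simp)
  obtain ⟨N, hN⟩ := pow_unbounded_of_one_lt (W / w0) (by linarith : 1 < 1 + σ)
  rw [div_lt_iff₀ hw0] at hN
  set d : ℝ := 1 / (N + 1) with hd
  have hdpos : 0 < d := by positivity
  have hd1 : d ≤ 1 := by rw [hd, div_le_one (by positivity)]; linarith [(Nat.cast_nonneg N : (0:ℝ) ≤ N)]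
  have hkd : ∀ k : ℕ, k ≤ N → k * d + d ≤ 1 := by
    intro k hk
    have : (k:ℝ) ≤ N := by exact_mod_cast hk
    have h2 : k * d + d = (k + 1) / (N + 1) := by rw [hd]; ring
    rw [h2, div_le_one (by positivity)]; linarith
  set rb : ℝ := d / (4 + 8 * m) with hrb
  have hrbpos : 0 < rb := by positivity
  have hrbd : (4 + 8 * m) * rb = d := by rw [hrb]; field_simp
  have hrb4 : 4 * rb ≤ d := by nlinarith
  have hrb1 : rb ≤ 1/4 := by linarith
  obtain ⟨cs, hcs, hspread⟩ := ks_spread n (s := 2 * rb) (R := K + 4) (R' := K + 2) (τ := 1)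
    (Tm := 4) hθ hΛ (by positivity) (by linarith) (by linarith) (by linarith) (by norm_num)
  refine ⟨cs * (c ^ (N + 1) * (1/3)), by positivity, ?_⟩
  intro D v hv hD h0 x hx
  have hex : ∃ k : ℕ, k < N ∧ ∃ z ∈ ksG v (1 + k * d) 1 (2 + k * d) (c ^ k * (1/3)),
      ∀ x, ‖x - z.1‖ ≤ 2 * rb → c * (c ^ k * (1/3)) ≤ v x (z.2 + 2 * rb ^ 2) := by
    by_contra hcon
    push Not at hcon
    have hind : ∀ k : ℕ, k ≤ N → ENNReal.ofReal ((1 + σ) ^ k * w0) ≤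
        MeasureTheory.volume (ksG v (1 + k * d) 1 (2 + k * d) (c ^ k * (1/3))) := by
      intro k
      induction k with
      | zero => intro _; simpa using h0
      | succ k ih =>
        intro hk
        have h1 := ih (by omega)
        have hkd' := hkd k (by omega)
        rcases hstep D v hv (1 + k * d) 1 (2 + k * d) d rb (c ^ k * (1/3)) hrbpos (by linarith)
          (by linarith) (by nlinarith) (by positivity) (by
            intro x t hx ht1 ht2
            exact hD x t (by linarith) (by linarith) (by linarith)) with h2 | h2
        · obtain ⟨z, hz, hzz⟩ := h2
          obtain ⟨y, hy1, hy2⟩ := hcon k (by omega) z hz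
          exact absurd (hzz y hy1) (not_le.mpr hy2)
        · have e1 : 1 + ((k + 1 : ℕ) : ℝ) * d = 1 + k * d + d := by push_cast; ring
          have e2 : 2 + ((k + 1 : ℕ) : ℝ) * d = 2 + k * d + d := by push_cast; ring
          have e3 : c ^ (k + 1) * (1/3) = c * (c ^ k * (1/3)) := by ring
          rw [e1, e2, e3]
          refine le_trans ?_ h2
          have e4 : (1 + σ) ^ (k + 1) * w0 = (1 + σ) * ((1 + σ) ^ k * w0) := by ring
          rw [e4, ENNReal.ofReal_mul (by positivity)]
          gcongr
    have h1 := hind N le_rfl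
    have h2 : ksG v (1 + N * d) 1 (2 + N * d) (c ^ N * (1/3)) ⊆ ball (0 : Eu n) 2 ×ˢ Ioo (1:ℝ) 3 := by
      rintro ⟨y, s⟩ ⟨a1, a2, a3, _⟩
      have := hkd N le_rfl
      simp only at a1 a2 a3
      refine ⟨?_, a2, ?_⟩
      · simp only [mem_ball, dist_zero_right]; linarith
      · simp only; linarith
    have h3 := h1.trans (MeasureTheory.measure_mono h2)
    rw [← ENNReal.ofReal_toReal hWt, ← hW, ENNReal.ofReal_le_ofReal_iff ENNReal.toReal_nonneg] at h3
    linarith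
  obtain ⟨k, hk, z, ⟨z1, z2, z3, _⟩, hz⟩ := hex
  have hkd' := hkd k hk.le
  set T0 := z.2 + 2 * rb ^ 2 with hT0
  have hT0a : 1 < T0 := by rw [hT0]; nlinarith
  have hT0b : T0 < 4 := by rw [hT0]; nlinarith
  set l : ℝ := c * (c ^ k * (1/3)) with hl
  have hlpos : 0 < l := by positivity
  have h5 := hspread _ _ (hv.scale z.1 T0 0 l⁻¹ 1 (by norm_num) le_rfl) (5 - T0) (by linarith)
    (by linarith) (by
      intro y s hy hs1 hs2
      have hn : ‖z.1 + (1:ℝ) • y‖ ≤ ‖z.1‖ + ‖y‖ := by rw [one_smul]; exact norm_add_le _ _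
      have := hD (z.1 + (1:ℝ) • y) (T0 + 1 ^ 2 * s) (by linarith) (by linarith) (by linarith)
      exact ⟨this.1, by have := this.2; positivity⟩) (by
      intro y hy
      have := hz (z.1 + (1:ℝ) • y) (by simpa using hy)
      simp only [mul_zero, add_zero, zero_add]
      rw [le_inv_mul_iff₀ hlpos]
      linarith) (x - z.1) (by
      have := norm_sub_le x z.1
      linarith)
  simp only [zero_add, one_smul, one_pow, one_mul, add_sub_cancel] at h5
  rw [le_inv_mul_iff₀ hlpos] at h5
  refine le_trans ?_ h5
  have h6 : c ^ (N + 1) ≤ c ^ (k + 1) := pow_le_pow_of_le_one hc.le hc1 (by omega)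
  have h7 : l = c ^ (k + 1) * (1/3) := by rw [hl]; ring
  rw [h7]
  nlinarith

/-- interior oscillation dichotomy -/
lemma ks_KS (n : ℕ) {θ Λ K : ℝ} (hθ : 0 < θ) (hΛ : 0 ≤ Λ) (hK : 0 ≤ K) :
    ∃ η > 0, ∀ (D : Set (Eu n × ℝ)) (v : Eu n → ℝ → ℝ), KSol θ Λ D v →
      (∀ x t, ‖x‖ ≤ K + 6 → 0 ≤ t → t ≤ 5 → (x, t) ∈ D ∧ 0 ≤ v x t ∧ v x t ≤ 1) →
      (∀ x, ‖x‖ ≤ K → η ≤ v x 5) ∨ (∀ x, ‖x‖ ≤ K → v x 5 ≤ 1 - η) := by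
  set Q : Set (Eu n × ℝ) := ball 0 1 ×ˢ Ioo 1 2 with hQ
  have hQt : MeasureTheory.volume Q ≠ ⊤ := by
    rw [hQ, MeasureTheory.Measure.volume_eq_prod, MeasureTheory.Measure.prod_prod]
    exact ENNReal.mul_ne_top MeasureTheory.measure_ball_lt_top.ne (by simp)
  have hQ0 : MeasureTheory.volume Q ≠ 0 := by
    refine ((isOpen_ball.prod isOpen_Ioo).measure_pos _ ⟨(0, 3/2), ?_⟩).ne'
    refine ⟨by simp, ?_⟩
    constructor <;> norm_num
  set w := (MeasureTheory.volume Q).toReal with hw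
  have hwpos : 0 < w := ENNReal.toReal_pos hQ0 hQt
  obtain ⟨η, hη, h⟩ := ks_onesided n (w0 := w / 2) hθ hΛ hK (by positivity)
  refine ⟨η, hη, ?_⟩
  intro D v hv hD
  by_cases h1 : ENNReal.ofReal (w / 2) ≤ MeasureTheory.volume (ksG v 1 1 2 (1/3))
  · left
    exact h D v hv (fun x t a b c => ⟨(hD x t a b c).1, (hD x t a b c).2.1⟩) h1
  · right
    have h2 := h D _ (hv.affine 1 (-1)) (fun x t a b c => ⟨(hD x t a b c).1, by
      linarith [(hD x t a b c).2.2]⟩) (by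
      have hsub : Q ⊆ ksG v 1 1 2 (1/3) ∪ ksG (fun y s => 1 + -1 * v y s) 1 1 2 (1/3) := by
        rintro ⟨y, s⟩ ⟨hy, hs1, hs2⟩
        simp only [mem_ball, dist_zero_right] at hy
        by_cases hc : 1/3 < v y s
        · exact Or.inl ⟨hy, hs1, hs2, hc⟩
        · refine Or.inr ⟨hy, hs1, hs2, ?_⟩
          simp only
          linarith
      have h3 := (MeasureTheory.measure_mono (μ := MeasureTheory.volume) hsub).trans
        (MeasureTheory.measure_union_le _ _)
      by_contra hcon
      push Not at h1 hcon
      have h4 := h3.trans_lt (ENNReal.add_lt_add h1 hcon)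
      rw [← ENNReal.ofReal_add (by positivity) (by positivity), add_halves, hw,
        ENNReal.ofReal_toReal hQt] at h4
      exact lt_irrefl _ h4)
    intro x hx
    linarith [h2 x hx]

/-! ### Solutions of `(L)` and barriers -/

structure LSol (θ ε : ℝ) (b : Eu n → Eu n) (Ω : Set (Eu n)) (u : Eu n → ℝ → ℝ) : Prop where
  isOpen : IsOpen Ω
  cont : ContinuousOn (fun p : Eu n × ℝ => u p.1 p.2) (Ω ×ˢ Ioi 0)
  contT : ContinuousOn (fun p : Eu n × ℝ => tD u p.1 p.2) (Ω ×ˢ Ioi 0)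
  c2 : ∀ x ∈ Ω, ∀ t, 0 < t → ContDiffAt ℝ 2 (fun y => u y t) x
  dt : ∀ x ∈ Ω, ∀ t, 0 < t → DifferentiableAt ℝ (u x) t
  eqn : ∀ x ∈ Ω, ∀ t, 0 < t → ∃ a, memS θ a ∧
    tD u x t = ε * trMul a (sH u x t) + dotp (b x) (sG u x t)

lemma LSol.neg {θ ε : ℝ} {b : Eu n → Eu n} {Ω : Set (Eu n)} {u : Eu n → ℝ → ℝ}
    (h : LSol θ ε b Ω u) : LSol θ ε b Ω (fun x t => -u x t) := by
  have hcov : (fun (x : Eu n) (t : ℝ) => -u x t)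
      = fun y s => 0 + (-1) * u (0 + (1:ℝ) • y) (0 + 1 * s) := by
    funext x t; simp
  have hx : ∀ x : Eu n, 0 + (1:ℝ) • x = x := fun x => by simp
  have ht : ∀ t : ℝ, 0 + 1 * t = t := fun t => by simp
  have hT : ∀ x ∈ Ω, ∀ t, 0 < t → tD (fun x t => -u x t) x t = - tD u x t := by
    intro x hxΩ t h0
    rw [hcov, (ks_cov_tD (by rw [hx, ht]; exact h.dt x hxΩ t h0)).2, hx, ht]; ring
  refine ⟨h.isOpen, h.cont.neg, ?_, ?_, ?_, ?_⟩
  · exact h.contT.neg.congr fun p hp => hT p.1 hp.1 p.2 hp.2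
  · intro x hxΩ t h0
    exact (h.c2 x hxΩ t h0).neg
  · intro x hxΩ t h0
    exact (h.dt x hxΩ t h0).neg
  · intro x hxΩ t h0
    obtain ⟨a, ha, he⟩ := h.eqn x hxΩ t h0
    refine ⟨a, ha, ?_⟩
    rw [hT x hxΩ t h0, hcov, ks_cov_sH (by rw [hx, ht]; exact h.c2 x hxΩ t h0),
      ks_cov_sG (by rw [hx, ht]; exact h.c2 x hxΩ t h0), hx, ht, he, ks_trMul_smul,
      ks_dotp_smul_right]
    ring

lemma LSol.toK {θ ε L R : ℝ} {b : Eu n → Eu n} {Ω : Set (Eu n)} {u : Eu n → ℝ → ℝ}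
    (h : LSol θ ε b Ω u) (hε : 0 < ε) (hL : 0 ≤ L) (hb : ∀ x, ‖b x‖ ≤ L * ‖x‖) (s c k : ℝ) :
    KSol θ (L * R) ({p : Eu n × ℝ | ‖p.1‖ < R} ∩
      ((fun p : Eu n × ℝ => ((0 + √ε • p.1, s + 1 * p.2) : Eu n × ℝ)) ⁻¹' (Ω ×ˢ Ioi 0)))
      (fun y τ => c + k * u (0 + √ε • y) (s + 1 * τ)) := by
  have hcc := ks_cov_cont (n := n) 0 s (√ε) 1
  have hsε : 0 < √ε := Real.sqrt_pos.mpr hε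
  refine ⟨(isOpen_lt (by fun_prop) (by fun_prop)).inter
    ((h.isOpen.prod isOpen_Ioi).preimage hcc), ?_, ?_, ?_, ?_, ?_⟩
  · have := h.cont.comp hcc.continuousOn (mapsTo_preimage _ _)
    exact (continuousOn_const.add (continuousOn_const.mul this)).mono inter_subset_right
  · have := h.contT.comp hcc.continuousOn (mapsTo_preimage _ _)
    refine ((continuousOn_const (c := k * 1)).mul this).mono inter_subset_right |>.congr ?_
    intro p hp
    exact (ks_cov_tD (h.dt _ hp.2.1 _ hp.2.2)).2
  · intro x t hp
    exact (ks_cov_space (h.c2 _ hp.2.1 _ hp.2.2)).1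
  · intro x t hp
    exact (ks_cov_tD (h.dt _ hp.2.1 _ hp.2.2)).1
  · intro x t hp
    obtain ⟨a, ha, he⟩ := h.eqn _ hp.2.1 _ hp.2.2
    refine ⟨a, (√ε)⁻¹ • b (0 + √ε • x), ha, ?_, ?_⟩
    · have h1 := hb (0 + √ε • x)
      rw [norm_smul, Real.norm_of_nonneg (by positivity), inv_mul_le_iff₀ hsε]
      refine h1.trans ?_
      rw [zero_add, norm_smul, Real.norm_of_nonneg hsε.le]
      have h2 : ‖x‖ < R := hp.1
      have : √ε * (L * R) = L * (√ε * R) := by ring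
      rw [this]
      gcongr
    · have hs2 : √ε ^ 2 = ε := Real.sq_sqrt hε.le
      rw [(ks_cov_tD (h.dt _ hp.2.1 _ hp.2.2)).2, ks_cov_sH (h.c2 _ hp.2.1 _ hp.2.2),
        ks_cov_sG (h.c2 _ hp.2.1 _ hp.2.2), he, ks_trMul_smul, ks_dotp_smul_right,
        ks_dotp_smul_left, hs2]
      simp only
      field_simp

/-- quadratic lower barriers in tubes -/
lemma ks_barrier {θ ε : ℝ} (hθ : 0 < θ) (hε : 0 < ε) {b : Eu n → Eu n} {Ω : Set (Eu n)}
    {u : Eu n → ℝ → ℝ} (hu : LSol θ ε b Ω u) {s s1 R m : ℝ} (hs : 0 < s) (hss : s ≤ s1)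
    {α β α' β' : ℝ → ℝ} {z z' : ℝ → Eu n}
    (hα : ∀ t ∈ Icc s s1, HasDerivAt α (α' t) t) (hβ : ∀ t ∈ Icc s s1, HasDerivAt β (β' t) t)
    (hz : ∀ t ∈ Icc s s1, HasDerivAt z (z' t) t)
    (hβ0 : ∀ t ∈ Icc s s1, 0 < β t)
    (hΩ : ∀ t ∈ Icc s s1, ∀ x, ‖x - z t‖ ≤ R → x ∈ Ω)
    (hαβ : ∀ t ∈ Icc s s1, (2 * (n * θ⁻¹) + 1) * ε * β t ≤ α' t)
    (hdr : ∀ t ∈ Icc s s1, ∀ x, ‖x - z t‖ ≤ R →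
      2 * β t * inner ℝ (b x + z' t) (x - z t) ≤ β' t * ‖x - z t‖ ^ 2)
    (hinit : ∀ x, ‖x - z s‖ ≤ R → m - α s - β s * ‖x - z s‖ ^ 2 ≤ u x s)
    (hlat : ∀ t ∈ Icc s s1, ∀ x, ‖x - z t‖ = R → m - α t - β t * ‖x - z t‖ ^ 2 ≤ u x t) :
    ∀ t ∈ Icc s s1, ∀ x, ‖x - z t‖ ≤ R → m - α t - β t * ‖x - z t‖ ^ 2 ≤ u x t := by
  have hzc : ContinuousOn z (Icc s s1) := fun t ht => (hz t ht).continuousAt.continuousWithinAt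
  have hαc : ContinuousOn α (Icc s s1) := fun t ht => (hα t ht).continuousAt.continuousWithinAt
  have hβc : ContinuousOn β (Icc s s1) := fun t ht => (hβ t ht).continuousAt.continuousWithinAt
  set K : Set (Eu n × ℝ) := (fun q : Eu n × ℝ => ((z q.2 + q.1, q.2) : Eu n × ℝ)) ''
    (closedBall 0 R ×ˢ Icc s s1) with hK
  have hmemK : ∀ x t, (x, t) ∈ K ↔ ‖x - z t‖ ≤ R ∧ t ∈ Icc s s1 := by
    intro x t
    constructor
    · rintro ⟨⟨y, τ⟩, ⟨h1, h2⟩, h3⟩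
      simp only [Prod.mk.injEq] at h3
      obtain ⟨h3, rfl⟩ := h3
      rw [← h3]
      exact ⟨by simpa using h1, h2⟩
    · rintro ⟨h1, h2⟩
      exact ⟨(x - z t, t), ⟨by simpa using h1, h2⟩, by simp⟩
  have hsnd : ContinuousOn (fun q : Eu n × ℝ => z q.2) (closedBall 0 R ×ˢ Icc s s1) :=
    hzc.comp continuousOn_snd (fun q hq => hq.2)
  have hKc : IsCompact K := ((isCompact_closedBall _ _).prod isCompact_Icc).image_of_continuousOn
    ((hsnd.add continuousOn_fst).prodMk continuousOn_snd)
  have hK2 : MapsTo Prod.snd K (Icc s s1) := fun q hq => ((hmemK q.1 q.2).mp hq).2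
  have hKΩ : K ⊆ Ω ×ˢ Ioi 0 := by
    rintro ⟨x, t⟩ hq
    obtain ⟨h1, h2⟩ := (hmemK x t).mp hq
    exact ⟨hΩ t h2 x h1, lt_of_lt_of_le hs h2.1⟩
  have hmain := ks_MP (A := fun t => m - α t) (B := fun t => -β t) (G := fun _ => 0) (z := z)
    hθ.le hε.le hKc (hu.cont.mono hKΩ) (by
      have c1 : ContinuousOn (fun q : Eu n × ℝ => z q.2) K := hzc.comp continuousOn_snd hK2
      have c2 : ContinuousOn (fun q : Eu n × ℝ => α q.2) K := hαc.comp continuousOn_snd hK2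
      have c3 : ContinuousOn (fun q : Eu n × ℝ => β q.2) K := hβc.comp continuousOn_snd hK2
      have c4 : ContinuousOn (fun q : Eu n × ℝ => ‖q.1 - z q.2‖ ^ 2) K :=
        (continuousOn_fst.sub c1).norm.pow 2
      exact ((continuousOn_const.sub c2).add (c3.neg.mul c4)).add
        (continuousOn_const.mul (c4.pow 2))) (by
      rintro ⟨x, t⟩ hq
      obtain ⟨h1, h2⟩ := (hmemK x t).mp hq
      simp only [zero_mul, add_zero, mul_zero]
      rcases h1.lt_or_eq with h1' | h1'
      swap
      · left
        have := hlat t h2 x h1'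
        linarith
      rcases h2.1.lt_or_eq with h3 | h3
      swap
      · left
        subst h3
        have := hinit x h1
        linarith
      right
      have hxΩ := hΩ t h2 x h1
      have ht0 : 0 < t := lt_trans hs h3
      obtain ⟨a, ha, he⟩ := hu.eqn x hxΩ t ht0
      refine ⟨?_, ?_, hu.c2 x hxΩ t ht0, hu.dt x hxΩ t ht0,
        -α' t + (-β' t * ‖x - z t‖ ^ 2 + -β t * (2 * inner ℝ (x - z t) (-z' t))), a, b x, ?_, ha,
        he.ge, ?_⟩
      · have : ∀ᶠ y in 𝓝 x, ‖y - z t‖ < R :=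
          (isOpen_lt (by fun_prop) (by fun_prop)).mem_nhds h1'
        filter_upwards [this] with y hy
        exact (hmemK y t).mpr ⟨hy.le, h2⟩
      · have c1 : ContinuousAt (fun τ => ‖x - z τ‖) t :=
          (continuousAt_const.sub (hz t h2).continuousAt).norm
        have e1 : ∀ᶠ τ in 𝓝[<] t, ‖x - z τ‖ < R :=
          nhdsWithin_le_nhds (c1.eventually_lt continuousAt_const h1')
        have e2 : ∀ᶠ τ in 𝓝[<] t, s < τ := nhdsWithin_le_nhds (eventually_gt_nhds h3)
        filter_upwards [e1, e2, self_mem_nhdsWithin] with τ t1 t2 t3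
        have t3' : τ < t := t3
        exact (hmemK x τ).mpr ⟨t1.le, t2.le, t3'.le.trans h2.2⟩
      · have d1 : HasDerivAt (fun τ => x - z τ) (-z' t) t := by
          simpa using (hz t h2).const_sub x
        have d2 := d1.norm_sq
        have d3 := ((hα t h2).const_sub m).add ((hβ t h2).neg.mul d2)
        exact d3
      · have htr := ks_trace_le ha
        have hb0 := hβ0 t h2
        have q1 := hαβ t h2
        have q2 := hdr t h2 x h1
        rw [inner_add_left] at q2
        have i1 : inner ℝ (x - z t) (z' t) = inner ℝ (z' t) (x - z t) := real_inner_comm _ _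
        rw [inner_neg_right, i1]
        have q3 : ε * β t * a.trace ≤ ε * β t * (n * θ⁻¹) := by gcongr
        have q4 : 0 < ε * β t := by positivity
        nlinarith)
  intro t ht x hx
  have := hmain (x, t) ((hmemK x t).mpr ⟨hx, ht⟩)
  simp only [zero_mul, add_zero] at this
  linarith

/-! ### Local oscillation decay near the origin -/

lemma ks_stay {θ ε b₀ C₀ : ℝ} (hθ : 0 < θ) (hε : 0 < ε) (hb₀ : 0 < b₀) (hC₀ : 0 < C₀)
    {b : Eu n → Eu n} {Ω : Set (Eu n)} {u : Eu n → ℝ → ℝ} (hu : LSol θ ε b Ω u)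
    (hbd : ∀ x ∈ Ω, ∀ t, 0 < t → |u x t| ≤ C₀) {ρ μ s T m : ℝ} (hρ : 0 < ρ)
    (hco : ∀ x, ‖x‖ ≤ ρ → inner ℝ (b x) x ≤ -b₀ * ‖x‖ ^ 2)
    (hΩ : ∀ x, ‖x‖ ≤ ρ → x ∈ Ω) (hμ : 0 ≤ μ) (hμ1 : μ ≤ 1) (hs : 0 < s) (hT : 0 ≤ T)
    (hεT : (2 * (n * θ⁻¹) + 1) * ε * T ≤ μ ^ 2 * ρ ^ 2)
    (hm : ∀ x, ‖x‖ ≤ ρ → m ≤ u x s) :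
    ∀ t ∈ Icc s (s + T), ∀ x, ‖x‖ ≤ μ * ρ → m - 4 * C₀ * μ ^ 2 ≤ u x t := by
  have hmC : m ≤ C₀ := by
    have h0 : ‖(0 : Eu n)‖ ≤ ρ := by simpa using hρ.le
    exact (hm 0 h0).trans ((le_abs_self _).trans (hbd 0 (hΩ 0 h0) s hs))
  set c := 2 * ((n:ℝ) * θ⁻¹) + 1 with hc
  have hc0 : 0 < c := by positivity
  have key := ks_barrier hθ hε hu (s := s) (s1 := s + T) (R := ρ) (m := m) hs (by linarith)
    (α := fun t => c * ε * (2 * C₀ / ρ ^ 2) * (t - s)) (β := fun _ => 2 * C₀ / ρ ^ 2)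
    (α' := fun _ => c * ε * (2 * C₀ / ρ ^ 2)) (β' := fun _ => 0) (z := fun _ => 0)
    (z' := fun _ => 0)
    (fun t _ => by simpa using ((hasDerivAt_id t).sub_const s).const_mul (c * ε * (2 * C₀ / ρ ^ 2)))
    (fun t _ => hasDerivAt_const t _) (fun t _ => hasDerivAt_const t _)
    (fun t _ => by positivity) (fun t _ x hx => hΩ x (by simpa using hx))
    (fun t _ => le_rfl)
    (fun t _ x hx => by
      simp only [sub_zero, add_zero, zero_mul] at hx ⊢
      have h1 := hco x hx
      have h2 : 0 ≤ b₀ * ‖x‖ ^ 2 := by positivity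
      have h3 : 0 < 2 * (2 * C₀ / ρ ^ 2) := by positivity
      have h4 : inner ℝ (b x) x ≤ 0 := by linarith
      exact mul_nonpos_of_nonneg_of_nonpos h3.le h4)
    (fun x hx => by
      simp only [sub_zero, sub_self, mul_zero] at hx ⊢
      have : 0 ≤ 2 * C₀ / ρ ^ 2 * ‖x‖ ^ 2 := by positivity
      linarith [hm x hx])
    (fun t ht x hx => by
      simp only [sub_zero] at hx ⊢
      rw [hx, div_mul_cancel₀ _ (by positivity)]
      have h1 := (abs_le.mp (hbd x (hΩ x hx.le) t (lt_of_lt_of_le hs ht.1))).1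
      have h2 : 0 ≤ c * ε * (2 * C₀ / ρ ^ 2) * (t - s) :=
        mul_nonneg (by positivity) (by linarith [ht.1])
      linarith)
  intro t ht x hx
  have h1 := key t ht x (by simp only [sub_zero]; nlinarith)
  simp only [sub_zero] at h1
  have h2 : c * ε * (2 * C₀ / ρ ^ 2) * (t - s) ≤ 2 * C₀ * μ ^ 2 := by
    have : c * ε * (t - s) ≤ μ ^ 2 * ρ ^ 2 := by
      refine le_trans ?_ hεT
      have : t - s ≤ T := by linarith [ht.2]
      gcongr
    calc c * ε * (2 * C₀ / ρ ^ 2) * (t - s) = (2 * C₀ / ρ ^ 2) * (c * ε * (t - s)) := by ring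
      _ ≤ (2 * C₀ / ρ ^ 2) * (μ ^ 2 * ρ ^ 2) := by gcongr
      _ = 2 * C₀ * μ ^ 2 := by field_simp
  have h3 : 2 * C₀ / ρ ^ 2 * ‖x‖ ^ 2 ≤ 2 * C₀ * μ ^ 2 := by
    calc 2 * C₀ / ρ ^ 2 * ‖x‖ ^ 2 ≤ 2 * C₀ / ρ ^ 2 * (μ * ρ) ^ 2 := by gcongr
      _ = 2 * C₀ * μ ^ 2 := by field_simp
  linarith

lemma ks_land {θ ε b₀ : ℝ} (hθ : 0 < θ) (hε : 0 < ε) (hb₀ : 0 < b₀)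
    {b : Eu n → Eu n} {Ω : Set (Eu n)} {u : Eu n → ℝ → ℝ} (hu : LSol θ ε b Ω u)
    {R K μ s s1 m H : ℝ} (hR : 0 < R) (hK : 1 ≤ K) (hH : 0 < H)
    (hco : ∀ x, ‖x‖ ≤ R → inner ℝ (b x) x ≤ -b₀ * ‖x‖ ^ 2)
    (hΩ : ∀ x, ‖x‖ ≤ R → x ∈ Ω) (hμ : 0 ≤ μ) (hμ1 : μ ≤ 1 / 4) (hs : 0 < s) (hss : s ≤ s1)
    (hcK : (2 * (n * θ⁻¹) + 1) / (2 * b₀ * K ^ 2) ≤ 1 / 4)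
    (hεT : (2 * (n * θ⁻¹) + 1) * ε * (s1 - s) ≤ R ^ 2 / 16)
    (hexp : Real.exp (-(2 * b₀ * (s1 - s))) * R ^ 2 ≤ ε / 8)
    (hm : ∀ t ∈ Icc s s1, ∀ x, ‖x‖ ≤ R → m ≤ u x t)
    (hm2 : ∀ x, ‖x‖ ≤ K * √ε → m + H ≤ u x s) :
    ∀ x, ‖x‖ ≤ μ * R → m + H / 2 ≤ u x s1 := by
  set c := 2 * ((n:ℝ) * θ⁻¹) + 1 with hc
  have hc0 : 0 < c := by positivity
  have hK0 : 0 < K := by linarith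
  have hse : √ε ^ 2 = ε := Real.sq_sqrt hε.le
  set e : ℝ → ℝ := fun t => Real.exp (-(2 * b₀ * (t - s))) with he
  have hed : ∀ t, HasDerivAt e (-(2 * b₀) * e t) t := by
    intro t
    have h1 : HasDerivAt (fun t => -(2 * b₀ * (t - s))) (-(2 * b₀)) t := by
      simpa using (((hasDerivAt_id t).sub_const s).const_mul (2 * b₀)).fun_neg
    have := h1.exp
    rw [mul_comm]
    exact this
  have he0 : ∀ t, 0 < e t := fun t => Real.exp_pos _
  have he1 : ∀ t, s ≤ t → e t ≤ 1 := fun t ht =>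
    Real.exp_le_one_iff.mpr (by have := mul_nonneg hb₀.le (sub_nonneg.mpr ht); linarith)
  have hes : e s = 1 := by simp [he]
  have hαn : ∀ t, s ≤ t → 0 ≤ H * (c / (2 * b₀ * K ^ 2) * (1 - e t) + c * ε * (t - s) / R ^ 2) := by
    intro t ht
    have := he1 t ht
    have a1 : 0 ≤ c / (2 * b₀ * K ^ 2) * (1 - e t) := mul_nonneg (by positivity) (by linarith)
    have a2 : 0 ≤ c * ε * (t - s) / R ^ 2 :=
      div_nonneg (mul_nonneg (by positivity) (by linarith)) (by positivity)
    positivity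
  have hβR : ∀ t, 0 < H * (e t / (K ^ 2 * ε) + 1 / R ^ 2) := fun t => by
    have := he0 t; positivity
  have key := ks_barrier hθ hε hu (s := s) (s1 := s1) (R := R) (m := m + H) hs hss
    (α := fun t => H * (c / (2 * b₀ * K ^ 2) * (1 - e t) + c * ε * (t - s) / R ^ 2))
    (β := fun t => H * (e t / (K ^ 2 * ε) + 1 / R ^ 2))
    (α' := fun t => H * (c / (2 * b₀ * K ^ 2) * (-(-(2 * b₀) * e t)) + c * ε * 1 / R ^ 2))
    (β' := fun t => H * (-(2 * b₀) * e t / (K ^ 2 * ε))) (z := fun _ => 0)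
    (z' := fun _ => 0)
    (fun t _ => ((((hed t).const_sub 1).const_mul _).add
      ((((hasDerivAt_id t).sub_const s).const_mul (c * ε)).div_const (R ^ 2))).const_mul H)
    (fun t _ => (((hed t).div_const (K ^ 2 * ε)).add_const (1 / R ^ 2)).const_mul H)
    (fun t _ => hasDerivAt_const t _)
    (fun t _ => hβR t) (fun t _ x hx => hΩ x (by simpa using hx))
    (fun t _ => le_of_eq (by simp only [← hc]; field_simp))
    (fun t _ x hx => by
      simp only [sub_zero, add_zero] at hx ⊢
      have h1 := hco x hx
      calc 2 * (H * (e t / (K ^ 2 * ε) + 1 / R ^ 2)) * inner ℝ (b x) x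
          ≤ 2 * (H * (e t / (K ^ 2 * ε) + 1 / R ^ 2)) * (-b₀ * ‖x‖ ^ 2) :=
            mul_le_mul_of_nonneg_left h1 (by linarith [hβR t])
        _ = H * (-(2 * b₀) * e t / (K ^ 2 * ε)) * ‖x‖ ^ 2
            - 2 * H * b₀ * ‖x‖ ^ 2 / R ^ 2 := by ring
        _ ≤ _ := by
          have : 0 ≤ 2 * H * b₀ * ‖x‖ ^ 2 / R ^ 2 := by positivity
          linarith)
    (fun x hx => by
      simp only [sub_zero] at hx ⊢
      have h1 := hαn s le_rfl
      rcases le_total ‖x‖ (K * √ε) with h2 | h2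
      · have := hm2 x h2
        have h3 := mul_nonneg (hβR s).le (sq_nonneg ‖x‖)
        linarith
      · have h3 := hm s ⟨le_rfl, hss⟩ x hx
        have h4 : K ^ 2 * ε ≤ ‖x‖ ^ 2 := by
          rw [← hse, ← mul_pow]; gcongr
        have h5 : H ≤ H * (e s / (K ^ 2 * ε) + 1 / R ^ 2) * ‖x‖ ^ 2 := by
          rw [hes]
          have a1 : 1 ≤ 1 / (K ^ 2 * ε) * ‖x‖ ^ 2 := by
            rw [one_div, ← div_eq_inv_mul, one_le_div (by positivity)]; exact h4
          have a2 : 0 ≤ 1 / R ^ 2 * ‖x‖ ^ 2 := by positivity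
          nlinarith
        linarith)
    (fun t ht x hx => by
      simp only [sub_zero] at hx ⊢
      have h1 := hαn t ht.1
      have h3 := hm t ht x hx.le
      have h5 : H ≤ H * (e t / (K ^ 2 * ε) + 1 / R ^ 2) * ‖x‖ ^ 2 := by
        rw [hx]
        have a1 : 1 / R ^ 2 * R ^ 2 = 1 := by field_simp
        have a2 : 0 ≤ e t / (K ^ 2 * ε) * R ^ 2 := by have := he0 t; positivity
        nlinarith
      linarith)
  intro x hx
  have hμR : μ * R ≤ R := by nlinarith
  have h1 := key s1 ⟨hss, le_rfl⟩ x (by simpa using hx.trans hμR)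
  simp only [sub_zero] at h1
  have hx2 : ‖x‖ ^ 2 ≤ R ^ 2 / 16 := by
    have : ‖x‖ ≤ R / 4 := by nlinarith
    calc ‖x‖ ^ 2 ≤ (R / 4) ^ 2 := by gcongr
      _ = _ := by ring
  have t1 : c / (2 * b₀ * K ^ 2) * (1 - e s1) ≤ 1 / 4 := by
    have := he0 s1
    have h3 : 0 ≤ c / (2 * b₀ * K ^ 2) := by positivity
    nlinarith
  have t2 : c * ε * (s1 - s) / R ^ 2 ≤ 1 / 16 := by
    rw [div_le_iff₀ (by positivity)]; linarith
  have t3 : e s1 / (K ^ 2 * ε) * ‖x‖ ^ 2 ≤ 1 / 128 := by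
    have h3 : e s1 * ‖x‖ ^ 2 ≤ ε / 128 := by
      calc e s1 * ‖x‖ ^ 2 ≤ e s1 * (R ^ 2 / 16) := mul_le_mul_of_nonneg_left hx2 (he0 s1).le
        _ = e s1 * R ^ 2 / 16 := by ring
        _ ≤ _ := by linarith
    have h4 : 1 ≤ K ^ 2 := one_le_pow₀ hK
    rw [div_mul_eq_mul_div, div_le_iff₀ (by positivity)]
    nlinarith
  have t4 : 1 / R ^ 2 * ‖x‖ ^ 2 ≤ 1 / 16 := by
    rw [one_div, ← div_eq_inv_mul, div_le_iff₀ (by positivity)]; linarith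
  have t5 : H * (c / (2 * b₀ * K ^ 2) * (1 - e s1) + c * ε * (s1 - s) / R ^ 2)
      + H * (e s1 / (K ^ 2 * ε) + 1 / R ^ 2) * ‖x‖ ^ 2 ≤ H * (1 / 2) := by
    have : H * (c / (2 * b₀ * K ^ 2) * (1 - e s1) + c * ε * (s1 - s) / R ^ 2)
      + H * (e s1 / (K ^ 2 * ε) + 1 / R ^ 2) * ‖x‖ ^ 2
      = H * (c / (2 * b₀ * K ^ 2) * (1 - e s1) + c * ε * (s1 - s) / R ^ 2 +
        (e s1 / (K ^ 2 * ε) * ‖x‖ ^ 2 + 1 / R ^ 2 * ‖x‖ ^ 2)) := by ring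
    rw [this]
    gcongr
    linarith
  linarith

lemma ks_onestep {θ ε b₀ C₀ L K η : ℝ} (hθ : 0 < θ) (hε : 0 < ε) (hb₀ : 0 < b₀) (hC₀ : 0 < C₀)
    (hL : 0 ≤ L) (hK : 1 ≤ K) (hη : 0 < η)
    {b : Eu n → Eu n} {Ω : Set (Eu n)} {u : Eu n → ℝ → ℝ} (hu : LSol θ ε b Ω u)
    (hb : ∀ x, ‖b x‖ ≤ L * ‖x‖)
    (hKS : ∀ (D : Set (Eu n × ℝ)) (v : Eu n → ℝ → ℝ), KSol θ (L * (K + 7)) D v →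
      (∀ x t, ‖x‖ ≤ K + 6 → 0 ≤ t → t ≤ 5 → (x, t) ∈ D ∧ 0 ≤ v x t ∧ v x t ≤ 1) →
      (∀ x, ‖x‖ ≤ K → η ≤ v x 5) ∨ (∀ x, ‖x‖ ≤ K → v x 5 ≤ 1 - η))
    (hcK : (2 * (n * θ⁻¹) + 1) / (2 * b₀ * K ^ 2) ≤ 1 / 4)
    (hbd : ∀ x ∈ Ω, ∀ t, 0 < t → |u x t| ≤ C₀) {ρ μ s T m M : ℝ} (hρ : 0 < ρ)
    (hco : ∀ x, ‖x‖ ≤ ρ → inner ℝ (b x) x ≤ -b₀ * ‖x‖ ^ 2)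
    (hΩ : ∀ x, ‖x‖ ≤ ρ → x ∈ Ω) (hμ : 0 < μ) (hμ1 : μ ≤ 1 / 4) (hs : 0 < s) (hT : 6 ≤ T)
    (hεT : (2 * (n * θ⁻¹) + 1) * ε * T ≤ μ ^ 4 * ρ ^ 2)
    (hKε : (K + 7) * √ε ≤ μ * ρ)
    (hexp : Real.exp (-(2 * b₀ * (T - 5))) * ρ ^ 2 ≤ ε / 8)
    (hmM : ∀ x, ‖x‖ ≤ ρ → m ≤ u x s ∧ u x s ≤ M) :
    ∃ m1 M1, M1 - m1 ≤ (1 - η / 2) * (M - m + 8 * C₀ * μ ^ 2) ∧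
      ∀ x, ‖x‖ ≤ μ ^ 2 * ρ → m1 ≤ u x (s + T) ∧ u x (s + T) ≤ M1 := by
  have hμ2 : μ ^ 2 ≤ 1 / 16 := by nlinarith
  have hsε : 0 < √ε := Real.sqrt_pos.mpr hε
  have hc0 : 0 < 2 * ((n:ℝ) * θ⁻¹) + 1 := by positivity
  have hεT' : (2 * (n * θ⁻¹) + 1) * ε * T ≤ μ ^ 2 * ρ ^ 2 := by
    refine hεT.trans ?_
    have : 0 ≤ μ ^ 2 * ρ ^ 2 := by positivity
    nlinarith
  have hμρ : μ * ρ ≤ ρ := by nlinarith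
  have hneg := hu.neg
  have hbdn : ∀ x ∈ Ω, ∀ t, 0 < t → |(fun x t => -u x t) x t| ≤ C₀ := by
    intro x hx t ht; simpa using hbd x hx t ht
  have lo := ks_stay hθ hε hb₀ hC₀ hu hbd hρ hco hΩ hμ.le (by linarith) hs (by linarith) hεT'
    (fun x hx => (hmM x hx).1)
  have hi := ks_stay hθ hε hb₀ hC₀ hneg hbdn hρ hco hΩ hμ.le (by linarith) hs (by linarith) hεT'
    (m := -M) (fun x hx => neg_le_neg (hmM x hx).2)
  have hmM0 : m ≤ M := (hmM 0 (by simpa using hρ.le)).1.trans (hmM 0 (by simpa using hρ.le)).2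
  set m' := m - 4 * C₀ * μ ^ 2 with hm'
  set D' := M - m + 8 * C₀ * μ ^ 2 with hD'
  have hD0 : 0 < D' := by have : 0 < 8 * C₀ * μ ^ 2 := by positivity
                          linarith
  have hi' : ∀ t ∈ Icc s (s + T), ∀ x, ‖x‖ ≤ μ * ρ → u x t ≤ m' + D' := by
    intro t ht x hx
    have := hi t ht x hx
    rw [hm', hD']; linarith
  have ks := hKS _ _ (hu.toK (R := K + 7) hε hL hb s (-m' / D') (1 / D')) (by
    intro x t hx h0 h5
    have hxs : ‖0 + √ε • x‖ ≤ μ * ρ := by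
      rw [zero_add, norm_smul, Real.norm_of_nonneg hsε.le]
      refine le_trans ?_ hKε
      rw [mul_comm]
      gcongr
      linarith
    have ht : s + 1 * t ∈ Icc s (s + T) := ⟨by linarith, by linarith⟩
    have h1 := lo _ ht _ hxs
    have h2 := hi' _ ht _ hxs
    refine ⟨⟨?_, hΩ _ (hxs.trans hμρ), ?_⟩, ?_, ?_⟩
    · change ‖x‖ < K + 7
      linarith
    · change 0 < s + 1 * t
      linarith
    · have : -m' / D' + 1 / D' * u (0 + √ε • x) (s + 1 * t)
          = (u (0 + √ε • x) (s + 1 * t) - m') / D' := by ring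
      rw [this]
      exact div_nonneg (by linarith) hD0.le
    · have : -m' / D' + 1 / D' * u (0 + √ε • x) (s + 1 * t)
          = (u (0 + √ε • x) (s + 1 * t) - m') / D' := by ring
      rw [this, div_le_one hD0]
      linarith)
  have resc : ∀ x : Eu n, ‖x‖ ≤ K * √ε → ‖(√ε)⁻¹ • x‖ ≤ K ∧ 0 + √ε • ((√ε)⁻¹ • x) = x := by
    intro x hx
    constructor
    · rw [norm_smul, norm_inv, Real.norm_of_nonneg hsε.le, inv_mul_le_iff₀ hsε, mul_comm]
      exact hx
    · rw [zero_add, smul_inv_smul₀ hsε.ne']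
  have hR : 0 < μ * ρ := by positivity
  have l1 : (2 * (n * θ⁻¹) + 1) * ε * (s + T - (s + 5)) ≤ (μ * ρ) ^ 2 / 16 := by
    have a1 : (2 * (n * θ⁻¹) + 1) * ε * (s + T - (s + 5)) ≤ (2 * (n * θ⁻¹) + 1) * ε * T := by
      gcongr
      linarith
    have a2 : μ ^ 4 * ρ ^ 2 = μ ^ 2 * (μ * ρ) ^ 2 := by ring
    have a3 : μ ^ 2 * (μ * ρ) ^ 2 ≤ 1 / 16 * (μ * ρ) ^ 2 := by gcongr
    linarith
  have l2 : Real.exp (-(2 * b₀ * (s + T - (s + 5)))) * (μ * ρ) ^ 2 ≤ ε / 8 := by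
    refine le_trans ?_ hexp
    have : s + T - (s + 5) = T - 5 := by ring
    rw [this]
    gcongr
  have hsub : ∀ t, t ∈ Icc (s + 5) (s + T) → t ∈ Icc s (s + T) := fun t ht =>
    ⟨by linarith [ht.1], ht.2⟩
  have hpow : ∀ x : Eu n, ‖x‖ ≤ μ ^ 2 * ρ → ‖x‖ ≤ μ * (μ * ρ) := fun x hx => by
    rw [← mul_assoc, ← sq]; exact hx
  have hpow2 : ∀ x : Eu n, ‖x‖ ≤ μ ^ 2 * ρ → ‖x‖ ≤ μ * ρ := fun x hx => by
    refine (hpow x hx).trans ?_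
    nlinarith
  have hend : s + T ∈ Icc s (s + T) := ⟨by linarith, le_rfl⟩
  have hηD : 0 < η * D' := by positivity
  rcases ks with ks | ks
  · refine ⟨m' + η * D' / 2, m' + D', by linarith, fun x hx => ⟨?_, hi' _ hend x (hpow2 x hx)⟩⟩
    refine ks_land hθ hε hb₀ hu hR hK hηD (fun x hx => hco x (hx.trans hμρ))
      (fun x hx => hΩ x (hx.trans hμρ)) hμ.le hμ1 (by linarith) (by linarith) hcK l1 l2
      (fun t ht x hx => lo t (hsub t ht) x hx) ?_ x (hpow x hx)
    intro y hy
    have h1 := ks _ (resc y hy).1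
    simp only [(resc y hy).2, one_mul] at h1
    have : -m' / D' + 1 / D' * u y (s + 5) = (u y (s + 5) - m') / D' := by ring
    rw [this, le_div_iff₀ hD0] at h1
    linarith
  · refine ⟨m', m' + D' - η * D' / 2, by linarith, fun x hx => ⟨lo _ hend x (hpow2 x hx), ?_⟩⟩
    have := ks_land hθ hε hb₀ hneg hR hK hηD (fun x hx => hco x (hx.trans hμρ))
      (fun x hx => hΩ x (hx.trans hμρ)) hμ.le hμ1 (by linarith) (by linarith) hcK l1 l2
      (m := -(m' + D'))
      (fun t ht x hx => neg_le_neg (hi' t (hsub t ht) x hx)) ?_ x (hpow x hx)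
    · linarith
    intro y hy
    have h1 := ks _ (resc y hy).1
    simp only [(resc y hy).2, one_mul] at h1
    have : -m' / D' + 1 / D' * u y (s + 5) = (u y (s + 5) - m') / D' := by ring
    rw [this, div_le_iff₀ hD0] at h1
    linarith

set_option maxHeartbeats 1000000 in
lemma ks_local {θ b₀ C₀ L r₀ : ℝ} (hθ : 0 < θ) (hb₀ : 0 < b₀) (hC₀ : 0 < C₀)
    (hL : 0 ≤ L) (hr₀ : 0 < r₀) {b : Eu n → Eu n} {Ω : Set (Eu n)}
    (hb : ∀ x, ‖b x‖ ≤ L * ‖x‖)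
    (hco : ∀ x, ‖x‖ ≤ r₀ / 2 → inner ℝ (b x) x ≤ -b₀ * ‖x‖ ^ 2)
    (hΩ : ∀ x, ‖x‖ ≤ r₀ / 2 → x ∈ Ω) {d : ℝ} (hd : 0 < d) :
    ∃ ρ > 0, ∃ C' > 0, ∀ᶠ ε in 𝓝[>] (0:ℝ), ∀ u, LSol θ ε b Ω u →
      (∀ x ∈ Ω, ∀ t, 0 < t → |u x t| ≤ C₀) → ∀ s, 1 + C' * |Real.log ε| ≤ s →
      ∃ m M, M - m ≤ d ∧ ∀ x, ‖x‖ ≤ ρ → m ≤ u x s ∧ u x s ≤ M := by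
  set c := 2 * ((n:ℝ) * θ⁻¹) + 1 with hc
  have hc0 : 0 < c := by positivity
  obtain ⟨K, hK, hcK⟩ : ∃ K : ℝ, 1 ≤ K ∧ c / (2 * b₀ * K ^ 2) ≤ 1 / 4 := by
    refine ⟨max 1 (2 * c / b₀), le_max_left _ _, ?_⟩
    have h1 : 1 ≤ max 1 (2 * c / b₀) := le_max_left _ _
    have h2 : 2 * c / b₀ ≤ max 1 (2 * c / b₀) := le_max_right _ _
    set K := max 1 (2 * c / b₀)
    rw [div_le_iff₀ hb₀] at h2
    rw [div_le_iff₀ (by positivity)]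
    have h3 : K * b₀ ≤ K ^ 2 * b₀ := by
      have : K ≤ K ^ 2 := by nlinarith
      gcongr
    linarith
  obtain ⟨η0, hη0, hKS0⟩ := ks_KS n hθ (Λ := L * (K + 7)) (by positivity) (K := K) (by linarith)
  obtain ⟨η, hη, hη1, hηη⟩ : ∃ η : ℝ, 0 < η ∧ η ≤ 1 ∧ η ≤ η0 :=
    ⟨min η0 1, by positivity, min_le_right _ _, min_le_left _ _⟩
  have hKS : ∀ (D : Set (Eu n × ℝ)) (v : Eu n → ℝ → ℝ), KSol θ (L * (K + 7)) D v →
      (∀ x t, ‖x‖ ≤ K + 6 → 0 ≤ t → t ≤ 5 → (x, t) ∈ D ∧ 0 ≤ v x t ∧ v x t ≤ 1) →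
      (∀ x, ‖x‖ ≤ K → η ≤ v x 5) ∨ (∀ x, ‖x‖ ≤ K → v x 5 ≤ 1 - η) := by
    intro D v h1 h2
    rcases hKS0 D v h1 h2 with h | h
    · exact Or.inl fun x hx => hηη.trans (h x hx)
    · exact Or.inr fun x hx => (h x hx).trans (by linarith)
  set q := 1 - η / 2 with hq
  have hq0 : 0 ≤ q := by rw [hq]; linarith
  have hq1 : q < 1 := by rw [hq]; linarith
  obtain ⟨N, hN⟩ := exists_pow_lt_of_lt_one (show 0 < d / (4 * C₀) by positivity) hq1
  have hN' : 2 * C₀ * q ^ N ≤ d / 2 := by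
    rw [lt_div_iff₀ (by positivity)] at hN
    linarith
  obtain ⟨μ, hμ, hμ1, hμd⟩ : ∃ μ : ℝ, 0 < μ ∧ μ ≤ 1 / 4 ∧ μ ≤ d * η / (32 * C₀) :=
    ⟨min (1 / 4) (d * η / (32 * C₀)), by positivity, min_le_left _ _, min_le_right _ _⟩
  set B := 16 * C₀ * μ ^ 2 / η with hB
  have hBη : B * η = 16 * C₀ * μ ^ 2 := by rw [hB]; field_simp
  have hB0 : 0 < B := by positivity
  have hBd : B ≤ d / 2 := by
    rw [hB, div_le_iff₀ hη]
    rw [le_div_iff₀ (by positivity)] at hμd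
    have : μ ^ 2 ≤ μ := by nlinarith
    nlinarith
  have hμ2 : μ ^ 2 ≤ 1 := by nlinarith
  set ρ : ℝ := (μ ^ 2) ^ N * (r₀ / 2) with hρ
  have hρ0 : 0 < ρ := by positivity
  refine ⟨ρ, hρ0, N / b₀ + 1, by positivity, ?_⟩
  -- smallness of ε
  have hid : Tendsto (fun ε : ℝ => ε) (𝓝[>] 0) (𝓝 0) := tendsto_nhdsWithin_of_tendsto_nhds tendsto_id
  have e0 : ∀ᶠ ε in 𝓝[>] (0:ℝ), 0 < ε := self_mem_nhdsWithin
  have e1 : ∀ᶠ ε in 𝓝[>] (0:ℝ), ε < 1 := hid.eventually_lt_const one_pos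
  have e2 : ∀ᶠ ε in 𝓝[>] (0:ℝ), 6 * b₀ ≤ |Real.log ε| :=
    (tendsto_abs_atBot_atTop.comp Real.tendsto_log_nhdsGT_zero).eventually_ge_atTop _
  have hlm : Tendsto (fun ε : ℝ => Real.log ε * ε) (𝓝[>] 0) (𝓝 0) :=
    by simpa only [Real.rpow_one] using tendsto_log_mul_rpow_nhdsGT_zero one_pos
  have e3 : ∀ᶠ ε in 𝓝[>] (0:ℝ), c * (ε * (|Real.log ε| / b₀)) < μ ^ 4 * ρ ^ 2 := by
    have h1 : Tendsto (fun ε : ℝ => c * (|Real.log ε * ε| / b₀)) (𝓝[>] 0) (𝓝 (c * (|0| / b₀))) :=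
      (hlm.abs.div_const b₀).const_mul c
    rw [abs_zero, zero_div, mul_zero] at h1
    filter_upwards [h1.eventually_lt_const (show 0 < μ ^ 4 * ρ ^ 2 by positivity), e0] with ε h2 h3
    rw [abs_mul, abs_of_pos h3] at h2
    calc _ = c * (|Real.log ε| * ε / b₀) := by ring
      _ < _ := h2
  have e4 : ∀ᶠ ε in 𝓝[>] (0:ℝ), (K + 7) * √ε < μ * ρ := by
    have h1 : Tendsto (fun ε : ℝ => (K + 7) * √ε) (𝓝[>] 0) (𝓝 ((K + 7) * √0)) :=
      (hid.sqrt).const_mul _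
    rw [Real.sqrt_zero, mul_zero] at h1
    exact h1.eventually_lt_const (by positivity)
  have e5 : ∀ᶠ ε in 𝓝[>] (0:ℝ), ε * (2 * Real.exp (10 * b₀) * r₀ ^ 2) < 1 := by
    have h1 := hid.mul_const (2 * Real.exp (10 * b₀) * r₀ ^ 2)
    rw [zero_mul] at h1
    exact h1.eventually_lt_const one_pos
  filter_upwards [e0, e1, e2, e3, e4, e5] with ε hε hε1 f2 f3 f4 f5 u hu hbd
  set T := |Real.log ε| / b₀ with hT
  have hT6 : 6 ≤ T := by rw [hT, le_div_iff₀ hb₀]; linarith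
  have hlog : |Real.log ε| = - Real.log ε := abs_of_neg (Real.log_neg hε hε1)
  have hexpT : Real.exp (-(2 * b₀ * (T - 5))) * (r₀ / 2) ^ 2 ≤ ε / 8 := by
    have h1 : -(2 * b₀ * (T - 5)) = Real.log ε + Real.log ε + 10 * b₀ := by
      have : b₀ * T = -Real.log ε := by rw [hT, hlog]; field_simp
      linarith
    rw [h1, Real.exp_add, Real.exp_add, Real.exp_log hε]
    have : ε * ε * Real.exp (10 * b₀) * (r₀ / 2) ^ 2
      = ε / 8 * (ε * (2 * Real.exp (10 * b₀) * r₀ ^ 2)) := by ring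
    rw [this]
    have : 0 < ε / 8 := by positivity
    nlinarith
  have main : ∀ j, j ≤ N → ∀ s, 1 + j * T ≤ s → ∃ m M, M - m ≤ 2 * C₀ * q ^ j + B ∧
      ∀ x, ‖x‖ ≤ (μ ^ 2) ^ j * (r₀ / 2) → m ≤ u x s ∧ u x s ≤ M := by
    intro j
    induction j with
    | zero =>
      intro _ s hs
      refine ⟨-C₀, C₀, by simp; linarith, fun x hx => ?_⟩
      have hs0 : 0 < s := by norm_num at hs; linarith
      exact abs_le.mp (hbd x (hΩ x (by simpa using hx)) s hs0)
    | succ j ih =>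
      intro hj s hs
      push_cast at hs
      obtain ⟨m, M, h1, h2⟩ := ih (by omega) (s - T) (by linarith)
      have hρj : ρ ≤ (μ ^ 2) ^ j * (r₀ / 2) := by
        rw [hρ]
        have := pow_le_pow_of_le_one (by positivity) hμ2 (show j ≤ N by omega)
        gcongr
      have hρj2 : (μ ^ 2) ^ j * (r₀ / 2) ≤ r₀ / 2 := by
        have := pow_le_one₀ (n := j) (by positivity) hμ2
        nlinarith
      have hj0 : 0 ≤ (j:ℝ) * T := by positivity
      set σ := (μ ^ 2) ^ j * (r₀ / 2) with hσ
      have hσ0 : 0 < σ := by positivity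
      obtain ⟨m1, M1, h3, h4⟩ := ks_onestep (T := T) (s := s - T) hθ hε hb₀ hC₀ hL hK hη hu hb hKS hcK hbd hσ0
        (fun x hx => hco x (hx.trans hρj2)) (fun x hx => hΩ x (hx.trans hρj2)) hμ hμ1
        (by linarith) hT6
        (by
          have : μ ^ 4 * ρ ^ 2 ≤ μ ^ 4 * σ ^ 2 := by gcongr
          linarith) (f4.le.trans (by gcongr))
        (le_trans (by gcongr) hexpT) h2
      refine ⟨m1, M1, h3.trans ?_, fun x hx => ?_⟩
      · have a1 : (1 - η / 2) * (M - m + 8 * C₀ * μ ^ 2)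
            ≤ (1 - η / 2) * (2 * C₀ * q ^ j + B + 8 * C₀ * μ ^ 2) :=
          mul_le_mul_of_nonneg_left (by linarith) hq0
        refine a1.trans ?_
        rw [← hq]
        have a5 : q * (2 * C₀ * q ^ j + B + 8 * C₀ * μ ^ 2)
            = 2 * C₀ * q ^ (j + 1) + q * B + q * (8 * C₀ * μ ^ 2) := by ring
        rw [a5]
        have a2 : 0 ≤ η * (C₀ * μ ^ 2) := by positivity
        have a3 : q * B = B - 8 * C₀ * μ ^ 2 := by rw [hq]; linarith
        have a4 : q * (8 * C₀ * μ ^ 2) ≤ 8 * C₀ * μ ^ 2 := by rw [hq]; linarith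
        linarith
      · have := h4 x (hx.trans (by rw [hσ, pow_succ]; linarith))
        rwa [sub_add_cancel] at this
  intro s hs
  obtain ⟨m, M, h1, h2⟩ := main N le_rfl s (by
    have : (N:ℝ) / b₀ * |Real.log ε| = N * T := by rw [hT]; ring
    have h3 := abs_nonneg (Real.log ε)
    linarith)
  exact ⟨m, M, by linarith, h2⟩

/-! ### The flow of `b` and transport from the origin -/

lemma ks_gron {b : Eu n → Eu n} {K : NNReal} (hb : LipschitzWith K b) {f g : ℝ → Eu n}
    (hf : ∀ t, HasDerivAt f (b (f t)) t) (hg : ∀ t, HasDerivAt g (b (g t)) t) {t : ℝ}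
    (ht : 0 ≤ t) : dist (f t) (g t) ≤ dist (f 0) (g 0) * Real.exp (K * t) := by
  have := dist_le_of_trajectories_ODE (v := fun _ => b) (a := 0) (b := t) (fun _ => hb)
    (fun s _ => (hf s).continuousAt.continuousWithinAt) (fun s _ => (hf s).hasDerivWithinAt)
    (fun s _ => (hg s).continuousAt.continuousWithinAt) (fun s _ => (hg s).hasDerivWithinAt)
    le_rfl t ⟨ht, le_rfl⟩
  simpa using this

lemma ks_semi {b : Eu n → Eu n} {K : NNReal} (hb : LipschitzWith K b)
    {X : ℝ → Eu n → Eu n} (hX : GAS b X) (T : ℝ) {t : ℝ} (ht : 0 ≤ t) (x : Eu n) :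
    X (T + t) x = X t (X T x) := by
  have h1 := ks_gron hb (f := fun t => X (T + t) x) (g := fun t => X t (X T x))
    (fun s => (hX.2.1 x (T + s)).comp_const_add T s) (fun s => hX.2.1 _ s) ht
  simp only [add_zero, hX.1, dist_self, zero_mul] at h1
  exact dist_le_zero.mp h1

lemma ks_lipX {b : Eu n → Eu n} {K : NNReal} (hb : LipschitzWith K b)
    {X : ℝ → Eu n → Eu n} (hX : GAS b X) {t T : ℝ} (ht : 0 ≤ t) (htT : t ≤ T) :
    LipschitzWith (Real.toNNReal (Real.exp (K * T))) (X t) := by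
  refine LipschitzWith.of_dist_le_mul fun x y => ?_
  have h1 := ks_gron hb (hX.2.1 x) (hX.2.1 y) ht
  rw [hX.1, hX.1] at h1
  rw [Real.coe_toNNReal _ (Real.exp_pos _).le]
  refine h1.trans ?_
  rw [mul_comm]
  gcongr

lemma ks_contX {b : Eu n → Eu n} {K : NNReal} (hb : LipschitzWith K b)
    {X : ℝ → Eu n → Eu n} (hX : GAS b X) (T : ℝ) :
    ContinuousOn (fun p : ℝ × Eu n => X p.1 p.2) (Icc 0 T ×ˢ univ) := by
  refine continuousOn_prod_of_continuousOn_lipschitzOnWith' _ (Real.toNNReal (Real.exp (K * T)))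
    (fun t ht => (ks_lipX hb hX ht.1 ht.2).lipschitzOnWith) fun x _ t _ =>
      (hX.2.1 x t).continuousAt.continuousWithinAt

lemma ks_invar {Ω : Set (Eu n)} {ν b : Eu n → Eu n} (hdom : IsBdC1With Ω ν)
    (hin : ∀ x ∈ frontier Ω, dotp (b x) (ν x) < 0) {X : ℝ → Eu n → Eu n} (hX : GAS b X)
    {x : Eu n} (hx : x ∈ Ω) {t : ℝ} (ht : 0 ≤ t) : X t x ∈ Ω := by
  obtain ⟨hop, -, ρ, hρ, hΩ, hν⟩ := hdom
  by_contra hcon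
  have hmem : ∀ y, y ∈ Ω ↔ ρ y < 0 := fun y => by rw [hΩ]; rfl
  have hXc : Continuous (fun s => X s x) :=
    continuous_iff_continuousAt.mpr fun s => (hX.2.1 x s).continuousAt
  set f : ℝ → ℝ := fun s => ρ (X s x) with hf
  have hfc : Continuous f := hρ.continuous.comp hXc
  set S : Set ℝ := Icc 0 t ∩ f ⁻¹' (Ici 0) with hS
  have hSc : IsCompact S := isCompact_Icc.inter_right (isClosed_Ici.preimage hfc)
  have hSn : S.Nonempty := ⟨t, ⟨ht, le_rfl⟩, by
    rw [hmem, not_lt] at hcon; exact hcon⟩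
  obtain ⟨τ, hτS, hτ⟩ := hSc.exists_isLeast hSn
  have hf0 : f 0 < 0 := by simp only [hf, hX.1]; exact (hmem x).mp hx
  have hfτ : 0 ≤ f τ := hτS.2
  have hτ0 : 0 < τ := by
    rcases hτS.1.1.lt_or_eq with h | h
    · exact h
    · rw [← h] at hfτ; linarith
  have hlt : ∀ s ∈ Ico 0 τ, f s < 0 := by
    intro s hs
    by_contra h
    have : τ ≤ s := hτ ⟨⟨hs.1, hs.2.le.trans hτS.1.2⟩, not_lt.mp h⟩
    linarith [hs.2]
  have hev : ∀ᶠ s in 𝓝[<] τ, s ∈ Ico 0 τ := by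
    filter_upwards [Ioo_mem_nhdsLT hτ0] with s hs
    exact ⟨hs.1.le, hs.2⟩
  have hfr : X τ x ∈ frontier Ω := by
    rw [hop.frontier_eq]
    refine ⟨?_, ?_⟩
    · have h1 : Tendsto (fun s => X s x) (𝓝[<] τ) (𝓝 (X τ x)) :=
        (hXc.tendsto τ).mono_left nhdsWithin_le_nhds
      exact mem_closure_of_tendsto h1 (hev.mono fun s hs => (hmem _).mpr (hlt s hs))
    · rw [hmem, not_lt]; exact hfτ
  obtain ⟨hg, hνe⟩ := hν _ hfr
  have hi := hin _ hfr
  rw [hνe, ks_dotp_inner, inner_smul_right] at hi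
  have hgn : 0 < ‖gradient ρ (X τ x)‖⁻¹ := by positivity
  have hi2 : inner ℝ (b (X τ x)) (gradient ρ (X τ x)) < 0 := by
    by_contra h
    have := mul_nonneg hgn.le (not_lt.mp h)
    linarith
  have hgr : HasGradientAt ρ (gradient ρ (X τ x)) (X τ x) :=
    ((hρ.differentiable (by norm_num)).differentiableAt).hasGradientAt
  have hd : HasDerivAt f (inner ℝ (gradient ρ (X τ x)) (b (X τ x))) τ := by
    have := hgr.hasFDerivAt.comp_hasDerivAt τ (hX.2.1 x τ)
    rw [InnerProductSpace.toDual_apply_apply] at this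
    exact this
  rw [real_inner_comm] at hi2
  rw [hasDerivAt_iff_tendsto_slope] at hd
  have h1 : ∀ᶠ s in 𝓝[<] τ, slope f τ s < 0 :=
    (hd.mono_left (nhdsWithin_mono _ (fun s hs => ne_of_lt hs))).eventually_lt_const hi2
  obtain ⟨s, h2, h3⟩ := (h1.and hev).exists
  rw [slope_def_field] at h2
  have h4 := hlt s h3
  have h5 : 0 < (f s - f τ) / (s - τ) :=
    div_pos_of_neg_of_neg (by linarith) (by linarith [h3.2])
  linarith

lemma ks_unif {b : Eu n → Eu n} {K : NNReal} (hb : LipschitzWith K b)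
    {X : ℝ → Eu n → Eu n} (hX : GAS b X) {S : Set (Eu n)} (hS : IsCompact S) {ρ : ℝ}
    (hρ : 0 < ρ) : ∃ T > 0, ∀ x ∈ S, ‖X T x‖ ≤ ρ := by
  obtain ⟨d, hd, hst⟩ := hX.2.2.2 ρ hρ
  have hcont : ∀ N : ℕ, Continuous (X N) := fun N =>
    (ks_lipX hb hX (Nat.cast_nonneg N) le_rfl).continuous
  obtain ⟨F, hF⟩ := hS.elim_finite_subcover (fun N : ℕ => {y | ‖X N y‖ < d})
    (fun N => isOpen_lt (hcont N).norm continuous_const) (by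
      intro x _
      have h1 : Tendsto (fun N : ℕ => ‖X N x‖) atTop (𝓝 ‖(0 : Eu n)‖) :=
        ((hX.2.2.1 x).comp tendsto_natCast_atTop_atTop).norm
      rw [norm_zero] at h1
      obtain ⟨N, hN⟩ := (h1.eventually_lt_const hd).exists
      exact mem_iUnion.mpr ⟨N, hN⟩)
  refine ⟨((F.sup id : ℕ) : ℝ) + 1, by positivity, fun x hx => ?_⟩
  have := hF hx
  simp only [mem_iUnion] at this
  obtain ⟨N, hN, hxN⟩ := this
  have hle : (N:ℝ) ≤ ((F.sup id : ℕ) : ℝ) := by exact_mod_cast Finset.le_sup (f := id) hN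
  have h2 := ks_semi hb hX N (t := ((F.sup id : ℕ) : ℝ) + 1 - N) (by linarith) x
  rw [show (N:ℝ) + (((F.sup id : ℕ) : ℝ) + 1 - N) = ((F.sup id : ℕ) : ℝ) + 1 by ring] at h2
  rw [h2]
  exact (hst _ hxN _ (by linarith)).le

lemma ks_tube {θ C₀ : ℝ} (hθ : 0 < θ) (hC₀ : 0 < C₀) {Ω : Set (Eu n)} {ν b : Eu n → Eu n}
    (hdom : IsBdC1With Ω ν) {K : NNReal} (hb : LipschitzWith K b)
    (hin : ∀ x ∈ frontier Ω, dotp (b x) (ν x) < 0) {X : ℝ → Eu n → Eu n} (hX : GAS b X)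
    {S : Set (Eu n)} (hS : IsCompact S) (hSΩ : S ⊆ Ω) {ρ : ℝ} (hρ : 0 < ρ) :
    ∃ T > 0, ∃ c₂ > 0, ∀ ε, 0 < ε → ∀ u, LSol θ ε b Ω u →
      (∀ x ∈ Ω, ∀ t, 0 < t → |u x t| ≤ C₀) → ∀ s, 0 < s → ∀ m, m ≤ C₀ →
      (∀ x, ‖x‖ ≤ ρ → m ≤ u x s) → ∀ x ∈ S, m - c₂ * ε ≤ u x (s + T) := by
  obtain ⟨T, hT, hTρ⟩ := ks_unif hb hX hS (show 0 < ρ / 2 by positivity)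
  have hZc : IsCompact ((fun p : ℝ × Eu n => X p.1 p.2) '' (Icc 0 T ×ˢ S)) :=
    (isCompact_Icc.prod hS).image_of_continuousOn
      ((ks_contX hb hX T).mono (prod_mono le_rfl (subset_univ _)))
  obtain ⟨r1, hr1, hth⟩ := hZc.exists_cthickening_subset_open hdom.1 (by
    rintro _ ⟨⟨t, x⟩, ⟨ht, hx⟩, rfl⟩
    exact ks_invar hdom hin hX (hSΩ hx) ht.1)
  obtain ⟨r, hr, hrr, hrρ⟩ : ∃ r : ℝ, 0 < r ∧ r ≤ r1 ∧ r ≤ ρ / 2 :=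
    ⟨min r1 (ρ / 2), by positivity, min_le_left _ _, min_le_right _ _⟩
  set c := 2 * ((n:ℝ) * θ⁻¹) + 1 with hc
  have hc0 : 0 < c := by positivity
  set E := 2 * C₀ / r ^ 2 * Real.exp (2 * K * T) with hE
  have hE0 : 0 < E := by positivity
  refine ⟨T, hT, c * E * T, by positivity, fun ε hε u hu hbd s hs m hmC hm x hx => ?_⟩
  set e : ℝ → ℝ := fun t => 2 * C₀ / r ^ 2 * Real.exp (2 * K * (t - s)) with he
  have hed : ∀ t, HasDerivAt e (2 * K * e t) t := by
    intro t
    have h1 : HasDerivAt (fun t => 2 * (K:ℝ) * (t - s)) (2 * K) t := by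
      simpa using ((hasDerivAt_id t).sub_const s).const_mul (2 * (K:ℝ))
    have h2 := h1.exp.const_mul (2 * C₀ / r ^ 2)
    have h3 : 2 * K * e t = 2 * C₀ / r ^ 2 * (Real.exp (2 * K * (t - s)) * (2 * K)) := by
      simp only [he]; ring
    rw [h3]
    exact h2
  have he0 : ∀ t, 0 < e t := fun t => by simp only [he]; positivity
  have heE : ∀ t, t ≤ s + T → e t ≤ E := fun t ht => by
    simp only [he, hE]
    have : t - s ≤ T := by linarith
    gcongr
  have her : ∀ t, s ≤ t → 2 * C₀ ≤ e t * r ^ 2 := fun t ht => by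
    have h1 : 1 ≤ Real.exp (2 * K * (t - s)) :=
      Real.one_le_exp (mul_nonneg (by positivity) (by linarith))
    have h2 : e t * r ^ 2 = 2 * C₀ * Real.exp (2 * K * (t - s)) := by
      simp only [he]; field_simp
    rw [h2]
    nlinarith
  have hin2 : ∀ t ∈ Icc s (s + T), ∀ y, ‖y - X (s + T - t) x‖ ≤ r → y ∈ Ω := by
    intro t ht y hy
    refine hth (mem_cthickening_of_dist_le y (X (s + T - t) x) _ _
      ⟨(s + T - t, x), ⟨⟨by linarith [ht.2], by linarith [ht.1]⟩, hx⟩, rfl⟩ ?_)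
    rw [dist_eq_norm]
    exact hy.trans hrr
  have key := ks_barrier hθ hε hu (s := s) (s1 := s + T) (R := r) (m := m) hs (by linarith)
    (α := fun t => c * ε * E * (t - s)) (β := e)
    (α' := fun _ => c * ε * E) (β' := fun t => 2 * K * e t) (z := fun t => X (s + T - t) x)
    (z' := fun t => -b (X (s + T - t) x))
    (fun t _ => by simpa using ((hasDerivAt_id t).sub_const s).const_mul (c * ε * E))
    (fun t _ => hed t)
    (fun t _ => (hX.2.1 x (s + T - t)).comp_const_sub (s + T) t)
    (fun t _ => he0 t) hin2
    (fun t ht => by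
      rw [← hc]
      have := heE t ht.2
      gcongr)
    (fun t _ y _ => by
      have h1 : inner ℝ (b y + -b (X (s + T - t) x)) (y - X (s + T - t) x)
          ≤ K * ‖y - X (s + T - t) x‖ ^ 2 := by
        rw [← sub_eq_add_neg]
        refine (real_inner_le_norm _ _).trans ?_
        have h2 := hb.norm_sub_le y (X (s + T - t) x)
        calc _ ≤ K * ‖y - X (s + T - t) x‖ * ‖y - X (s + T - t) x‖ := by gcongr
          _ = _ := by ring
      have h3 := he0 t
      calc _ ≤ 2 * e t * (K * ‖y - X (s + T - t) x‖ ^ 2) :=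
            mul_le_mul_of_nonneg_left h1 (by linarith)
        _ = _ := by ring)
    (fun y hy => by
      simp only [add_sub_cancel_left, sub_self, mul_zero, sub_zero] at hy ⊢
      have h1 : ‖y‖ ≤ ρ := by
        have h2 := hTρ x hx
        have h3 : ‖y‖ ≤ ‖y - X T x‖ + ‖X T x‖ := by
          simpa using norm_add_le (y - X T x) (X T x)
        linarith
      have h2 := mul_nonneg (he0 s).le (sq_nonneg ‖y - X T x‖)
      linarith [hm y h1])
    (fun t ht y hy => by
      have h1 := (abs_le.mp (hbd y (hin2 t ht y hy.le) t (lt_of_lt_of_le hs ht.1))).1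
      have h2 : 0 ≤ c * ε * E * (t - s) := mul_nonneg (by positivity) (by linarith [ht.1])
      have h3 := her t ht.1
      rw [hy]
      linarith)
  have h1 := key (s + T) ⟨by linarith, le_rfl⟩ x (by simp [hX.1, hr.le])
  simp only [add_sub_cancel_left, sub_self, hX.1, norm_zero] at h1
  linarith

lemma ks_mkL {θ ε : ℝ} {Ω : Set (Eu n)} (hop : IsOpen Ω) {b : Eu n → Eu n}
    {A : Eu n → ℝ → Matrix (Fin n) (Fin n) ℝ} (hA : MatC θ A Ω ⊤) {u : Eu n → ℝ → ℝ}
    (hu : Classical21 u Ω ⊤) (hL : SolveL ε A b u Ω ⊤) : LSol θ ε b Ω u := by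
  have htop : ∀ t : ℝ, ENNReal.ofReal t < ⊤ := fun t => ENNReal.ofReal_lt_top
  refine ⟨hop, ?_, ?_, ?_, ?_, ?_⟩
  · exact hu.1.mono fun p hp => ⟨subset_closure hp.1, le_of_lt hp.2, le_top⟩
  · exact hu.2.2.1.mono fun p hp => ⟨hp.1, hp.2, htop _⟩
  · exact fun x hx t ht => (hu.2.1 x hx t ht (htop t)).1
  · exact fun x hx t ht => (hu.2.1 x hx t ht (htop t)).2
  · exact fun x hx t ht => ⟨A x t, hA.2 (x, t) ⟨subset_closure hx, ht.le, le_top⟩,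
      hL x hx t ht (htop t)⟩

/-- Theorem 2.8: uniform closeness of `u^ε(·,t)` to `u^ε(0,t)`. -/
theorem stmt10 {n : ℕ} (θ₀ : ℝ) (hθ : θ₀ ∈ Set.Ioc (0:ℝ) 1)
    (Ω : Set (Eu n)) (ν : Eu n → Eu n) (b : Eu n → Eu n) (b₀ r₀ : ℝ)
    (hdom : IsBdC1With Ω ν) (h0 : (0 : Eu n) ∈ Ω)
    (hbl : ∃ K : NNReal, LipschitzWith K b) (hb0 : b 0 = 0)
    (hgas : ∃ X : ℝ → Eu n → Eu n, GAS b X)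
    (hin : ∀ x ∈ frontier Ω, dotp (b x) (ν x) < 0)
    (hb₀ : 0 < b₀) (hr₀ : 0 < r₀) (hsub : closedBall (0 : Eu n) r₀ ⊆ Ω)
    (hco : ∀ x ∈ ball (0 : Eu n) r₀, dotp (b x) x ≤ -b₀ * ‖x‖ ^ 2)
    (δ C₀ : ℝ) (hδ : 0 < δ) (hC₀ : 0 < C₀) :
    ∃ ε₀ ∈ Set.Ioo (0:ℝ) 1, ∃ C > (0:ℝ),
      ∀ ε ∈ Set.Ioc (0:ℝ) ε₀,
      ∀ A : Eu n → ℝ → Matrix (Fin n) (Fin n) ℝ, MatC θ₀ A Ω ⊤ →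
      ∀ u : Eu n → ℝ → ℝ, Classical21 u Ω ⊤ → SolveL ε A b u Ω ⊤ →
      (∀ x ∈ Ω, ∀ t : ℝ, 0 ≤ t → |u x t| ≤ C₀) →
      ∀ x ∈ Omd Ω δ, ∀ t : ℝ, C * |Real.log ε| ≤ t → |u x t - u 0 t| ≤ δ := by
  obtain ⟨K, hK⟩ := hbl
  obtain ⟨X, hX⟩ := hgas
  have hop := hdom.1
  have hbL : ∀ x, ‖b x‖ ≤ (K:ℝ) * ‖x‖ := by
    intro x
    have := hK.norm_sub_le x 0
    rwa [hb0, sub_zero, sub_zero] at this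
  obtain ⟨ρ, hρ, C', hC', hloc⟩ := ks_local (Ω := Ω) (b := b) hθ.1 hb₀ hC₀ K.2 hr₀ hbL
    (fun x hx => by
      rw [← ks_dotp_inner]
      exact hco x (by rw [mem_ball_zero_iff]; linarith))
    (fun x hx => hsub (by rw [mem_closedBall_zero_iff]; linarith)) (d := δ / 2) (by positivity)
  set S : Set (Eu n) := insert 0 (closure Ω ∩ {x | δ ≤ infDist x (frontier Ω)}) with hS
  have hScl : IsClosed {x : Eu n | δ ≤ infDist x (frontier Ω)} :=
    isClosed_le continuous_const (continuous_infDist_pt _)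
  have hSc : IsCompact S :=
    (hdom.2.1.isCompact_closure.inter_right hScl).insert 0
  have hSΩ : S ⊆ Ω := by
    intro x hx
    rcases hx with rfl | ⟨hx1, hx2⟩
    · exact h0
    · by_contra h
      have hfr : x ∈ frontier Ω := by rw [hop.frontier_eq]; exact ⟨hx1, h⟩
      have h1 : δ ≤ infDist x (frontier Ω) := hx2
      rw [infDist_zero_of_mem hfr] at h1
      linarith
  obtain ⟨T, hT, c₂, hc₂, htube⟩ := ks_tube hθ.1 hC₀ hdom hK hin hX hSc hSΩ hρ
  have hid : Tendsto (fun ε : ℝ => ε) (𝓝[>] 0) (𝓝 0) :=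
    tendsto_nhdsWithin_of_tendsto_nhds tendsto_id
  have e1 : ∀ᶠ ε in 𝓝[>] (0:ℝ), c₂ * ε < δ / 4 := by
    have h1 := hid.const_mul c₂
    rw [mul_zero] at h1
    exact h1.eventually_lt_const (by positivity)
  have e2 : ∀ᶠ ε in 𝓝[>] (0:ℝ), 1 ≤ |Real.log ε| :=
    (tendsto_abs_atBot_atTop.comp Real.tendsto_log_nhdsGT_zero).eventually_ge_atTop _
  obtain ⟨ε₁, hε₁, hall⟩ := mem_nhdsGT_iff_exists_Ioo_subset.mp ((hloc.and e1).and e2)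
  have hε₁' : (0:ℝ) < ε₁ := hε₁
  refine ⟨min (ε₁ / 2) (1 / 2), ⟨by positivity, lt_of_le_of_lt (min_le_right _ _) (by norm_num)⟩,
    C' + 1 + T, by positivity, ?_⟩
  intro ε hε A hA u hu hL hbd x hx t ht
  have hε2 : ε < ε₁ := lt_of_le_of_lt (hε.2.trans (min_le_left _ _)) (by linarith)
  obtain ⟨⟨hl, hs1⟩, hs2⟩ := hall ⟨hε.1, hε2⟩
  have hl' := hl u (ks_mkL hop hA hu hL) (fun x hx t ht => hbd x hx t ht.le)
  have hs2' : 1 ≤ |Real.log ε| := hs2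
  have hts : 1 + C' * |Real.log ε| ≤ t - T := by nlinarith
  have hts0 : 0 < t - T := by nlinarith
  obtain ⟨m, M, hMm, hmM⟩ := hl' (t - T) hts
  have hLS := ks_mkL hop hA hu hL
  have hbd' : ∀ x ∈ Ω, ∀ t, 0 < t → |u x t| ≤ C₀ := fun x hx t ht => hbd x hx t ht.le
  have h00 : ‖(0 : Eu n)‖ ≤ ρ := by simpa using hρ.le
  have hb00 := abs_le.mp (hbd' 0 h0 (t - T) hts0)
  have lo := htube ε hε.1 u hLS hbd' (t - T) hts0 m ((hmM 0 h00).1.trans hb00.2)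
    (fun y hy => (hmM y hy).1)
  have hi := htube ε hε.1 _ hLS.neg (fun y hy τ hτ => by simpa using hbd' y hy τ hτ)
    (t - T) hts0 (-M) (by linarith [(hmM 0 h00).2])
    (fun y hy => neg_le_neg (hmM y hy).2)
  rw [sub_add_cancel] at lo hi
  have hx' : x ∈ S := Or.inr ⟨subset_closure hx.1, hx.2.le⟩
  have h0' : (0 : Eu n) ∈ S := Or.inl rfl
  have hs1' : c₂ * ε < δ / 4 := hs1
  have a1 := lo x hx'
  have a2 := hi x hx'
  have a3 := lo 0 h0'
  have a4 := hi 0 h0'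
  rw [abs_le]
  constructor <;> linarith
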